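/- For every odd prime p, the Schwartz genus of the quotient covering map q_{2p} : F(ℂ,2p) → F(ℂ,2p)/Σ_{2p} is strictly less than 2p; that is, there exist 2p−1 open subsets U_1, …, U_{2p−1} covering F(ℂ,2p)/Σ_{2p} such that for each i the restriction of q_{2p} over U_i is a trivial covering: there is a discrete topological space D_i and a homeomorphism h_i : q_{2p}^{-1}(U_i) → U_i × D_i with pr₁ ∘ h_i = q_{2p} on q_{2p}^{-1}(U_i). -/

import Mathlib

noncomputable section

/-- The ordered configuration space of `n` distinct points in the plane `ℂ`. -/
abbrev ConfigSpace (n : ℕ) : Type := { f : Fin n → ℂ // Function.Injective f }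

/-- The action of a permutation `σ` on the configuration space, `σ • f = f ∘ σ⁻¹`. -/
def configPermMap (n : ℕ) (σ : Equiv.Perm (Fin n)) : ConfigSpace n → ConfigSpace n :=
  fun f => ⟨f.1 ∘ ⇑σ⁻¹, f.2.comp (Equiv.injective _)⟩

/-- The orbit equivalence relation of the `Σ_n`-action on `F(ℂ,n)`. -/
def configSetoid (n : ℕ) : Setoid (ConfigSpace n) where
  r x y := ∃ σ : Equiv.Perm (Fin n), configPermMap n σ x = y
  iseqv := by
    constructor
    · intro x
      exact ⟨1, Subtype.ext (by funext i; simp [configPermMap])⟩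
    · rintro x y ⟨σ, rfl⟩
      exact ⟨σ⁻¹, Subtype.ext (by funext i; simp [configPermMap])⟩
    · rintro x y z ⟨σ, rfl⟩ ⟨τ, rfl⟩
      exact ⟨τ * σ, Subtype.ext (by funext i; simp [configPermMap, mul_inv_rev])⟩

/-- The quotient `F(ℂ,n)/Σ_n`, with the quotient topology. -/
abbrev ConfigQuotient (n : ℕ) : Type := Quotient (configSetoid n)

/-- The quotient (covering) map `q_n : F(ℂ,n) → F(ℂ,n)/Σ_n`. -/
def configProj (n : ℕ) : ConfigSpace n → ConfigQuotient n := Quotient.mk _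

/-- The assertion that the Schwartz genus of the covering `q_n : F(ℂ,n) → F(ℂ,n)/Σ_n` is
at most `t`: there are `t` open sets covering the base, over each of which `q_n` is a
trivial covering (i.e. the preimage is homeomorphic, over the base, to a product of the
open set with a discrete space). -/
def SchwartzGenusLE (n t : ℕ) : Prop :=
  ∃ U : Fin t → Set (ConfigQuotient n),
    (∀ i, IsOpen (U i)) ∧ (⋃ i, U i) = Set.univ ∧
      ∀ i : Fin t, ∃ (D : Type) (τ : TopologicalSpace D),
        @DiscreteTopology D τ ∧
          ∃ e : @Homeomorph { x : ConfigSpace n // configProj n x ∈ U i } (↥(U i) × D)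
              inferInstance (@instTopologicalSpaceProd _ _ _ τ),
            ∀ x, ((e.toEquiv x).1 : ConfigQuotient n) = configProj n x.1

/-! Let `n` be at least `2` and not a prime power. A `Σ_n`-equivariant map from `F(ℂ,n)` to the join
`K` of `n - 1` copies of the discrete space `Σ_n` pulls back the `n - 1` coordinate charts of `K`
to the required cover. It is glued from maps `Ψ : ℝⁿ → K` of the real parts, one for each ordering
of the imaginary parts; gluing is possible as soon as `Ψ` commutes with the permutations `π` whose
inversions are pairs of far apart coordinates. Only the behaviour of `Ψ` at infinity matters, namely
near the shells where the coordinates split into a block `A` and a block `Aᶜ` far to its right,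
and there `Ψ` has to depend on `A` only through `|A|`.

The set of boundary conditions that extend to `ℝⁿ` is closed under supported homotopies and under
`f - f' + f''`, which is realized by folding `ℝⁿ` along the shells, three copies of it being glued
with the middle one reversed. For every subset `j` an explicit model map realizes a boundary
condition whose value at `A` depends only on `|A|` and on the position of `j` relative to `A`.
Taking the model map of `j` with multiplicity `u_{|j|}`, where `∑ u_k (n choose k) = 1`, gives every
subset of the same size as `A` the same weight, so the combined condition depends on `|A|` only.
Such `u` exists because the `n choose k` with `0 < k < n` are coprime unless `n` is a prime power.
-/

namespace SchwartzGenus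

open Equiv

section Join

/-- The points of the `t`-fold join `α * ⋯ * α` of a finite discrete set `α`, in barycentric
coordinates: a weight `w (c, a)` for each vertex, the `a`-th point of the `c`-th copy of `α`,
where at most one vertex of each copy carries a nonzero weight. -/
abbrev JoinComplex (t : ℕ) (α : Type*) [Fintype α] : Type _ :=
  {w : Fin t × α → ℝ //
    (∀ v, 0 ≤ w v) ∧ ∑ v, w v = 1 ∧ ∀ c a b, w (c, a) ≠ 0 → w (c, b) ≠ 0 → a = b}

variable {t : ℕ} {G : Type*} [Group G] [Fintype G]

instance : MulAction G (JoinComplex t G) where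
  smul σ w := ⟨fun v => w.1 (v.1, σ⁻¹ * v.2), fun _ => w.2.1 _,
    (Fintype.sum_equiv ((Equiv.refl _).prodCongr (Equiv.mulLeft σ⁻¹)) _ _ fun _ => rfl).trans
      w.2.2.1,
    fun c _ _ ha hb => mul_left_cancel (w.2.2.2 c _ _ ha hb)⟩
  one_smul w := Subtype.ext <| funext fun v => congrArg w.1 (by simp)
  mul_smul σ τ w := Subtype.ext <| funext fun v => congrArg w.1 (by simp [mul_assoc])

theorem JoinComplex.smul_apply (σ : G) (w : JoinComplex t G) (c : Fin t) (g : G) :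
    (σ • w).1 (c, g) = w.1 (c, σ⁻¹ * g) := rfl

instance : ContinuousConstSMul G (JoinComplex t G) where
  continuous_const_smul _ := Continuous.subtype_mk (f := fun _ : JoinComplex t G => _)
    (continuous_pi fun _ => (continuous_apply _).comp continuous_subtype_val) _

theorem JoinComplex.exists_pos {α : Type*} [Fintype α] (w : JoinComplex t α) :
    ∃ c a, 0 < w.1 (c, a) := by
  obtain ⟨⟨c, a⟩, -, h⟩ := Finset.exists_lt_of_sum_lt
    (s := Finset.univ) (f := fun _ => (0 : ℝ)) (g := w.1) (by simp [w.2.2.1])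
  exact ⟨c, a, h⟩

end Join

section Covering

variable {n t : ℕ}

theorem continuous_configPermMap (σ : Perm (Fin n)) : Continuous (configPermMap n σ) :=
  Continuous.subtype_mk (f := fun z : ConfigSpace n => z.1 ∘ ⇑σ⁻¹)
    (continuous_pi fun _ => (continuous_apply _).comp continuous_subtype_val) _

theorem configProj_configPermMap (σ : Perm (Fin n)) (z : ConfigSpace n) :
    configProj n (configPermMap n σ z) = configProj n z :=
  (Quotient.sound (s := configSetoid n) ⟨σ, rfl⟩).symm

theorem configProj_eq_iff {z w : ConfigSpace n} :
    configProj n z = configProj n w ↔ ∃ σ, configPermMap n σ z = w :=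
  Quotient.eq (r := configSetoid n)

theorem isOpenMap_configProj (n : ℕ) : IsOpenMap (configProj n) := by
  intro W hW
  have saturation : configProj n ⁻¹' (configProj n '' W) = ⋃ σ, configPermMap n σ ⁻¹' W := by
    ext z
    simp only [Set.mem_preimage, Set.mem_image, Set.mem_iUnion]
    constructor
    · rintro ⟨w, hw, h⟩
      obtain ⟨σ, hσ⟩ := configProj_eq_iff.1 h.symm
      exact ⟨σ, hσ ▸ hw⟩
    · rintro ⟨σ, h⟩
      exact ⟨_, h, configProj_configPermMap σ z⟩
  refine isQuotientMap_quot_mk.isOpen_preimage.1 ?_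
  change IsOpen (configProj n ⁻¹' (configProj n '' W))
  rw [saturation]
  exact isOpen_iUnion fun σ => hW.preimage (continuous_configPermMap σ)

theorem isOpenMap_prodMk_of_isLocallyConstant {X Y D : Type*} [TopologicalSpace X]
    [TopologicalSpace Y] [TopologicalSpace D] [DiscreteTopology D] {f : X → Y} (hf : IsOpenMap f)
    {l : X → D} (hl : IsLocallyConstant l) : IsOpenMap fun x => (f x, l x) := by
  intro W hW
  have image_eq : (fun x => (f x, l x)) '' W = ⋃ d, (f '' (W ∩ l ⁻¹' {d})) ×ˢ {d} := by
    ext ⟨y, d⟩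
    simp only [Set.mem_image, Set.mem_iUnion, Set.mem_prod, Set.mem_singleton_iff,
      Prod.mk.injEq, Set.mem_inter_iff, Set.mem_preimage]
    constructor
    · rintro ⟨x, hx, h1, h2⟩
      exact ⟨d, ⟨x, ⟨hx, h2⟩, h1⟩, rfl⟩
    · rintro ⟨d', ⟨x, ⟨hx, h2⟩, h1⟩, rfl⟩
      exact ⟨x, hx, h1, h2⟩
  rw [image_eq]
  exact isOpen_iUnion fun d => (hf _ (hW.inter (hl.isOpen_fiber d))).prod (isOpen_discrete _)

theorem exists_trivialization_of_equivariant_label (U : Set (ConfigQuotient n))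
    (l : { x : ConfigSpace n // configProj n x ∈ U } → Perm (Fin n)) (hl : IsLocallyConstant l)
    (equivariant : ∀ σ x y, configPermMap n σ x.1 = y.1 → l y = σ * l x) :
    ∃ (D : Type) (τ : TopologicalSpace D), @DiscreteTopology D τ ∧
      ∃ e : @Homeomorph { x : ConfigSpace n // configProj n x ∈ U } (↥U × D)
          inferInstance (@instTopologicalSpaceProd _ _ _ τ),
        ∀ x, ((e.toEquiv x).1 : ConfigQuotient n) = configProj n x.1 := by
  let _ : TopologicalSpace (Perm (Fin n)) := ⊥
  have _ : DiscreteTopology (Perm (Fin n)) := ⟨rfl⟩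
  let proj : { x : ConfigSpace n // configProj n x ∈ U } → U := U.restrictPreimage (configProj n)
  have proj_continuous : Continuous proj := Continuous.restrictPreimage continuous_quot_mk
  have proj_isOpenMap : IsOpenMap proj := (isOpenMap_configProj n).restrictPreimage U
  have injective : Function.Injective fun x => (proj x, l x) := by
    intro x y h
    obtain ⟨σ, hσ⟩ := configProj_eq_iff.1 (congrArg (fun q => (q.1 : ConfigQuotient n)) h)
    obtain rfl : σ = 1 := mul_eq_right.1
      ((equivariant σ x y hσ).symm.trans (congrArg Prod.snd h).symm)
    exact Subtype.ext (Eq.trans (Subtype.ext <| funext fun i => by simp [configPermMap]) hσ)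
  have surjective : Function.Surjective fun x => (proj x, l x) := by
    rintro ⟨⟨b, hb⟩, g⟩
    obtain ⟨z, rfl⟩ := Quotient.exists_rep b
    let σ := g * (l ⟨z, hb⟩)⁻¹
    have hσ := configProj_configPermMap σ z
    refine ⟨⟨configPermMap n σ z, hσ ▸ hb⟩, Prod.ext (Subtype.ext hσ) ?_⟩
    exact (equivariant σ ⟨z, hb⟩ _ rfl).trans (inv_mul_cancel_right _ _)
  exact ⟨Perm (Fin n), ⊥, ⟨rfl⟩,
    (Equiv.ofBijective _ ⟨injective, surjective⟩).toHomeomorphOfContinuousOpen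
      (proj_continuous.prodMk hl.continuous)
      (isOpenMap_prodMk_of_isLocallyConstant proj_isOpenMap hl), fun _ => rfl⟩

/-- The `c`-th open set cut out by an equivariant map `Φ` to the join: the orbits
whose images carry a positive weight in the `c`-th copy of `Perm (Fin n)`. -/
def columnSupport (Φ : ConfigSpace n → JoinComplex t (Perm (Fin n))) (c : Fin t) :
    Set (ConfigQuotient n) :=
  configProj n '' {z | ∃ g, 0 < (Φ z).1 (c, g)}

theorem mem_columnSupport_iff {Φ : ConfigSpace n → JoinComplex t (Perm (Fin n))}
    (equivariant : ∀ σ z, Φ (configPermMap n σ z) = σ • Φ z) {c : Fin t} {z : ConfigSpace n} :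
    configProj n z ∈ columnSupport Φ c ↔ ∃ g, 0 < (Φ z).1 (c, g) := by
  refine ⟨?_, fun h => ⟨z, h, rfl⟩⟩
  rintro ⟨w, ⟨g, hg⟩, h⟩
  obtain ⟨σ, rfl⟩ := configProj_eq_iff.1 h
  exact ⟨σ * g, by rwa [equivariant, JoinComplex.smul_apply, inv_mul_cancel_left]⟩

theorem schwartzGenusLE_of_equivariant {Φ : ConfigSpace n → JoinComplex t (Perm (Fin n))}
    (hΦ : Continuous Φ) (equivariant : ∀ σ z, Φ (configPermMap n σ z) = σ • Φ z) :
    SchwartzGenusLE n t := by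
  have isOpen_pos (c : Fin t) (g : Perm (Fin n)) : IsOpen {z | 0 < (Φ z).1 (c, g)} :=
    isOpen_lt continuous_const ((continuous_apply _).comp (continuous_subtype_val.comp hΦ))
  refine ⟨columnSupport Φ, fun c => isOpenMap_configProj n _ ?_, ?_, fun c => ?_⟩
  · rw [Set.ofPred_exists]
    exact isOpen_iUnion (isOpen_pos c)
  · refine Set.eq_univ_iff_forall.2 fun b => ?_
    obtain ⟨z, rfl⟩ := Quotient.exists_rep b
    obtain ⟨c, g, h⟩ := (Φ z).exists_pos
    exact Set.mem_iUnion.2 ⟨c, z, ⟨g, h⟩, rfl⟩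
  · choose l hl using fun x : { x // configProj n x ∈ columnSupport Φ c } =>
      (mem_columnSupport_iff equivariant).1 x.2
    have l_eq {x g} (hg : 0 < (Φ x.1).1 (c, g)) : l x = g := (Φ x.1).2.2.2 c _ _ (hl x).ne' hg.ne'
    refine exists_trivialization_of_equivariant_label _ l ?_ fun σ x y hxy => l_eq ?_
    · refine (IsLocallyConstant.iff_eventually_eq l).2 fun x => ?_
      filter_upwards [((isOpen_pos c (l x)).preimage continuous_subtype_val).mem_nhds (hl x)]
        with y hy using l_eq hy
    · rw [← hxy, equivariant, JoinComplex.smul_apply, inv_mul_cancel_left]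
      exact hl x

end Covering

section Cuts

open scoped Pointwise

variable {ι : Type*} {Q Q' : ι → ι → Prop} {A B J : Finset ι} {i j : ι}

/-- `A` is a cut of the relation `Q` if `Q` relates every element of `A` to every element of its
complement, so that `A` has to precede `Aᶜ` in any listing compatible with `Q`. -/
def IsCut (Q : ι → ι → Prop) (A : Finset ι) : Prop :=
  ∀ k ∈ A, ∀ l ∉ A, Q k l

theorem isCut_empty (Q : ι → ι → Prop) : IsCut Q ∅ := fun k hk => absurd hk (Finset.notMem_empty k)

theorem IsCut.subset_or_subset (hQ : ∀ k l, Q k l → ¬ Q l k) (hA : IsCut Q A) (hB : IsCut Q B) :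
    A ⊆ B ∨ B ⊆ A := by
  by_contra! h
  obtain ⟨⟨k, hkA, hkB⟩, l, hlB, hlA⟩ := And.imp Finset.not_subset.1 Finset.not_subset.1 h
  exact hQ k l (hA k hkA l hlA) (hB l hlB k hkB)

/-- The relation with `J` added as a cut: elements of `J` are related to all elements of `Jᶜ`,
and `Q` is kept inside `J` and inside `Jᶜ`. -/
def splitBy (J : Finset ι) (Q : ι → ι → Prop) (k l : ι) : Prop :=
  (k ∈ J ∧ l ∉ J) ∨ ((k ∈ J ↔ l ∈ J) ∧ Q k l)

theorem splitBy_asymm (hQ : ∀ k l, Q k l → ¬ Q l k) (k l : ι) (h : splitBy J Q k l) :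
    ¬ splitBy J Q l k := by
  have := hQ k l
  unfold splitBy at *
  tauto

theorem splitBy_mono (h : ∀ k l, Q k l → Q' k l) (k l : ι) : splitBy J Q k l → splitBy J Q' k l :=
  Or.imp_right (And.imp_right (h k l))

theorem isCut_splitBy_self (J : Finset ι) (Q : ι → ι → Prop) : IsCut (splitBy J Q) J :=
  fun _ hk _ hl => Or.inl ⟨hk, hl⟩

theorem IsCut.splitBy_inter [DecidableEq ι] (hA : IsCut Q A) : IsCut (splitBy J Q) (A ∩ J) := by
  intro k hk l hl
  have := hA k
  simp only [Finset.mem_inter] at hk hl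
  unfold splitBy
  grind

theorem IsCut.splitBy_union [DecidableEq ι] (hA : IsCut Q A) : IsCut (splitBy J Q) (A ∪ J) := by
  intro k hk l hl
  have := hA k
  simp only [Finset.mem_union] at hk hl
  unfold splitBy
  grind

theorem isCut_smul_iff [DecidableEq ι] (π : Perm ι) :
    IsCut Q (π • A) ↔ IsCut (fun k l => Q (π k) (π l)) A := by
  constructor
  · exact fun h k hk l hl => h _ (Finset.smul_mem_smul_finset hk) _
      (mt (Finset.smul_mem_smul_finset_iff π).1 hl)
  · intro h k hk l hl
    simpa using h _ (Finset.inv_smul_mem_iff.2 hk) _ (mt Finset.inv_smul_mem_iff.1 hl)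

variable [Fintype ι]

open scoped Classical in
/-- The cuts of `Q`, including the two trivial ones `∅` and `univ`. -/
def cuts (Q : ι → ι → Prop) : Finset (Finset ι) := {A | IsCut Q A}

/-- The position of `i` in the coarsest ordered partition of `ι` refined by all cuts of `Q`,
measured by the number of cuts that end before `i`. -/
def blockRank [DecidableEq ι] (Q : ι → ι → Prop) (i : ι) : ℕ := {A ∈ cuts Q | i ∉ A}.card

theorem mem_cuts : A ∈ cuts Q ↔ IsCut Q A := by simp [cuts]

theorem isCut_univ (Q : ι → ι → Prop) : IsCut Q Finset.univ :=
  fun _ _ l hl => absurd (Finset.mem_univ l) hl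

theorem cuts_mono (h : ∀ k l, Q k l → Q' k l) : cuts Q ⊆ cuts Q' := fun _ hA =>
  mem_cuts.2 fun k hk l hl => h k l (mem_cuts.1 hA k hk l hl)

theorem card_cuts_le (hQ : ∀ k l, Q k l → ¬ Q l k) : (cuts Q).card ≤ Fintype.card ι + 1 := by
  rw [← Finset.card_range (Fintype.card ι + 1)]
  refine Finset.card_le_card_of_injOn Finset.card
    (fun A _ => Finset.mem_coe.2 (Finset.mem_range_succ_iff.2 A.card_le_univ)) fun A hA B hB h => ?_
  rcases (mem_cuts.1 hA).subset_or_subset hQ (mem_cuts.1 hB) with hAB | hBA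
  · exact Finset.eq_of_subset_of_card_le hAB h.ge
  · exact (Finset.eq_of_subset_of_card_le hBA h.le).symm

theorem three_le_card_cuts (hA : IsCut Q A) (h1 : A.Nonempty) (h2 : A ≠ Finset.univ) :
    3 ≤ (cuts Q).card := by
  classical
  have card_eq : ({∅, A, Finset.univ} : Finset (Finset ι)).card = 3 :=
    Finset.card_eq_three.2
      ⟨_, _, _, h1.ne_empty.symm, (h1.mono A.subset_univ).ne_empty.symm, h2, rfl⟩
  rw [← card_eq]
  refine Finset.card_le_card ?_
  simp only [Finset.insert_subset_iff, Finset.singleton_subset_iff, mem_cuts]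
  exact ⟨isCut_empty Q, hA, isCut_univ Q⟩

theorem four_le_card_cuts (hA : IsCut Q A) (hB : IsCut Q B) (hne : A ≠ B) (hA1 : A.Nonempty)
    (hA2 : A ≠ Finset.univ) (hB1 : B.Nonempty) (hB2 : B ≠ Finset.univ) : 4 ≤ (cuts Q).card := by
  classical
  have card_eq : ({∅, A, B, Finset.univ} : Finset (Finset ι)).card = 4 :=
    Finset.card_eq_four.2 ⟨_, _, _, _, hA1.ne_empty.symm, hB1.ne_empty.symm,
      (hA1.mono A.subset_univ).ne_empty.symm, hne, hA2, hB2, rfl⟩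
  rw [← card_eq]
  refine Finset.card_le_card ?_
  simp only [Finset.insert_subset_iff, Finset.singleton_subset_iff, mem_cuts]
  exact ⟨isCut_empty Q, hA, hB, isCut_univ Q⟩

theorem IsCut.blockRank_lt [DecidableEq ι] (hQ : ∀ k l, Q k l → ¬ Q l k) (hA : IsCut Q A)
    (hi : i ∈ A) (hj : j ∉ A) : blockRank Q i < blockRank Q j := by
  refine Finset.card_lt_card ((Finset.ssubset_iff_of_subset fun B hB => ?_).2
    ⟨A, Finset.mem_filter.2 ⟨mem_cuts.2 hA, hj⟩, fun h => (Finset.mem_filter.1 h).2 hi⟩)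
  obtain ⟨hB, hiB⟩ := Finset.mem_filter.1 hB
  refine Finset.mem_filter.2 ⟨hB, fun hjB => ?_⟩
  rcases hA.subset_or_subset hQ (mem_cuts.1 hB) with h | h
  · exact hiB (h hi)
  · exact hj (h hjB)

theorem IsCut.blockRank_splitBy_ne [DecidableEq ι] (hQ : ∀ k l, Q k l → ¬ Q l k) (hA : IsCut Q A)
    (hi : i ∈ A) (hj : j ∉ A) : blockRank (splitBy J Q) i ≠ blockRank (splitBy J Q) j := by
  by_cases hiJ : i ∈ J
  · exact (hA.splitBy_inter.blockRank_lt (splitBy_asymm hQ) (by simp [hi, hiJ]) (by simp [hj])).ne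
  by_cases hjJ : j ∈ J
  · exact ((isCut_splitBy_self J Q).blockRank_lt (splitBy_asymm hQ) hjJ hiJ).ne'
  · exact (hA.splitBy_union.blockRank_lt (splitBy_asymm hQ) (by simp [hi]) (by simp [hj, hjJ])).ne

/- A cut `A` of `Q` is determined by the number of cuts of `splitBy J Q` that lie below `A ∩ J`
or between `J` and `A ∪ J`; this number is at least two, because of `∅` and `J`. -/
theorem card_cuts_le_card_cuts_splitBy (hQ : ∀ k l, Q k l → ¬ Q l k) (J : Finset ι) :
    (cuts Q).card ≤ (cuts (splitBy J Q)).card := by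
  classical
  set C := cuts (splitBy J Q)
  let below (A : Finset ι) : Finset (Finset ι) := {B ∈ C | B ⊆ A ∩ J}
  let above (A : Finset ι) : Finset (Finset ι) := {B ∈ C | J ⊆ B ∧ B ⊆ A ∪ J}
  have below_mono {A B} (h : A ⊆ B) : below A ⊆ below B := Finset.monotone_filter_right _
    fun _ _ hD => hD.trans (Finset.inter_subset_inter_right h)
  have above_mono {A B} (h : A ⊆ B) : above A ⊆ above B := Finset.monotone_filter_right _
    fun _ _ hD => ⟨hD.1, hD.2.trans (Finset.union_subset_union_left h)⟩
  have eq_of_subset {A B} (hB : B ∈ cuts Q) (h : A ⊆ B)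
      (hcard : (below B).card + (above B).card ≤ (below A).card + (above A).card) : A = B := by
    have hle := Finset.card_le_card (below_mono h)
    have hle' := Finset.card_le_card (above_mono h)
    have hbelow := Finset.eq_of_subset_of_card_le (below_mono h) (by omega)
    have habove := Finset.eq_of_subset_of_card_le (above_mono h) (by omega)
    have inter_mem : B ∩ J ∈ below A := hbelow ▸
      Finset.mem_filter.2 ⟨mem_cuts.2 (mem_cuts.1 hB).splitBy_inter, subset_rfl⟩
    have union_mem : B ∪ J ∈ above A := habove ▸ Finset.mem_filter.2
      ⟨mem_cuts.2 (mem_cuts.1 hB).splitBy_union, Finset.subset_union_right, subset_rfl⟩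
    have hinter := (Finset.mem_filter.1 inter_mem).2
    have hunion := (Finset.mem_filter.1 union_mem).2.2
    exact h.antisymm (le_of_inf_le_sup_le hinter hunion)
  have one_le (A) : 1 ≤ (below A).card ∧ 1 ≤ (above A).card :=
    ⟨Finset.card_pos.2 ⟨∅, by simp [below, C, mem_cuts, isCut_empty]⟩,
      Finset.card_pos.2 ⟨J, by simp [above, C, mem_cuts, isCut_splitBy_self]⟩⟩
  have le_card (A) : (below A).card + (above A).card ≤ C.card + 1 := by
    rw [← Finset.card_union_add_card_inter]
    refine add_le_add (Finset.card_le_card (Finset.union_subset (Finset.filter_subset _ _)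
      (Finset.filter_subset _ _))) (Finset.card_le_one_iff_subset_singleton.2 ⟨J, fun D hD => ?_⟩)
    obtain ⟨hb, ha⟩ := Finset.mem_inter.1 hD
    exact Finset.mem_singleton.2 (((Finset.mem_filter.1 hb).2.trans
      Finset.inter_subset_right).antisymm (Finset.mem_filter.1 ha).2.1)
  calc (cuts Q).card ≤ (Finset.Icc 2 (C.card + 1)).card := by
        refine Finset.card_le_card_of_injOn (fun A => (below A).card + (above A).card)
          (fun A _ => Finset.mem_coe.2 (Finset.mem_Icc.2 ⟨?_, le_card A⟩)) fun A hA B hB h => ?_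
        · exact Nat.add_le_add (one_le A).1 (one_le A).2
        · rcases (mem_cuts.1 hA).subset_or_subset hQ (mem_cuts.1 hB) with hAB | hBA
          · exact eq_of_subset hB hAB h.ge
          · exact (eq_of_subset hA hBA h.le).symm
    _ = C.card := by simp

variable (π : Perm ι)

theorem card_cuts_comp (Q : ι → ι → Prop) :
    (cuts fun k l => Q (π k) (π l)).card = (cuts Q).card := by
  classical
  exact Finset.card_equiv (MulAction.toPerm π) fun A => by
    rw [mem_cuts, mem_cuts, MulAction.toPerm_apply, isCut_smul_iff]

theorem blockRank_comp [DecidableEq ι] (Q : ι → ι → Prop) :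
    blockRank (fun k l => Q (π k) (π l)) = blockRank Q ∘ π := by
  funext i
  refine Finset.card_equiv (MulAction.toPerm π) fun A => ?_
  rw [Finset.mem_filter, Finset.mem_filter, mem_cuts, mem_cuts, MulAction.toPerm_apply,
    isCut_smul_iff, ← Perm.smul_def, Finset.smul_mem_smul_finset_iff]

end Cuts

section Listing

open scoped Pointwise

variable {n : ℕ}

theorem sort_eq_mul_sort_comp {α : Type*} [LinearOrder α] {f : Fin n → α} (π : Perm (Fin n))
    (hπ : ∀ i j, f i = f j → i < j → π⁻¹ i < π⁻¹ j) :
    Tuple.sort f = π * Tuple.sort (f ∘ π) := by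
  obtain ⟨monotone, increasing_on_ties⟩ :=
    (Tuple.eq_sort_iff (f := f ∘ π)).1 (rfl : Tuple.sort (f ∘ π) = _)
  symm
  refine Tuple.eq_sort_iff.2 ⟨monotone, fun a b hab h => ?_⟩
  refine lt_of_not_ge fun hle => ?_
  rcases hle.eq_or_lt with he | hlt
  · exact hab.ne' ((π * Tuple.sort (f ∘ π)).injective he)
  · have := hπ _ _ h.symm hlt
    simp only [Perm.mul_apply, Perm.inv_def, symm_apply_apply] at this
    exact this.asymm (increasing_on_ties a b hab h)

/-- The listing of `Fin n` compatible with the cuts of `Q`, in increasing order between cuts. -/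
def listing (Q : Fin n → Fin n → Prop) : Perm (Fin n) := Tuple.sort (blockRank Q)

theorem listing_eq_of_card_cuts_eq {Q Q' : Fin n → Fin n → Prop} (h : ∀ k l, Q k l → Q' k l)
    (hcard : (cuts Q).card = (cuts Q').card) : listing Q = listing Q' := by
  have := Finset.eq_of_subset_of_card_le (cuts_mono h) hcard.ge
  unfold listing blockRank
  rw [this]

theorem listing_eq_mul_listing_comp {Q : Fin n → Fin n → Prop} (π : Perm (Fin n))
    (hπ : ∀ i j, blockRank Q i = blockRank Q j → i < j → π⁻¹ i < π⁻¹ j) :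
    listing Q = π * listing fun k l => Q (π k) (π l) := by
  rw [listing, listing, blockRank_comp]
  exact sort_eq_mul_sort_comp π hπ

/-- The shuffle listing the elements of `A` in increasing order, followed by those of `Aᶜ`. -/
def shuffle (A : Finset (Fin n)) : Perm (Fin n) := Tuple.sort fun i => if i ∈ A then 0 else 1

variable {A : Finset (Fin n)}

theorem shuffle_mem_iff (A : Finset (Fin n)) (a : Fin n) : shuffle A a ∈ A ↔ (a : ℕ) < A.card := by
  have key := Tuple.lt_card_le_iff_apply_le_of_monotone (j := a) (a := 0)
    (Tuple.monotone_sort fun i => if i ∈ A then 0 else 1)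
  have card_eq : (Finset.univ.filter fun b => shuffle A b ∈ A).card = A.card :=
    Finset.card_equiv (shuffle A) fun b => by simp
  have le_zero_iff (i) : (if i ∈ A then 0 else 1) ≤ 0 ↔ i ∈ A := by split_ifs <;> simp [*]
  simp only [Function.comp_apply, le_zero_iff] at key
  rw [← card_eq]
  exact key.symm

theorem shuffle_lt {a b : Fin n} (hab : a < b) :
    (shuffle A a ∈ A ∧ shuffle A b ∉ A) ∨
      ((shuffle A a ∈ A ↔ shuffle A b ∈ A) ∧ shuffle A a < shuffle A b) := by
  have increasing_on_ties := (Tuple.eq_sort_iff.1 (rfl : shuffle A = _)).2 a b hab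
  have ha := shuffle_mem_iff A a
  have hb := shuffle_mem_iff A b
  grind

theorem shuffle_eq_mul_shuffle (π : Perm (Fin n))
    (hπ : ∀ i j, (i ∈ A ↔ j ∈ A) → i < j → π⁻¹ i < π⁻¹ j) :
    shuffle A = π * shuffle (π⁻¹ • A) := by
  have indicator_comp : (fun i => if i ∈ π⁻¹ • A then 0 else 1) =
      (fun i => if i ∈ A then 0 else 1) ∘ π := by
    funext i
    simp only [Finset.mem_inv_smul_finset_iff, Perm.smul_def, Function.comp_apply]
  rw [shuffle, shuffle, indicator_comp]
  refine sort_eq_mul_sort_comp π fun i j h => hπ i j ?_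
  by_cases hi : i ∈ A <;> by_cases hj : j ∈ A <;> simp_all

theorem shuffle_eq_one (h : ∀ i j, i < j → j ∈ A → i ∈ A) : shuffle A = 1 := by
  refine Tuple.sort_eq_refl_iff_monotone.2 fun i j hij => ?_
  rcases hij.eq_or_lt with rfl | hlt
  · rfl
  · have := h i j hlt
    grind

end Listing

section StepWeight

open MeasureTheory Topology

variable {α : Type*} [DecidableEq α] {X : Type*} [TopologicalSpace X] {D : X → ℝ → α}

/-- The length of the set of levels `θ ∈ (1, 2)` at which the step function `d` takes the
value `a`. -/
def stepWeight (d : ℝ → α) (a : α) : ℝ := ∫ θ in Set.Ioo (1 : ℝ) 2, if d θ = a then 1 else 0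

/-- A family of functions on `(1, 2)` which is jointly locally constant at `(x, θ)` for all but
finitely many `θ`, for each parameter `x`. -/
def IsStepFamily {α X : Type*} [TopologicalSpace X] (D : X → ℝ → α) : Prop :=
  ∀ x, ∃ F : Set ℝ, F.Finite ∧
    ∀ θ ∈ Set.Ioo (1 : ℝ) 2, θ ∉ F → ∀ᶠ p : X × ℝ in 𝓝 (x, θ), D p.1 p.2 = D x θ

theorem stepWeight_nonneg (d : ℝ → α) (a : α) : 0 ≤ stepWeight d a :=
  integral_nonneg fun θ => by dsimp only [Pi.zero_apply]; split_ifs <;> norm_num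

theorem stepWeight_congr {β : Type*} [DecidableEq β] {d : ℝ → α} {d' : ℝ → β} {a : α} {b : β}
    (h : ∀ θ ∈ Set.Ioo (1 : ℝ) 2, d θ = a ↔ d' θ = b) : stepWeight d a = stepWeight d' b :=
  setIntegral_congr_fun measurableSet_Ioo fun θ hθ => by simp only [h θ hθ]

theorem exists_eq_of_stepWeight_ne_zero {d : ℝ → α} {a : α} (h : stepWeight d a ≠ 0) :
    ∃ θ ∈ Set.Ioo (1 : ℝ) 2, d θ = a := by
  by_contra! hne
  exact h <| (setIntegral_congr_fun measurableSet_Ioo fun θ hθ => if_neg (hne θ hθ)).trans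
    (integral_zero _ _)

theorem IsStepFamily.aestronglyMeasurable (hD : IsStepFamily D) (x : X) (a : α) :
    AEStronglyMeasurable (fun θ => if D x θ = a then (1 : ℝ) else 0)
      (volume.restrict (Set.Ioo 1 2)) := by
  obtain ⟨F, hF, h⟩ := hD x
  have continuousOn : ContinuousOn (fun θ => if D x θ = a then (1 : ℝ) else 0)
      (Set.Ioo (1 : ℝ) 2 \ F) := by
    intro θ hθ
    have eventually_eq : ∀ᶠ θ' in 𝓝 θ, D x θ' = D x θ :=
      ((Continuous.prodMk_right x).tendsto θ).eventually (h θ hθ.1 hθ.2)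
    refine (ContinuousAt.congr (f := fun _ => if D x θ = a then (1 : ℝ) else 0)
      continuousAt_const ?_).continuousWithinAt
    filter_upwards [eventually_eq] with θ' hθ' using by rw [hθ']
  rw [← Measure.restrict_congr_set (sdiff_null_ae_eq_self (hF.measure_zero volume))]
  exact continuousOn.aestronglyMeasurable (measurableSet_Ioo.diff hF.measurableSet)

theorem IsStepFamily.integrable (hD : IsStepFamily D) (x : X) (a : α) :
    Integrable (fun θ => if D x θ = a then (1 : ℝ) else 0) (volume.restrict (Set.Ioo 1 2)) := by
  have : IsFiniteMeasure (volume.restrict (Set.Ioo (1 : ℝ) 2)) := ⟨by simp⟩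
  refine (integrable_const (1 : ℝ)).mono' (hD.aestronglyMeasurable x a) (.of_forall fun θ => ?_)
  split_ifs <;> simp

theorem IsStepFamily.sum_stepWeight [Fintype α] (hD : IsStepFamily D) (x : X) :
    ∑ a, stepWeight (D x) a = 1 := by
  unfold stepWeight
  rw [← integral_finsetSum _ fun a _ => hD.integrable x a]
  simp only [Finset.sum_ite_eq, Finset.mem_univ, if_true, setIntegral_const, smul_eq_mul, mul_one,
    measureReal_def, Real.volume_Ioo]
  norm_num

theorem IsStepFamily.continuous_stepWeight [FirstCountableTopology X] (hD : IsStepFamily D) :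
    Continuous fun x => stepWeight (D x) := by
  refine continuous_pi fun a => continuous_iff_continuousAt.2 fun x => ?_
  obtain ⟨F, hF, h⟩ := hD x
  have : IsFiniteMeasure (volume.restrict (Set.Ioo (1 : ℝ) 2)) := ⟨by simp⟩
  refine continuousAt_of_dominated (bound := fun _ => (1 : ℝ))
    (.of_forall fun x => hD.aestronglyMeasurable x a)
    (.of_forall fun x => .of_forall fun θ => by split_ifs <;> simp) (integrable_const _) ?_
  have ae_notMem : ∀ᵐ θ ∂volume.restrict (Set.Ioo (1 : ℝ) 2), θ ∉ F :=
    ae_restrict_of_ae (measure_eq_zero_iff_ae_notMem.1 (hF.measure_zero _))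
  filter_upwards [ae_notMem, ae_restrict_mem measurableSet_Ioo] with θ hθF hθ
  have eventually_eq : ∀ᶠ x' in 𝓝 x, D x' θ = D x θ :=
    ((Continuous.prodMk_left θ).tendsto x).eventually (h θ hθ hθF)
  refine ContinuousAt.congr (f := fun _ => if D x θ = a then (1 : ℝ) else 0) continuousAt_const ?_
  filter_upwards [eventually_eq] with x' hx' using by rw [hx']

end StepWeight

section Gaps

open scoped Pointwise

variable {ι : Type*} [Fintype ι]

/-- The nonempty proper subsets of a finite type: the possible left blocks when the points of a
configuration on the line split into two groups. -/
abbrev ProperSubset (ι : Type*) [Fintype ι] : Type _ :=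
  {A : Finset ι // A.Nonempty ∧ A ≠ Finset.univ}

/-- The `card ι` levels at distance `h` starting at `x i` cannot all be followed closely by the
remaining points, so some window of length `h` between `x i` and `x j` is free of points. -/
theorem exists_level_of_card_mul_lt {x : ι → ℝ} {i j : ι} {h : ℝ} (hh : 0 ≤ h)
    (hx : Fintype.card ι * h < x j - x i) :
    ∃ c, x i ≤ c ∧ c < x j ∧ ∀ l, x l ≤ c ∨ c + h < x l := by
  by_contra! occupied
  have level_lt (k : Fin (Fintype.card ι)) : x i + k * h < x j := by
    have : (k : ℝ) * h ≤ Fintype.card ι * h := by gcongr; exact_mod_cast k.2.le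
    linarith
  choose l lt_l l_le using fun k : Fin (Fintype.card ι) =>
    occupied (x i + k * h) (le_add_of_nonneg_right (by positivity)) (level_lt k)
  have injective : Function.Injective l := by
    refine Function.Injective.of_lt_imp_ne fun a b hab e => ?_
    have : (a : ℝ) + 1 ≤ b := by exact_mod_cast hab
    have := lt_l b
    have := l_le a
    rw [e] at this
    nlinarith
  obtain ⟨k, hk⟩ :=
    ((Fintype.bijective_iff_injective_and_card l).2 ⟨injective, Fintype.card_fin _⟩).2 i
  have := lt_l k
  rw [hk] at this
  nlinarith [mul_nonneg (Nat.cast_nonneg (α := ℝ) k.1) hh]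

theorem ProperSubset.exists_notMem (A : ProperSubset ι) : ∃ l, l ∉ A.1 := by
  simpa only [ne_eq, Finset.eq_univ_iff_forall, not_forall] using A.2.2

variable [DecidableEq ι]

instance : MulAction (Perm ι) (ProperSubset ι) where
  smul π A := ⟨π • A.1, A.2.1.smul_finset, fun h => A.2.2 <| by
    rw [← inv_smul_smul π A.1, h, Finset.smul_finset_univ]⟩
  one_smul A := Subtype.ext (one_smul _ A.1)
  mul_smul π σ A := Subtype.ext (mul_smul π σ A.1)

theorem ProperSubset.coe_smul (π : Perm ι) (A : ProperSubset ι) : (π • A).1 = π • A.1 := rfl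

theorem ProperSubset.apply_mem_smul {π : Perm ι} {A : ProperSubset ι} {i : ι} :
    π i ∈ (π • A).1 ↔ i ∈ A.1 := by
  rw [coe_smul, ← Perm.smul_def, Finset.smul_mem_smul_finset_iff]

theorem ProperSubset.inv_apply_mem {π : Perm ι} {A : ProperSubset ι} {i : ι} :
    π⁻¹ i ∈ A.1 ↔ i ∈ (π • A).1 := by
  rw [coe_smul, ← Perm.smul_def, Finset.inv_smul_mem_iff]

theorem ProperSubset.product_compl_nonempty (A : ProperSubset ι) : (A.1 ×ˢ A.1ᶜ).Nonempty := by
  obtain ⟨l, hl⟩ := A.exists_notMem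
  exact A.2.1.product ⟨l, Finset.mem_compl.2 hl⟩

/-- The signed distance between the block `A` and its complement, positive when `A` lies entirely
to the left of its complement. -/
def gap (A : ProperSubset ι) (x : ι → ℝ) : ℝ :=
  (A.1 ×ˢ A.1ᶜ).inf' A.product_compl_nonempty fun p => x p.2 - x p.1

theorem le_gap_iff {A : ProperSubset ι} {x : ι → ℝ} {c : ℝ} :
    c ≤ gap A x ↔ ∀ k ∈ A.1, ∀ l ∉ A.1, c ≤ x l - x k := by
  simp only [gap, Finset.le_inf'_iff, Finset.mem_product, Finset.mem_compl, Prod.forall, and_imp]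
  exact forall_congr' fun k => forall_comm

theorem gap_le {A : ProperSubset ι} {x : ι → ℝ} {k l : ι} (hk : k ∈ A.1) (hl : l ∉ A.1) :
    gap A x ≤ x l - x k :=
  le_gap_iff.1 le_rfl k hk l hl

theorem exists_gap_eq (A : ProperSubset ι) (x : ι → ℝ) :
    ∃ k ∈ A.1, ∃ l ∉ A.1, gap A x = x l - x k := by
  obtain ⟨p, hp, h⟩ := Finset.exists_mem_eq_inf' A.product_compl_nonempty fun p => x p.2 - x p.1
  rw [Finset.mem_product, Finset.mem_compl] at hp
  exact ⟨p.1, hp.1, p.2, hp.2, h⟩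

theorem lt_gap_iff {A : ProperSubset ι} {x : ι → ℝ} {c : ℝ} :
    c < gap A x ↔ ∀ k ∈ A.1, ∀ l ∉ A.1, c < x l - x k := by
  refine ⟨fun h k hk l hl => h.trans_le (gap_le hk hl), fun h => ?_⟩
  obtain ⟨k, hk, l, hl, e⟩ := exists_gap_eq A x
  exact e ▸ h k hk l hl

@[fun_prop]
theorem continuous_gap (A : ProperSubset ι) : Continuous (gap A) :=
  Continuous.finset_inf'_apply _ fun _ _ => by fun_prop

theorem gap_smul (π : Perm ι) (A : ProperSubset ι) (x : ι → ℝ) :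
    gap (π • A) x = gap A (x ∘ π) := by
  refine eq_of_forall_le_iff fun c => ?_
  rw [le_gap_iff, le_gap_iff]
  refine π.forall_congr_right.symm.trans (forall_congr' fun k => ?_)
  refine imp_congr ProperSubset.apply_mem_smul (π.forall_congr_right.symm.trans ?_)
  exact forall_congr' fun l => imp_congr (not_congr ProperSubset.apply_mem_smul) Iff.rfl

theorem exists_lt_gap_of_card_mul_lt {x : ι → ℝ} {i j : ι} {h : ℝ} (hh : 0 ≤ h)
    (hx : Fintype.card ι * h < x j - x i) :
    ∃ A : ProperSubset ι, h < gap A x ∧ i ∈ A.1 ∧ j ∉ A.1 := by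
  obtain ⟨c, hic, hcj, free⟩ := exists_level_of_card_mul_lt hh hx
  let A : Finset ι := {l | x l ≤ c}
  have hi : i ∈ A := by simpa [A] using hic
  have hj : j ∉ A := by simpa [A] using hcj
  refine ⟨⟨A, ⟨i, hi⟩, fun e => hj (e ▸ Finset.mem_univ j)⟩,
    lt_gap_iff.2 fun k hk l hl => ?_, hi, hj⟩
  simp only [A, Finset.mem_filter_univ] at hk hl
  linarith [(free l).resolve_left hl]

section Spread

variable [Nonempty ι]

theorem sameBlock_nonempty (A : Finset ι) :
    (Finset.univ.filter fun p : ι × ι => p.1 ∈ A ↔ p.2 ∈ A).Nonempty :=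
  ⟨(Classical.arbitrary ι, Classical.arbitrary ι), by simp⟩

/-- The larger of the diameters of `A` and of its complement. -/
def blockSpread (A : Finset ι) (x : ι → ℝ) : ℝ :=
  (Finset.univ.filter fun p : ι × ι => p.1 ∈ A ↔ p.2 ∈ A).sup' (sameBlock_nonempty A)
    fun p => x p.1 - x p.2

theorem blockSpread_le_iff {A : Finset ι} {x : ι → ℝ} {c : ℝ} :
    blockSpread A x ≤ c ↔ ∀ i j, (i ∈ A ↔ j ∈ A) → x i - x j ≤ c := by
  simp only [blockSpread, Finset.sup'_le_iff, Finset.mem_filter_univ, Prod.forall]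

theorem exists_blockSpread_eq (A : Finset ι) (x : ι → ℝ) :
    ∃ i j, (i ∈ A ↔ j ∈ A) ∧ blockSpread A x = x i - x j := by
  obtain ⟨p, hp, h⟩ := Finset.exists_mem_eq_sup' (sameBlock_nonempty A) fun p => x p.1 - x p.2
  exact ⟨p.1, p.2, (Finset.mem_filter_univ p).1 hp, h⟩

theorem sub_le_blockSpread {A : Finset ι} (x : ι → ℝ) {i j : ι} (h : i ∈ A ↔ j ∈ A) :
    x i - x j ≤ blockSpread A x :=
  blockSpread_le_iff.1 le_rfl i j h

theorem abs_sub_le_blockSpread {A : Finset ι} (x : ι → ℝ) {i j : ι} (h : i ∈ A ↔ j ∈ A) :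
    |x i - x j| ≤ blockSpread A x :=
  abs_sub_le_iff.2 ⟨sub_le_blockSpread x h, sub_le_blockSpread x h.symm⟩

theorem blockSpread_nonneg (A : Finset ι) (x : ι → ℝ) : 0 ≤ blockSpread A x := by
  simpa using sub_le_blockSpread (A := A) x (i := Classical.arbitrary ι) Iff.rfl

@[fun_prop]
theorem continuous_blockSpread (A : Finset ι) : Continuous (blockSpread A) :=
  Continuous.finset_sup'_apply _ fun _ _ => by fun_prop

theorem blockSpread_smul (π : Perm ι) (A : ProperSubset ι) (x : ι → ℝ) :
    blockSpread (π • A).1 x = blockSpread A.1 (x ∘ π) := by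
  refine eq_of_forall_ge_iff fun c => ?_
  rw [blockSpread_le_iff, blockSpread_le_iff]
  refine π.forall_congr_right.symm.trans (forall_congr' fun i => ?_)
  refine π.forall_congr_right.symm.trans (forall_congr' fun j => ?_)
  exact imp_congr (iff_congr ProperSubset.apply_mem_smul ProperSubset.apply_mem_smul) Iff.rfl

/-- The diameter of the set of values of `x`. -/
def spread (x : ι → ℝ) : ℝ := blockSpread Finset.univ x

theorem sub_le_spread (x : ι → ℝ) (i j : ι) : x i - x j ≤ spread x :=
  sub_le_blockSpread x (by simp only [Finset.mem_univ])

theorem abs_sub_le_spread (x : ι → ℝ) (i j : ι) : |x i - x j| ≤ spread x :=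
  abs_sub_le_blockSpread x (by simp only [Finset.mem_univ])

theorem spread_le {x : ι → ℝ} {c : ℝ} (h : ∀ i j, x i - x j ≤ c) : spread x ≤ c :=
  blockSpread_le_iff.2 fun i j _ => h i j

theorem exists_spread_eq (x : ι → ℝ) : ∃ i j, spread x = x i - x j := by
  obtain ⟨i, j, -, h⟩ := exists_blockSpread_eq Finset.univ x
  exact ⟨i, j, h⟩

theorem gap_le_spread (A : ProperSubset ι) (x : ι → ℝ) : gap A x ≤ spread x := by
  obtain ⟨k, -, l, -, e⟩ := exists_gap_eq A x
  exact e.trans_le (sub_le_spread x l k)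

theorem spread_le_gap_add {A : ProperSubset ι} {x : ι → ℝ} (h : 0 ≤ gap A x) :
    spread x ≤ gap A x + 2 * blockSpread A.1 x := by
  obtain ⟨k, hk, l, hl, e⟩ := exists_gap_eq A x
  have nonneg := blockSpread_nonneg A.1 x
  refine spread_le fun i j => ?_
  by_cases hi : i ∈ A.1 <;> by_cases hj : j ∈ A.1
  · linarith [sub_le_blockSpread x (iff_of_true hi hj)]
  · linarith [gap_le (x := x) hi hj]
  · linarith [sub_le_blockSpread x (iff_of_false hi hl), sub_le_blockSpread x (iff_of_true hk hj)]
  · linarith [sub_le_blockSpread x (iff_of_false hi hj)]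

theorem gap_le_blockSpread_of_ne {A B : ProperSubset ι} (hne : A ≠ B) {x : ι → ℝ}
    (hB : 0 ≤ gap B x) : gap A x ≤ blockSpread B.1 x := by
  by_contra! hlt
  have separated {i j} (hi : i ∈ A.1) (hj : j ∉ A.1) : i ∈ B.1 ∧ j ∉ B.1 := by
    have lt : blockSpread B.1 x < x j - x i := hlt.trans_le (gap_le hi hj)
    have not_same : ¬(j ∈ B.1 ↔ i ∈ B.1) := fun h => (sub_le_blockSpread x h).not_gt lt
    have nonneg := blockSpread_nonneg B.1 x
    by_contra hcon
    have hij : i ∉ B.1 ∧ j ∈ B.1 := by tauto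
    linarith [gap_le (x := x) hij.2 hij.1]
  obtain ⟨a, ha⟩ := A.2.1
  obtain ⟨b, hb⟩ := A.exists_notMem
  refine hne (Subtype.ext (Finset.ext fun i => ⟨fun hi => (separated hi hb).1, fun hi => ?_⟩))
  by_contra hi'
  exact (separated ha hi').2 hi

end Spread

section SecondGap

variable [Nontrivial (ProperSubset ι)]

theorem offDiag_properSubset_nonempty :
    (Finset.univ : Finset (ProperSubset ι)).offDiag.Nonempty := by
  obtain ⟨A, B, h⟩ := exists_pair_ne (ProperSubset ι)
  exact ⟨(A, B), by simpa⟩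

/-- The second largest of the gaps of a configuration. -/
def secondGap (x : ι → ℝ) : ℝ :=
  (Finset.univ : Finset (ProperSubset ι)).offDiag.sup' offDiag_properSubset_nonempty
    fun p => min (gap p.1 x) (gap p.2 x)

theorem le_secondGap_iff {x : ι → ℝ} {c : ℝ} :
    c ≤ secondGap x ↔ ∃ A B : ProperSubset ι, A ≠ B ∧ c ≤ gap A x ∧ c ≤ gap B x := by
  simp [secondGap, Finset.le_sup'_iff]

@[fun_prop]
theorem continuous_secondGap : Continuous (secondGap (ι := ι)) :=
  Continuous.finset_sup'_apply _ fun _ _ => by fun_prop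

theorem secondGap_comp (π : Perm ι) (x : ι → ℝ) : secondGap (x ∘ π) = secondGap x := by
  refine eq_of_forall_le_iff fun c => ?_
  simp only [le_secondGap_iff, ← gap_smul]
  constructor
  · rintro ⟨A, B, hne, h⟩
    exact ⟨π • A, π • B, (MulAction.injective π).ne hne, h⟩
  · rintro ⟨A, B, hne, h⟩
    exact ⟨π⁻¹ • A, π⁻¹ • B, (MulAction.injective π⁻¹).ne hne, by simpa only [smul_inv_smul]⟩

theorem le_secondGap_of_lt_blockSpread [Nonempty ι] {A : ProperSubset ι} {x : ι → ℝ} {c : ℝ}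
    (hc : 0 ≤ c) (hA : c ≤ gap A x) (hs : Fintype.card ι * c < blockSpread A.1 x) :
    c ≤ secondGap x := by
  obtain ⟨i, j, hij, e⟩ := exists_blockSpread_eq A.1 x
  obtain ⟨B, hB, hjB, hiB⟩ := exists_lt_gap_of_card_mul_lt (x := x) (i := j) (j := i) hc (e ▸ hs)
  refine le_secondGap_iff.2 ⟨A, B, ?_, hA, hB.le⟩
  rintro rfl
  exact hiB (hij.2 hjB)

end SecondGap

end Gaps

section LevelMap

open Topology
open scoped Pointwise

variable {m : ℕ}

instance : Nontrivial (ProperSubset (Fin (m + 5))) where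
  exists_pair_ne := ⟨⟨{0}, by simp, by simpa [Finset.eq_univ_iff_forall] using exists_ne 0⟩,
    ⟨{1}, by simp, by simpa [Finset.eq_univ_iff_forall] using exists_ne 1⟩, by simp⟩

/-- The number of points of the configuration, as a real number. -/
def numPoints (m : ℕ) : ℝ := m + 5

theorem five_le_numPoints (m : ℕ) : 5 ≤ numPoints m := by
  unfold numPoints; linarith [(m.cast_nonneg : (0 : ℝ) ≤ m)]

theorem card_fin_cast (m : ℕ) : (Fintype.card (Fin (m + 5)) : ℝ) = numPoints m := by
  simp [numPoints]

/-- The point `k` precedes the point `l` at a distance of at least `θ`. -/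
def gapRel {ι : Type*} (x : ι → ℝ) (θ : ℝ) (k l : ι) : Prop := θ ≤ x l - x k

theorem gapRel_asymm {ι : Type*} (x : ι → ℝ) {θ : ℝ} (hθ : 0 < θ) (k l : ι) :
    gapRel x θ k l → ¬ gapRel x θ l k := by
  unfold gapRel; intro h h'; linarith

theorem gapRel_anti {ι : Type*} {x : ι → ℝ} {θ θ' : ℝ} (h : θ ≤ θ') (k l : ι) :
    gapRel x θ' k l → gapRel x θ k l := h.trans

theorem isCut_gapRel_iff {ι : Type*} [Fintype ι] [DecidableEq ι] {A : ProperSubset ι}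
    {x : ι → ℝ} {θ : ℝ} : IsCut (gapRel x θ) A.1 ↔ θ ≤ gap A x :=
  le_gap_iff.symm

theorem four_le_card_cuts_gapRel {x : Fin (m + 5) → ℝ} {θ : ℝ} (h : θ ≤ secondGap x) :
    4 ≤ (cuts (gapRel x θ)).card := by
  obtain ⟨A, B, hne, hA, hB⟩ := le_secondGap_iff.1 h
  exact four_le_card_cuts (isCut_gapRel_iff.2 hA) (isCut_gapRel_iff.2 hB)
    (Subtype.coe_ne_coe.2 hne) A.2.1 A.2.2 B.2.1 B.2.2

/-- The vertex of the join attached to the configuration `x` at the level `θ ∈ (1, 2)`. The cuts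
of `gapRel x θ` list the points in blocks, and the number of these blocks is the column of the
vertex. Configurations with at most one wide gap are first split by the fixed subset `j`, which
adds a block; the shift between the two column formulas keeps the columns of the two cases apart,
and `Fin.clamp` is inert on the relevant levels. -/
def stepDatum (j : ProperSubset (Fin (m + 5))) (x : Fin (m + 5) → ℝ) (θ : ℝ) :
    Fin (m + 4) × Perm (Fin (m + 5)) :=
  open Classical in
  if 4 ≤ secondGap x + θ then
    (Fin.clamp ((cuts (gapRel x θ)).card - 4) (m + 3), listing (gapRel x θ))
  else
    (Fin.clamp ((cuts (splitBy j.1 (gapRel x θ))).card - 3) (m + 3),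
      listing (splitBy j.1 (gapRel x θ)))

variable {j : ProperSubset (Fin (m + 5))} {x : Fin (m + 5) → ℝ} {θ : ℝ}

theorem stepDatum_of_le (h : 4 ≤ secondGap x + θ) : stepDatum j x θ =
    (Fin.clamp ((cuts (gapRel x θ)).card - 4) (m + 3), listing (gapRel x θ)) :=
  if_pos h

theorem stepDatum_of_lt (h : ¬ 4 ≤ secondGap x + θ) : stepDatum j x θ =
    (Fin.clamp ((cuts (splitBy j.1 (gapRel x θ))).card - 3) (m + 3),
      listing (splitBy j.1 (gapRel x θ))) :=
  if_neg h

theorem stepDatum_fst_add_four (hθ : θ ∈ Set.Ioo (1 : ℝ) 2) (h : 4 ≤ secondGap x + θ) :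
    ((stepDatum j x θ).1 : ℕ) + 4 = (cuts (gapRel x θ)).card := by
  have lower : 4 ≤ (cuts (gapRel x θ)).card := four_le_card_cuts_gapRel (by linarith [hθ.2])
  have upper := card_cuts_le (gapRel_asymm x (show 0 < θ by linarith [hθ.1]))
  rw [Fintype.card_fin] at upper
  rw [stepDatum_of_le h, Fin.coe_clamp]
  omega

theorem stepDatum_fst_add_three (hθ : θ ∈ Set.Ioo (1 : ℝ) 2) (h : ¬ 4 ≤ secondGap x + θ) :
    ((stepDatum j x θ).1 : ℕ) + 3 = (cuts (splitBy j.1 (gapRel x θ))).card := by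
  have lower := three_le_card_cuts (isCut_splitBy_self j.1 (gapRel x θ)) j.2.1 j.2.2
  have upper := card_cuts_le
    (splitBy_asymm (J := j.1) (gapRel_asymm x (show 0 < θ by linarith [hθ.1])))
  rw [Fintype.card_fin] at upper
  rw [stepDatum_of_lt h, Fin.coe_clamp]
  omega

theorem stepDatum_congr {x' : Fin (m + 5) → ℝ} {θ' : ℝ}
    (hrel : ∀ k l, gapRel x θ k l ↔ gapRel x' θ' k l)
    (hsecond : 4 ≤ secondGap x + θ ↔ 4 ≤ secondGap x' + θ') :
    stepDatum j x θ = stepDatum j x' θ' := by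
  have : gapRel x θ = gapRel x' θ' := funext₂ fun k l => propext (hrel k l)
  unfold stepDatum
  simp only [this, hsecond]

theorem eventually_le_iff {X : Type*} [TopologicalSpace X] {f g : X → ℝ} (hf : Continuous f)
    (hg : Continuous g) {x : X} (hne : f x ≠ g x) : ∀ᶠ y in 𝓝 x, f y ≤ g y ↔ f x ≤ g x := by
  rcases hne.lt_or_gt with h | h
  · filter_upwards [hf.continuousAt.eventually_lt hg.continuousAt h] with y hy
    exact iff_of_true hy.le h.le
  · filter_upwards [hg.continuousAt.eventually_lt hf.continuousAt h] with y hy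
    exact iff_of_false hy.not_ge h.not_ge

theorem isStepFamily_stepDatum (j : ProperSubset (Fin (m + 5))) : IsStepFamily (stepDatum j) := by
  intro x
  refine ⟨Set.range (fun q : Fin (m + 5) × Fin (m + 5) => x q.2 - x q.1) ∪ {4 - secondGap x},
    (Set.finite_range _).union (Set.finite_singleton _), fun θ _ hθ => ?_⟩
  have rel_eventually : ∀ᶠ p : (Fin (m + 5) → ℝ) × ℝ in 𝓝 (x, θ),
      ∀ k l, gapRel p.1 p.2 k l ↔ gapRel x θ k l := by
    refine Filter.eventually_all.2 fun k => Filter.eventually_all.2 fun l => ?_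
    have level_ne : θ ≠ x l - x k := fun e => hθ (Or.inl ⟨(k, l), e.symm⟩)
    exact eventually_le_iff (x := (x, θ)) (f := fun p => p.2) (g := fun p => p.1 l - p.1 k)
      (by fun_prop) (by fun_prop) level_ne
  have second_ne : 4 ≠ secondGap x + θ := fun e => hθ (Or.inr (eq_sub_of_add_eq' e.symm))
  have continuous_sum : Continuous fun p : (Fin (m + 5) → ℝ) × ℝ => secondGap p.1 + p.2 := by
    fun_prop
  have second_eventually :=
    eventually_le_iff (x := (x, θ)) continuous_const continuous_sum second_ne
  filter_upwards [rel_eventually, second_eventually] with p hrel hsecond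
    using stepDatum_congr hrel hsecond

theorem stepDatum_snd_eq_of_le {θ' : ℝ} (hθ : θ ∈ Set.Ioo (1 : ℝ) 2) (hθ' : θ' ∈ Set.Ioo (1 : ℝ) 2)
    (hle : θ' ≤ θ) (fst_eq : (stepDatum j x θ).1 = (stepDatum j x θ').1) :
    (stepDatum j x θ).2 = (stepDatum j x θ').2 := by
  have : ((stepDatum j x θ).1 : ℕ) = (stepDatum j x θ').1 := congrArg _ fst_eq
  by_cases h : 4 ≤ secondGap x + θ <;> by_cases h' : 4 ≤ secondGap x + θ'
  · have := stepDatum_fst_add_four (j := j) hθ h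
    have := stepDatum_fst_add_four (j := j) hθ' h'
    rw [stepDatum_of_le h, stepDatum_of_le h']
    exact listing_eq_of_card_cuts_eq (gapRel_anti hle) (by omega)
  · exfalso
    have := stepDatum_fst_add_four (j := j) hθ h
    have := stepDatum_fst_add_three (j := j) hθ' h'
    have := Finset.card_le_card (cuts_mono (gapRel_anti (x := x) hle))
    have := card_cuts_le_card_cuts_splitBy
      (gapRel_asymm x (show 0 < θ' by linarith [hθ'.1])) j.1
    omega
  · exact absurd (h'.trans (by linarith)) h
  · have := stepDatum_fst_add_three (j := j) hθ h
    have := stepDatum_fst_add_three (j := j) hθ' h'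
    rw [stepDatum_of_lt h, stepDatum_of_lt h']
    exact listing_eq_of_card_cuts_eq (splitBy_mono (gapRel_anti hle)) (by omega)

/-- The join complex in which the equivariant map is constructed, for `m + 5` points on the
line. -/
abbrev Target (m : ℕ) : Type := JoinComplex (m + 4) (Perm (Fin (m + 5)))

/-- The point of the join whose barycentric coordinates are the proportions of levels
`θ ∈ (1, 2)` at which `stepDatum j x` takes a given value. -/
def levelMap (j : ProperSubset (Fin (m + 5))) (x : Fin (m + 5) → ℝ) : Target m := by
  refine ⟨stepWeight (stepDatum j x), stepWeight_nonneg _,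
    (isStepFamily_stepDatum j).sum_stepWeight x, fun c a b ha hb => ?_⟩
  obtain ⟨θ, hθ, h⟩ := exists_eq_of_stepWeight_ne_zero ha
  obtain ⟨θ', hθ', h'⟩ := exists_eq_of_stepWeight_ne_zero hb
  rcases le_total θ' θ with hle | hle
  · simpa only [h, h', true_imp_iff] using stepDatum_snd_eq_of_le (j := j) (x := x) hθ hθ' hle
  · simpa only [h, h', true_imp_iff, eq_comm] using
      stepDatum_snd_eq_of_le (j := j) (x := x) hθ' hθ hle

@[fun_prop]
theorem continuous_levelMap (j : ProperSubset (Fin (m + 5))) : Continuous (levelMap j) :=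
  (isStepFamily_stepDatum j).continuous_stepWeight.subtype_mk _

theorem levelMap_congr {x' : Fin (m + 5) → ℝ}
    (h : ∀ k l, ∀ c ∈ Set.Icc (1 : ℝ) 3, c ≤ x l - x k ↔ c ≤ x' l - x' k) :
    levelMap j x = levelMap j x' := by
  refine Subtype.ext (funext fun a => stepWeight_congr fun θ hθ => ?_)
  rw [stepDatum_congr (fun k l => h k l θ ⟨hθ.1.le, by linarith [hθ.2]⟩)]
  simp only [← sub_le_iff_le_add, le_secondGap_iff, le_gap_iff,
    h _ _ (4 - θ) ⟨by linarith [hθ.2], by linarith [hθ.1]⟩]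

theorem levelMap_eq_of_three_le (j' : ProperSubset (Fin (m + 5))) (h : 3 ≤ secondGap x) :
    levelMap j x = levelMap j' x := by
  refine Subtype.ext (funext fun a => stepWeight_congr fun θ hθ => ?_)
  have : 4 ≤ secondGap x + θ := by linarith [hθ.1]
  rw [stepDatum_of_le this, stepDatum_of_le this]

theorem levelMap_last_eq_zero (h : 3 ≤ secondGap x) (g : Perm (Fin (m + 5))) :
    (levelMap j x).1 (Fin.last (m + 3), g) = 0 := by
  by_contra hne
  obtain ⟨θ, hθ, e⟩ := exists_eq_of_stepWeight_ne_zero hne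
  have column := stepDatum_fst_add_four (j := j) hθ (show 4 ≤ secondGap x + θ by linarith [hθ.1])
  have upper := card_cuts_le (gapRel_asymm x (show 0 < θ by linarith [hθ.1]))
  rw [e, Fin.val_last] at column
  rw [Fintype.card_fin] at upper
  omega

/-- Every pair of points whose order is reversed by `π⁻¹` is at distance at least `M`, so that
the relabelling `x ∘ π` only reorders points that are far apart. -/
def InversionsFar {n : ℕ} (M : ℝ) (π : Perm (Fin n)) (x : Fin n → ℝ) : Prop :=
  ∀ i j, i < j → π⁻¹ j < π⁻¹ i → M ≤ |x i - x j|

theorem InversionsFar.inv_lt_inv {n : ℕ} {M : ℝ} {π : Perm (Fin n)} {x : Fin n → ℝ}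
    (h : InversionsFar M π x) {i j : Fin n} (hij : i < j) (hx : |x i - x j| < M) :
    π⁻¹ i < π⁻¹ j :=
  (le_of_not_gt fun hlt => (h i j hij hlt).not_gt hx).lt_of_ne (π⁻¹.injective.ne hij.ne)

theorem abs_sub_le_of_forall_isCut {i j : Fin (m + 5)} (hθ : θ ≤ 2)
    (h : ∀ A, IsCut (gapRel x θ) A → (i ∈ A ↔ j ∈ A)) : |x i - x j| ≤ 2 * numPoints m := by
  have sub_le (i j : Fin (m + 5)) (h : ∀ A, IsCut (gapRel x θ) A → (i ∈ A ↔ j ∈ A)) :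
      x j - x i ≤ 2 * numPoints m := by
    by_contra! hlt
    obtain ⟨A, hA, hi, hj⟩ := exists_lt_gap_of_card_mul_lt (x := x) (i := i) (j := j) (h := 2)
      (by norm_num) (by rw [card_fin_cast]; linarith)
    exact hj ((h A.1 (isCut_gapRel_iff.2 (hθ.trans hA.le))).1 hi)
  exact abs_sub_le_iff.2 ⟨sub_le j i fun A hA => (h A hA).symm, sub_le i j h⟩

variable {M : ℝ} {π : Perm (Fin (m + 5))}

theorem InversionsFar.listing_gapRel (h : InversionsFar M π x) (hM : 2 * numPoints m < M)
    (hθ : θ ∈ Set.Ioo (1 : ℝ) 2) :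
    listing (gapRel x θ) = π * listing (gapRel (x ∘ π) θ) := by
  have asymm := gapRel_asymm x (show 0 < θ by linarith [hθ.1])
  refine listing_eq_mul_listing_comp π fun i k hrank hik =>
    h.inv_lt_inv hik ((abs_sub_le_of_forall_isCut hθ.2.le fun A hA => ?_).trans_lt hM)
  by_contra hne
  rcases (by tauto : (i ∈ A ∧ k ∉ A) ∨ (k ∈ A ∧ i ∉ A)) with ⟨hi, hk⟩ | ⟨hk, hi⟩
  · exact (hA.blockRank_lt asymm hi hk).ne hrank
  · exact (hA.blockRank_lt asymm hk hi).ne' hrank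

theorem splitBy_inv_smul_gapRel_comp (j : ProperSubset (Fin (m + 5))) :
    splitBy (π⁻¹ • j).1 (gapRel (x ∘ π) θ) =
      fun k l => splitBy j.1 (gapRel x θ) (π k) (π l) := by
  funext k l
  simp only [splitBy, ← ProperSubset.inv_apply_mem (π := π⁻¹), inv_inv]
  rfl

theorem InversionsFar.listing_splitBy (h : InversionsFar M π x) (hM : 2 * numPoints m < M)
    (hθ : θ ∈ Set.Ioo (1 : ℝ) 2) (j : ProperSubset (Fin (m + 5))) :
    listing (splitBy j.1 (gapRel x θ)) =
      π * listing (splitBy (π⁻¹ • j).1 (gapRel (x ∘ π) θ)) := by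
  have asymm := gapRel_asymm x (show 0 < θ by linarith [hθ.1])
  rw [splitBy_inv_smul_gapRel_comp]
  refine listing_eq_mul_listing_comp π fun i k hrank hik =>
    h.inv_lt_inv hik ((abs_sub_le_of_forall_isCut hθ.2.le fun A hA => ?_).trans_lt hM)
  by_contra hne
  rcases (by tauto : (i ∈ A ∧ k ∉ A) ∨ (k ∈ A ∧ i ∉ A)) with ⟨hi, hk⟩ | ⟨hk, hi⟩
  · exact hA.blockRank_splitBy_ne asymm hi hk hrank
  · exact hA.blockRank_splitBy_ne asymm hk hi hrank.symm

theorem InversionsFar.stepDatum_eq (h : InversionsFar M π x) (hM : 2 * numPoints m < M)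
    (j : ProperSubset (Fin (m + 5))) (hθ : θ ∈ Set.Ioo (1 : ℝ) 2) :
    stepDatum j x θ = ((stepDatum (π⁻¹ • j) (x ∘ π) θ).1,
      π * (stepDatum (π⁻¹ • j) (x ∘ π) θ).2) := by
  by_cases hb : 4 ≤ secondGap x + θ
  · rw [stepDatum_of_le hb, stepDatum_of_le ((secondGap_comp π x).symm ▸ hb),
      h.listing_gapRel hM hθ]
    exact Prod.ext (congrArg (fun c => Fin.clamp (c - 4) (m + 3)) (card_cuts_comp _ _).symm) rfl
  · rw [stepDatum_of_lt hb, stepDatum_of_lt ((secondGap_comp π x).symm ▸ hb),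
      h.listing_splitBy hM hθ, splitBy_inv_smul_gapRel_comp, card_cuts_comp]

theorem InversionsFar.levelMap_eq (h : InversionsFar M π x) (hM : 2 * numPoints m < M)
    (j : ProperSubset (Fin (m + 5))) : levelMap j x = π • levelMap (π⁻¹ • j) (x ∘ π) := by
  refine Subtype.ext (funext fun ⟨c, g⟩ => stepWeight_congr fun θ hθ => ?_)
  rw [h.stepDatum_eq hM j hθ, Prod.ext_iff, Prod.ext_iff]
  simp only [eq_inv_mul_iff_mul_eq]

end LevelMap

variable {m : ℕ}

/-- Width of the band of spreads, starting at `0`, in which the maps on shells vary: on a shell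
whose block has spread at least `innerSpread m`, the model map is constant. -/
def innerSpread (m : ℕ) : ℝ := 4 * numPoints m

/-- Size of the off-centre displacements allowed when families are folded along a line. -/
def foldRadius (m : ℕ) : ℝ := (1 + numPoints m) * innerSpread m

/-- The common radius of support of all families of maps on shells. -/
def supportRadius (m : ℕ) : ℝ := (3 + 2 * numPoints m) * foldRadius m

/-- The bound on the spread of the blocks in a shell. -/
def outerSpread (m : ℕ) : ℝ := numPoints m * supportRadius m

/-- The gap between the two blocks beyond which a configuration is counted as lying on a shell. -/
def shellGap (m : ℕ) : ℝ := outerSpread m + 2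

theorem twenty_le_innerSpread (m : ℕ) : 20 ≤ innerSpread m := by
  unfold innerSpread; linarith [five_le_numPoints m]

theorem six_mul_innerSpread_le (m : ℕ) : 6 * innerSpread m ≤ foldRadius m := by
  unfold foldRadius; nlinarith [five_le_numPoints m, twenty_le_innerSpread m]

theorem eight_mul_foldRadius_le (m : ℕ) : 8 * foldRadius m ≤ supportRadius m := by
  unfold supportRadius
  nlinarith [five_le_numPoints m, twenty_le_innerSpread m, six_mul_innerSpread_le m]

theorem five_mul_supportRadius_le (m : ℕ) : 5 * supportRadius m ≤ outerSpread m := by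
  unfold outerSpread
  nlinarith [five_le_numPoints m, twenty_le_innerSpread m, six_mul_innerSpread_le m,
    eight_mul_foldRadius_le m]

theorem innerSpread_lt_supportRadius (m : ℕ) : innerSpread m < supportRadius m := by
  linarith [twenty_le_innerSpread m, six_mul_innerSpread_le m, eight_mul_foldRadius_le m]

theorem supportRadius_pos (m : ℕ) : 0 < supportRadius m := by
  linarith [twenty_le_innerSpread m, innerSpread_lt_supportRadius m]

theorem hundred_mul_numPoints_le (m : ℕ) : 100 * numPoints m ≤ outerSpread m := by
  unfold outerSpread
  nlinarith [five_le_numPoints m, twenty_le_innerSpread m, six_mul_innerSpread_le m,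
    eight_mul_foldRadius_le m]

theorem outerSpread_pos (m : ℕ) : 0 < outerSpread m := by
  linarith [hundred_mul_numPoints_le m, five_le_numPoints m]

/-- The piecewise linear function rising from `0` to `1` on the unit interval. -/
def ramp (r : ℝ) : ℝ := max 0 (min 1 r)

theorem ramp_nonneg (r : ℝ) : 0 ≤ ramp r := le_max_left _ _

theorem ramp_le_one (r : ℝ) : ramp r ≤ 1 := max_le zero_le_one (min_le_left _ _)

theorem ramp_of_nonpos {r : ℝ} (h : r ≤ 0) : ramp r = 0 :=
  max_eq_left ((min_le_right _ _).trans h)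

theorem ramp_of_one_le {r : ℝ} (h : 1 ≤ r) : ramp r = 1 := by
  rw [ramp, min_eq_left h, max_eq_right zero_le_one]

theorem pos_of_ramp_ne_zero {r : ℝ} (h : ramp r ≠ 0) : 0 < r :=
  not_le.1 (mt ramp_of_nonpos h)

@[fun_prop]
theorem continuous_ramp : Continuous ramp := by unfold ramp; fun_prop

/-- The cutoff function of the shell of `A`: the configurations whose points in `A` lie far below
the others, while the two blocks have bounded spread, not too close to `0`. -/
def shellCutoff (A : ProperSubset (Fin (m + 5))) (x : Fin (m + 5) → ℝ) : ℝ :=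
  ramp (gap A x - shellGap m) *
    (ramp (blockSpread A.1 x / numPoints m - 3) * ramp (outerSpread m + 1 - blockSpread A.1 x))

section ShellCutoff

variable {A A' : ProperSubset (Fin (m + 5))} {x : Fin (m + 5) → ℝ}

@[fun_prop]
theorem continuous_shellCutoff (A : ProperSubset (Fin (m + 5))) : Continuous (shellCutoff A) := by
  unfold shellCutoff; fun_prop

theorem shellCutoff_nonneg (A : ProperSubset (Fin (m + 5))) (x) : 0 ≤ shellCutoff A x :=
  mul_nonneg (ramp_nonneg _) (mul_nonneg (ramp_nonneg _) (ramp_nonneg _))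

theorem shellCutoff_le_one (A : ProperSubset (Fin (m + 5))) (x) : shellCutoff A x ≤ 1 :=
  mul_le_one₀ (ramp_le_one _) (mul_nonneg (ramp_nonneg _) (ramp_nonneg _))
    (mul_le_one₀ (ramp_le_one _) (ramp_nonneg _) (ramp_le_one _))

theorem bounds_of_shellCutoff_ne_zero (h : shellCutoff A x ≠ 0) :
    shellGap m < gap A x ∧ 3 * numPoints m < blockSpread A.1 x ∧
      blockSpread A.1 x < outerSpread m + 1 := by
  have gap_pos := pos_of_ramp_ne_zero (left_ne_zero_of_mul h)
  have lower_pos := pos_of_ramp_ne_zero (left_ne_zero_of_mul (right_ne_zero_of_mul h))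
  have upper_pos := pos_of_ramp_ne_zero (right_ne_zero_of_mul (right_ne_zero_of_mul h))
  have n_pos : 0 < numPoints m := by linarith [five_le_numPoints m]
  exact ⟨by linarith, (lt_div_iff₀ n_pos).1 (by linarith), by linarith⟩

theorem shellCutoff_eq_one (hgap : shellGap m + 1 ≤ gap A x)
    (hinner : innerSpread m ≤ blockSpread A.1 x) (houter : blockSpread A.1 x ≤ outerSpread m) :
    shellCutoff A x = 1 := by
  have n_pos : 0 < numPoints m := by linarith [five_le_numPoints m]
  have : 4 ≤ blockSpread A.1 x / numPoints m := (le_div_iff₀ n_pos).2 hinner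
  rw [shellCutoff, ramp_of_one_le (by linarith), ramp_of_one_le (by linarith),
    ramp_of_one_le (by linarith), mul_one, mul_one]

theorem shellCutoff_eq_zero_of_ne (hne : A ≠ A') (hgap : shellGap m < gap A x) :
    shellCutoff A' x = 0 := by
  by_contra h
  obtain ⟨hgap', -, hs'⟩ := bounds_of_shellCutoff_ne_zero h
  have hL := hundred_mul_numPoints_le m
  have hn := five_le_numPoints m
  unfold shellGap at *
  linarith [gap_le_blockSpread_of_ne hne (x := x) (by linarith)]

theorem shellCutoff_eq_zero_of_ne_zero (h : shellCutoff A x ≠ 0) :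
    ∀ A', A ≠ A' → shellCutoff A' x = 0 :=
  fun _ hne => shellCutoff_eq_zero_of_ne hne (bounds_of_shellCutoff_ne_zero h).1

theorem three_le_secondGap (hgap : 3 ≤ gap A x) (hs : 3 * numPoints m < blockSpread A.1 x) :
    3 ≤ secondGap x :=
  le_secondGap_of_lt_blockSpread zero_le_three hgap (by rw [card_fin_cast]; linarith)

theorem three_le_secondGap_of_shellCutoff_ne_zero (h : shellCutoff A x ≠ 0) : 3 ≤ secondGap x := by
  obtain ⟨hgap, hs, -⟩ := bounds_of_shellCutoff_ne_zero h
  unfold shellGap at hgap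
  exact three_le_secondGap
    (by linarith [hundred_mul_numPoints_le m, five_le_numPoints m]) hs

theorem shellCutoff_smul (π : Perm (Fin (m + 5))) (A : ProperSubset (Fin (m + 5))) (x) :
    shellCutoff (π • A) x = shellCutoff A (x ∘ π) := by
  rw [shellCutoff, gap_smul, blockSpread_smul, shellCutoff]

end ShellCutoff

namespace JoinComplex

variable {t : ℕ} {α : Type*} [Fintype α] [DecidableEq α]

/-- The vertex of the join complex given by one point of one of the joined copies of `α`. -/
def vertex (a : Fin t × α) : JoinComplex t α :=
  ⟨Pi.single a 1, fun b => (Pi.single_nonneg.2 zero_le_one : (0 : Fin t × α → ℝ) ≤ _) b,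
    Finset.sum_pi_single' a 1 _ |>.trans (if_pos (Finset.mem_univ a)), fun c g h hg hh => by
      have hg := of_not_not fun hne => hg (Pi.single_eq_of_ne hne _)
      have hh := of_not_not fun hne => hh (Pi.single_eq_of_ne hne _)
      exact congrArg Prod.snd (hg.trans hh.symm)⟩

theorem smul_vertex {G : Type*} [Fintype G] [DecidableEq G] [Group G] (σ : G) (c : Fin t) (g : G) :
    σ • vertex (c, g) = vertex (c, σ * g) := by
  refine Subtype.ext (funext fun ⟨d, h⟩ => ?_)
  simp only [smul_apply, vertex, Pi.single_apply, Prod.mk.injEq, inv_mul_eq_iff_eq_mul]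

theorem segment_vertex_mem (w : JoinComplex t α) {c : Fin t} (hw : ∀ h, w.1 (c, h) = 0) (g : α)
    {s : ℝ} (hs₀ : 0 ≤ s) (hs₁ : s ≤ 1) :
    ∃ v : JoinComplex t α, v.1 = fun a => (1 - s) * w.1 a + s * (vertex (c, g)).1 a := by
  refine ⟨⟨_, fun a => ?_, ?_, fun d h h' ha hb => ?_⟩, rfl⟩
  · exact add_nonneg (mul_nonneg (sub_nonneg.2 hs₁) (w.2.1 a)) (mul_nonneg hs₀ ((vertex _).2.1 a))
  · rw [Finset.sum_add_distrib, ← Finset.mul_sum, ← Finset.mul_sum, w.2.2.1,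
      (vertex (c, g)).2.2.1]
    ring
  · by_cases hd : d = c
    · subst hd
      simp only [hw, mul_zero, zero_add] at ha hb
      exact (vertex (d, g)).2.2.2 d h h' (right_ne_zero_of_mul ha) (right_ne_zero_of_mul hb)
    · have vertex_apply (h) : (vertex (c, g)).1 (d, h) = 0 :=
        Pi.single_eq_of_ne (fun e => hd (congrArg Prod.fst e)) _
      simp only [vertex_apply, mul_zero, add_zero] at ha hb
      exact w.2.2.2 d h h' (right_ne_zero_of_mul ha) (right_ne_zero_of_mul hb)

end JoinComplex

/-- The vertex to which the model map is pushed on the shell of an initial segment. -/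
def basepoint (m : ℕ) : Target m := JoinComplex.vertex (Fin.last (m + 3), 1)

/-- The barycentric coordinates of `modelMap`: `levelMap` is pushed, on the shell of each `A`,
onto the vertex `shuffle A • basepoint m`. -/
def modelWeight (j : ProperSubset (Fin (m + 5))) (x : Fin (m + 5) → ℝ)
    (a : Fin (m + 4) × Perm (Fin (m + 5))) : ℝ :=
  (1 - ∑ A, shellCutoff A x) * (levelMap j x).1 a +
    ∑ A : ProperSubset (Fin (m + 5)), shellCutoff A x * (shuffle A.1 • basepoint m).1 a

section ModelMap

variable {A : ProperSubset (Fin (m + 5))} {x x' : Fin (m + 5) → ℝ}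

theorem modelWeight_eq (h : ∀ A', A ≠ A' → shellCutoff A' x = 0) (j) :
    modelWeight j x = fun a => (1 - shellCutoff A x) * (levelMap j x).1 a +
      shellCutoff A x * (shuffle A.1 • basepoint m).1 a := by
  funext a
  rw [modelWeight, Fintype.sum_eq_single A fun B hB => h B hB.symm,
    Fintype.sum_eq_single A fun B hB => by rw [h B hB.symm, zero_mul]]

theorem exists_val_eq_modelWeight (j : ProperSubset (Fin (m + 5))) (x) :
    ∃ v : Target m, v.1 = modelWeight j x := by
  by_cases h : ∀ A, shellCutoff A x = 0
  · exact ⟨levelMap j x, funext fun a => by simp [modelWeight, h]⟩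
  · push Not at h
    obtain ⟨A, hA⟩ := h
    rw [modelWeight_eq (shellCutoff_eq_zero_of_ne_zero hA), basepoint, JoinComplex.smul_vertex]
    exact JoinComplex.segment_vertex_mem _
      (levelMap_last_eq_zero (three_le_secondGap_of_shellCutoff_ne_zero hA)) _
      (shellCutoff_nonneg A x) (shellCutoff_le_one A x)

/-- The map from configurations on the line to the join whose behaviour on the shells is
controlled; it depends on a proper subset `j` only where at most one gap is large. -/
def modelMap (j : ProperSubset (Fin (m + 5))) (x : Fin (m + 5) → ℝ) : Target m :=
  ⟨modelWeight j x, by obtain ⟨v, hv⟩ := exists_val_eq_modelWeight j x; exact hv ▸ v.2⟩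

@[fun_prop]
theorem continuous_modelMap (j : ProperSubset (Fin (m + 5))) : Continuous (modelMap j) := by
  refine Continuous.subtype_mk (f := modelWeight j) (continuous_pi fun a => ?_) _
  have : Continuous fun x => (levelMap j x).1 a :=
    (continuous_apply a).comp (continuous_subtype_val.comp (continuous_levelMap j))
  unfold modelWeight
  fun_prop

theorem modelMap_of_shell (hgap : shellGap m + 1 ≤ gap A x)
    (hinner : innerSpread m ≤ blockSpread A.1 x) (houter : blockSpread A.1 x ≤ outerSpread m) (j) :
    modelMap j x = shuffle A.1 • basepoint m := by
  have cutoff := shellCutoff_eq_one hgap hinner houter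
  have others := shellCutoff_eq_zero_of_ne_zero (A := A) (x := x) (cutoff ▸ one_ne_zero)
  refine Subtype.ext ((modelWeight_eq others j).trans (funext fun a => ?_))
  rw [cutoff, sub_self, zero_mul, zero_add, one_mul]

theorem modelMap_eq_of_three_le (h : 3 ≤ secondGap x) (j j') : modelMap j x = modelMap j' x := by
  refine Subtype.ext (funext fun a => ?_)
  simp only [modelMap, modelWeight, levelMap_eq_of_three_le j' h]

theorem blockSpread_congr (h : ∀ i j, (i ∈ A.1 ↔ j ∈ A.1) → x i - x j = x' i - x' j) :
    blockSpread A.1 x = blockSpread A.1 x' :=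
  eq_of_forall_ge_iff fun c => by
    simp only [blockSpread_le_iff]
    exact forall₂_congr fun i j => forall_congr' fun hij => by rw [h i j hij]

theorem modelMap_congr (hgap : shellGap m + 1 ≤ gap A x) (hgap' : shellGap m + 1 ≤ gap A x')
    (hd : ∀ i j, (i ∈ A.1 ↔ j ∈ A.1) → x i - x j = x' i - x' j) (j) :
    modelMap j x = modelMap j x' := by
  have three_lt : 3 < shellGap m := by
    unfold shellGap; linarith [hundred_mul_numPoints_le m, five_le_numPoints m]
  have spread_eq := blockSpread_congr hd
  have level_eq : levelMap j x = levelMap j x' := levelMap_congr fun k l c hc => by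
    by_cases hk : k ∈ A.1 <;> by_cases hl : l ∈ A.1
    · rw [hd l k (by tauto)]
    · exact iff_of_true (by linarith [gap_le (x := x) hk hl, hc.2])
        (by linarith [gap_le (x := x') hk hl, hc.2])
    · exact iff_of_false (by linarith [gap_le (x := x) hl hk, hc.1])
        (by linarith [gap_le (x := x') hl hk, hc.1])
    · rw [hd l k (by tauto)]
  have cutoff_eq : shellCutoff A x = shellCutoff A x' := by
    rw [shellCutoff, shellCutoff, spread_eq,
      ramp_of_one_le (r := gap A x - shellGap m) (by linarith),
      ramp_of_one_le (r := gap A x' - shellGap m) (by linarith)]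
  have weight_eq (y) (hy : shellGap m + 1 ≤ gap A y) :=
    modelWeight_eq (x := y) fun A' hne => shellCutoff_eq_zero_of_ne hne (by linarith)
  refine Subtype.ext ((weight_eq x hgap j).trans ((weight_eq x' hgap' j).trans ?_).symm)
  rw [level_eq, cutoff_eq]

open scoped Pointwise in
theorem InversionsFar.shuffle_smul {M : ℝ} (hM : outerSpread m + 1 ≤ M) {π : Perm (Fin (m + 5))}
    (h : InversionsFar M π x) (hA : shellCutoff (π • A) x ≠ 0) :
    shuffle (π • A).1 = π * shuffle A.1 := by
  rw [shuffle_eq_mul_shuffle π fun i k hik hlt => h.inv_lt_inv hlt ?_, ProperSubset.coe_smul,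
    inv_smul_smul]
  linarith [abs_sub_le_blockSpread x hik, bounds_of_shellCutoff_ne_zero hA]

theorem InversionsFar.modelMap_eq {M : ℝ} (hM : outerSpread m + 1 ≤ M) {π : Perm (Fin (m + 5))}
    (h : InversionsFar M π x) (j) :
    modelMap j x = π • modelMap (π⁻¹ • j) (x ∘ π) := by
  have level_eq := h.levelMap_eq
    (by linarith [hundred_mul_numPoints_le m, five_le_numPoints m]) j
  have cutoff_sum : ∑ A, shellCutoff A x = ∑ A, shellCutoff A (x ∘ π) := by
    rw [← Equiv.sum_comp (MulAction.toPerm π)]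
    exact Finset.sum_congr rfl fun A _ => shellCutoff_smul π A x
  refine Subtype.ext (funext fun ⟨c, g⟩ => ?_)
  rw [JoinComplex.smul_apply]
  simp only [modelMap, modelWeight]
  rw [level_eq, JoinComplex.smul_apply, cutoff_sum]
  congr 1
  rw [← Equiv.sum_comp (MulAction.toPerm π)]
  refine Finset.sum_congr rfl fun A _ => ?_
  rw [MulAction.toPerm_apply, shellCutoff_smul]
  by_cases hA : shellCutoff A (x ∘ π) = 0
  · rw [hA, zero_mul, zero_mul]
  · rw [h.shuffle_smul hM (by rwa [shellCutoff_smul]), mul_smul, JoinComplex.smul_apply]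

end ModelMap

section Charts

open scoped Pointwise

variable {m : ℕ}

/-- The consecutive pairs `(i, i + 1)` of positions lying on the same side of the cut between the
first `a` positions and the others. -/
abbrev InBlockIdx (m a : ℕ) : Type := {i : Fin (m + 4) // (i : ℕ) + 1 ≠ a}

theorem InBlockIdx.succ_lt_iff {a : ℕ} (i : InBlockIdx m a) :
    (i.1.succ : ℕ) < a ↔ (i.1.castSucc : ℕ) < a := by
  have := i.2
  simp only [Fin.val_succ, Fin.val_castSucc]
  omega

instance (a : ℕ) : Nontrivial (InBlockIdx m a) := by
  rcases eq_or_ne a 1 with rfl | h1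
  · exact ⟨⟨1, by simp⟩, ⟨2, by simp [Nat.mod_eq_of_lt (show 2 < m + 4 by omega)]⟩,
      by simp [Fin.ext_iff, Nat.mod_eq_of_lt (show 2 < m + 4 by omega)]⟩
  · rcases eq_or_ne a 2 with rfl | h2
    · exact ⟨⟨⟨0, by omega⟩, by simp⟩, ⟨⟨2, by omega⟩, by simp⟩, by simp⟩
    · exact ⟨⟨⟨0, by omega⟩, by simpa using h1.symm⟩, ⟨⟨1, by omega⟩, by simpa using h2.symm⟩,
        by simp⟩

/-- The coordinates along the shell of `A`: the differences of consecutive points of the same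
block. -/
def chart (A : ProperSubset (Fin (m + 5))) (x : Fin (m + 5) → ℝ) (i : InBlockIdx m A.1.card) : ℝ :=
  x (shuffle A.1 i.1.succ) - x (shuffle A.1 i.1.castSucc)

variable {A : ProperSubset (Fin (m + 5))} {x x' : Fin (m + 5) → ℝ}

@[fun_prop]
theorem continuous_chart (A : ProperSubset (Fin (m + 5))) : Continuous (chart A) := by
  unfold chart; fun_prop

theorem chart_add (A : ProperSubset (Fin (m + 5))) (x y : Fin (m + 5) → ℝ) :
    chart A (x + y) = chart A x + chart A y := by
  funext i; simp only [chart, Pi.add_apply]; ring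

theorem chart_smul (A : ProperSubset (Fin (m + 5))) (s : ℝ) (x : Fin (m + 5) → ℝ) :
    chart A (s • x) = s • chart A x := by
  funext i; simp only [chart, Pi.smul_apply, smul_eq_mul]; ring

theorem abs_sub_le_of_abs_step_le {N c : ℕ} {v : Fin (N + 1) → ℝ} {L : ℝ} (hL : 0 ≤ L)
    (h : ∀ i : Fin N, (i : ℕ) + 1 ≠ c → |v i.succ - v i.castSucc| ≤ L) {a b : Fin (N + 1)}
    (hab : (a : ℕ) < c ↔ (b : ℕ) < c) : |v b - v a| ≤ N * L := by
  have of_le (b : Fin (N + 1)) :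
      ∀ a ≤ b, ((a : ℕ) < c ↔ (b : ℕ) < c) → |v b - v a| ≤ b * L := by
    induction b using Fin.induction with
    | zero =>
      intro a ha _
      rw [Fin.le_zero_iff.1 ha, sub_self, abs_zero]
      positivity
    | succ i ih =>
      intro a ha hc
      rw [Fin.le_def, Fin.val_succ] at ha
      rw [Fin.val_succ] at hc
      rcases ha.eq_or_lt with ha | ha
      · rw [show a = i.succ from Fin.ext ha, sub_self, abs_zero]
        positivity
      · have before := ih a (Nat.lt_succ_iff.1 ha) (by rw [Fin.val_castSucc]; omega)
        have step := h i (by omega)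
        have := abs_sub_le (v i.succ) (v i.castSucc) (v a)
        rw [Fin.val_castSucc] at before
        push_cast [Fin.val_succ]
        linarith
  have val_mul_le (b : Fin (N + 1)) : (b : ℕ) * L ≤ N * L :=
    mul_le_mul_of_nonneg_right (Nat.cast_le.2 (Nat.lt_succ_iff.1 b.2)) hL
  rcases le_total a b with hle | hle
  · exact (of_le b a hle hab).trans (val_mul_le b)
  · exact abs_sub_comm (v a) (v b) ▸ (of_le a b hle hab.symm).trans (val_mul_le a)

theorem abs_sub_le_numPoints_mul {c : ℕ} {v : Fin (m + 5) → ℝ} {L : ℝ} (hL : 0 ≤ L)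
    (h : ∀ i : InBlockIdx m c, |v i.1.succ - v i.1.castSucc| ≤ L) {a b : Fin (m + 5)}
    (hab : (a : ℕ) < c ↔ (b : ℕ) < c) : |v b - v a| ≤ numPoints m * L :=
  (abs_sub_le_of_abs_step_le hL (fun i hi => h ⟨i, hi⟩) hab).trans
    (mul_le_mul_of_nonneg_right (by simp only [numPoints]; push_cast; linarith) hL)

theorem blockSpread_le_of_abs_chart_le {L : ℝ} (hL : 0 ≤ L) (h : ∀ i, |chart A x i| ≤ L) :
    blockSpread A.1 x ≤ numPoints m * L := by
  refine blockSpread_le_iff.2 fun i j hij => ?_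
  have := abs_sub_le_numPoints_mul (v := x ∘ shuffle A.1) hL h
    (a := (shuffle A.1)⁻¹ j) (b := (shuffle A.1)⁻¹ i)
    (by rw [← shuffle_mem_iff, ← shuffle_mem_iff]; simp [hij])
  simp only [Function.comp_apply, Perm.inv_def, apply_symm_apply] at this
  exact (le_abs_self _).trans this

theorem blockSpread_lt_of_abs_chart_lt {L : ℝ} (h : ∀ i, |chart A x i| < L) :
    blockSpread A.1 x < numPoints m * L := by
  obtain ⟨i, hi⟩ := Finite.exists_max fun i => |chart A x i|
  exact (blockSpread_le_of_abs_chart_le (abs_nonneg _) hi).trans_lt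
    (mul_lt_mul_of_pos_left (h i) (by linarith [five_le_numPoints m]))

theorem shuffle_succ_mem_iff (A : Finset (Fin (m + 5))) (i : InBlockIdx m A.card) :
    shuffle A i.1.succ ∈ A ↔ shuffle A i.1.castSucc ∈ A := by
  rw [shuffle_mem_iff, shuffle_mem_iff, i.succ_lt_iff]

theorem abs_chart_le_blockSpread (A : ProperSubset (Fin (m + 5))) (x) (i) :
    |chart A x i| ≤ blockSpread A.1 x :=
  abs_sub_le_blockSpread x (shuffle_succ_mem_iff A.1 i)

/-- The configuration `(0, 1, …, m + 4)`, a direction along which every chart coordinate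
increases. -/
def staircase (m : ℕ) : Fin (m + 5) → ℝ := fun i => (i : ℕ)

theorem one_le_chart_staircase (A : ProperSubset (Fin (m + 5))) (i) :
    1 ≤ chart A (staircase m) i := by
  have increasing : shuffle A.1 i.1.castSucc < shuffle A.1 i.1.succ := by
    have := shuffle_lt (A := A.1) (Fin.castSucc_lt_succ (i := i.1))
    have := shuffle_succ_mem_iff A.1 i
    tauto
  rw [chart, le_sub_iff_add_le', staircase, staircase]
  exact_mod_cast increasing

theorem abs_staircase_sub_le (i j : Fin (m + 5)) :
    |staircase m i - staircase m j| ≤ numPoints m := by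
  have bounds (i : Fin (m + 5)) : 0 ≤ staircase m i ∧ staircase m i ≤ numPoints m :=
    ⟨Nat.cast_nonneg _, by unfold staircase numPoints; exact_mod_cast i.2.le⟩
  exact abs_sub_le_iff.2 ⟨by linarith [bounds i, bounds j], by linarith [bounds i, bounds j]⟩

theorem chart_staircase_le (A : ProperSubset (Fin (m + 5))) (i) :
    chart A (staircase m) i ≤ numPoints m :=
  (le_abs_self _).trans (abs_staircase_sub_le _ _)

end Charts

section LinkMap

open scoped Pointwise

variable {m : ℕ} {A : ProperSubset (Fin (m + 5))}

/-- The initial segment with as many elements as `A`. -/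
def initialSegment (A : ProperSubset (Fin (m + 5))) : ProperSubset (Fin (m + 5)) :=
  (shuffle A.1)⁻¹ • A

theorem mem_initialSegment {i : Fin (m + 5)} :
    i ∈ (initialSegment A).1 ↔ (i : ℕ) < A.1.card := by
  rw [initialSegment, ← ProperSubset.inv_apply_mem, inv_inv, shuffle_mem_iff]

theorem shuffle_initialSegment (A : ProperSubset (Fin (m + 5))) :
    shuffle (initialSegment A).1 = 1 :=
  shuffle_eq_one fun _ _ hij hj => mem_initialSegment.2 (lt_trans hij (mem_initialSegment.1 hj))

/-- The steps of `spacedConfig q`: those prescribed by `q`, and one large jump. -/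
def spacedSteps {a : ℕ} (q : InBlockIdx m a → ℝ) (i : Fin (m + 4)) : ℝ :=
  if h : (i : ℕ) + 1 ≠ a then q ⟨i, h⟩ else shellGap m + 1 + 2 * (numPoints m * ∑ i, |q i|)

/-- A configuration on the shell of an initial segment with prescribed chart coordinates. -/
def spacedConfig {a : ℕ} (q : InBlockIdx m a → ℝ) : Fin (m + 5) → ℝ :=
  Fin.partialSum (spacedSteps q)

theorem spacedConfig_succ_sub {a : ℕ} (q : InBlockIdx m a → ℝ) (i : Fin (m + 4)) :
    spacedConfig q i.succ - spacedConfig q i.castSucc = spacedSteps q i := by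
  rw [spacedConfig, Fin.partialSum_succ, add_sub_cancel_left]

theorem spacedConfig_step {a : ℕ} (q : InBlockIdx m a → ℝ) (i : InBlockIdx m a) :
    spacedConfig q i.1.succ - spacedConfig q i.1.castSucc = q i := by
  rw [spacedConfig_succ_sub, spacedSteps, dif_pos i.2]

@[fun_prop]
theorem continuous_spacedConfig {a : ℕ} :
    Continuous (spacedConfig : (InBlockIdx m a → ℝ) → Fin (m + 5) → ℝ) := by
  refine continuous_pi fun k => ?_
  induction k using Fin.induction with
  | zero => simpa only [spacedConfig, Fin.partialSum_zero] using continuous_const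
  | succ i ih =>
    simp only [spacedConfig, Fin.partialSum_succ] at ih ⊢
    refine ih.add ?_
    unfold spacedSteps
    split_ifs <;> fun_prop

theorem shellGap_lt_gap_spacedConfig (A : ProperSubset (Fin (m + 5)))
    (q : InBlockIdx m A.1.card → ℝ) : shellGap m + 1 ≤ gap (initialSegment A) (spacedConfig q) := by
  refine le_gap_iff.2 fun k hk l hl => ?_
  rw [mem_initialSegment] at hk hl
  have near {a b : Fin (m + 5)} (hab : (a : ℕ) < A.1.card ↔ (b : ℕ) < A.1.card) :=
    abs_le.1 <| abs_sub_le_numPoints_mul (Finset.sum_nonneg fun i _ => abs_nonneg (q i))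
      (fun i => spacedConfig_step q i ▸ Finset.single_le_sum (f := fun i => |q i|)
        (fun _ _ => abs_nonneg _) (Finset.mem_univ i)) hab
  let i : Fin (m + 4) := ⟨A.1.card - 1, by omega⟩
  have val_castSucc : (i.castSucc : ℕ) = A.1.card - 1 := rfl
  have val_succ : (i.succ : ℕ) = A.1.card - 1 + 1 := rfl
  have jump := spacedConfig_succ_sub q i
  rw [spacedSteps, dif_neg (not_not.2 (show A.1.card - 1 + 1 = A.1.card by omega))] at jump
  linarith [near (a := i.castSucc) (b := k) (by omega), near (a := l) (b := i.succ) (by omega)]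

theorem sub_eq_spacedConfig_sub {x : Fin (m + 5) → ℝ} {q : InBlockIdx m A.1.card → ℝ}
    (h : ∀ i, x i.1.succ - x i.1.castSucc = q i) (i j)
    (hij : i ∈ (initialSegment A).1 ↔ j ∈ (initialSegment A).1) :
    x i - x j = spacedConfig q i - spacedConfig q j := by
  rw [mem_initialSegment, mem_initialSegment] at hij
  have := abs_sub_le_numPoints_mul (v := x - spacedConfig q) le_rfl (fun i => by
    simp only [Pi.sub_apply, sub_sub_sub_comm, h, spacedConfig_step, sub_self, abs_zero, le_refl])
    hij.symm
  rw [mul_zero, abs_nonpos_iff, Pi.sub_apply, Pi.sub_apply] at this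
  linarith

theorem blockSpread_spacedConfig_le (A : ProperSubset (Fin (m + 5)))
    {q : InBlockIdx m A.1.card → ℝ} {L : ℝ} (hL : 0 ≤ L) (h : ∀ i, |q i| ≤ L) :
    blockSpread (initialSegment A).1 (spacedConfig q) ≤ numPoints m * L := by
  refine blockSpread_le_iff.2 fun i j hij => ?_
  rw [mem_initialSegment, mem_initialSegment] at hij
  exact (le_abs_self _).trans
    (abs_sub_le_numPoints_mul hL (fun i => (spacedConfig_step q i).symm ▸ h i) hij.symm)

theorem abs_le_blockSpread_spacedConfig (A : ProperSubset (Fin (m + 5)))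
    (q : InBlockIdx m A.1.card → ℝ) (i) :
    |q i| ≤ blockSpread (initialSegment A).1 (spacedConfig q) := by
  rw [← spacedConfig_step q i]
  refine abs_sub_le_blockSpread _ ?_
  rw [mem_initialSegment, mem_initialSegment, i.succ_lt_iff]

/-- The retraction of the line onto the interval `[-L, L]`. -/
def clamp (L r : ℝ) : ℝ := max (-L) (min L r)

@[fun_prop]
theorem continuous_clamp (L : ℝ) : Continuous (clamp L) := by unfold clamp; fun_prop

theorem abs_clamp {L : ℝ} (hL : 0 ≤ L) (r : ℝ) : |clamp L r| = min L |r| := by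
  unfold clamp
  rcases le_total 0 r with hr | hr
  · rw [abs_of_nonneg hr, max_eq_right (by linarith [le_min hL hr]), abs_of_nonneg (le_min hL hr)]
  · rw [abs_of_nonpos hr, min_eq_right (hr.trans hL), ← abs_neg, ← min_neg_neg, neg_neg,
      abs_of_nonneg (le_min hL (neg_nonneg.2 hr))]

theorem clamp_eq_self {L r : ℝ} (h : |r| ≤ L) : clamp L r = r := by
  rw [clamp, min_eq_right (abs_le.1 h).2, max_eq_right (abs_le.1 h).1]

/-- The model map near infinity on the shell of the initial segment of size `a`, as a function of
the chart coordinates. -/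
def linkMap (j : ProperSubset (Fin (m + 5))) (a : ℕ) (q : InBlockIdx m a → ℝ) : Target m :=
  modelMap j (spacedConfig fun i => clamp (supportRadius m) (q i))

@[fun_prop]
theorem continuous_linkMap (j : ProperSubset (Fin (m + 5))) (a : ℕ) : Continuous (linkMap j a) := by
  unfold linkMap
  exact (continuous_modelMap j).comp (continuous_spacedConfig.comp (by fun_prop))

theorem linkMap_of_le (j : ProperSubset (Fin (m + 5))) {q : InBlockIdx m A.1.card → ℝ} {i}
    (hi : innerSpread m ≤ |q i|) : linkMap j A.1.card q = basepoint m := by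
  have radius_pos := supportRadius_pos m
  rw [linkMap, modelMap_of_shell (shellGap_lt_gap_spacedConfig A _), shuffle_initialSegment,
    one_smul]
  · refine le_trans ?_ (abs_le_blockSpread_spacedConfig A _ i)
    rw [abs_clamp radius_pos.le]
    exact le_min (innerSpread_lt_supportRadius m).le hi
  · exact blockSpread_spacedConfig_le A radius_pos.le fun i =>
      (abs_clamp radius_pos.le _).trans_le (min_le_left _ _)

theorem inversionsFar_shuffle {x : Fin (m + 5) → ℝ} : InversionsFar (gap A x) (shuffle A.1) x := by
  intro i j hij hlt
  have := shuffle_lt (A := A.1) hlt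
  simp only [Perm.inv_def, apply_symm_apply] at this
  rcases this with h | h
  · exact (gap_le h.1 h.2).trans (le_abs_self _)
  · exact absurd h.2 hij.not_gt

theorem modelMap_eq_linkMap (j : ProperSubset (Fin (m + 5))) {x : Fin (m + 5) → ℝ}
    (hgap : shellGap m + 1 ≤ gap A x) (hs : blockSpread A.1 x ≤ outerSpread m) :
    modelMap j x = shuffle A.1 • linkMap ((shuffle A.1)⁻¹ • j) A.1.card (chart A x) := by
  rw [inversionsFar_shuffle.modelMap_eq (by unfold shellGap at hgap; linarith)]
  congr 1
  have gap_eq : gap (initialSegment A) (x ∘ shuffle A.1) = gap A x := by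
    rw [← gap_smul, initialSegment, smul_inv_smul]
  have spread_eq : blockSpread (initialSegment A).1 (x ∘ shuffle A.1) = blockSpread A.1 x := by
    rw [← blockSpread_smul, initialSegment, smul_inv_smul]
  by_cases h : ∀ i, |chart A x i| ≤ supportRadius m
  · exact modelMap_congr (gap_eq ▸ hgap) (shellGap_lt_gap_spacedConfig A _)
      (sub_eq_spacedConfig_sub fun i => (clamp_eq_self (h i)).symm) _
  · push Not at h
    obtain ⟨i, hi⟩ := h
    have radius_lt := innerSpread_lt_supportRadius m
    rw [linkMap_of_le _ (i := i) (by linarith), modelMap_of_shell (gap_eq ▸ hgap)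
      (by linarith [abs_chart_le_blockSpread A x i]) (spread_eq ▸ hs), shuffle_initialSegment,
      one_smul]

end LinkMap

section Extensions

variable {m : ℕ}

/-- A boundary condition: for each proper subset `A`, the prescribed behaviour on the part at
infinity of the shell of `A`, in terms of the chart coordinates. -/
abbrev BoundaryFamily (m : ℕ) : Type :=
  ∀ A : ProperSubset (Fin (m + 5)), (InBlockIdx m A.1.card → ℝ) → Target m

/-- The family of boundary maps is constant outside the cubes of radius `L`. -/
def SupportedIn (L : ℝ) (f : BoundaryFamily m) : Prop :=
  ∀ A q i, L ≤ |q i| → f A q = basepoint m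

/-- The part of the shell of `A` where the gap between the two blocks is at least `R`. -/
def shell (R : ℝ) (A : ProperSubset (Fin (m + 5))) : Set (Fin (m + 5) → ℝ) :=
  {x | R ≤ gap A x ∧ blockSpread A.1 x ≤ outerSpread m}

/-- The closure of the complement of the shells at distance `R`. -/
def offShells (R : ℝ) : Set (Fin (m + 5) → ℝ) :=
  {x | ∀ A, gap A x ≤ R ∨ outerSpread m ≤ blockSpread A.1 x}

/-- The common value of all model maps far away and off the shells. -/
def referenceMap (x : Fin (m + 5) → ℝ) : Target m := modelMap (Classical.arbitrary _) x

/-- The map `Ψ` satisfies, beyond `R`, the boundary condition `f` on the shells and agrees with the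
model maps off the shells. -/
structure Realizes (Ψ : (Fin (m + 5) → ℝ) → Target m) (f : BoundaryFamily m) (R : ℝ) : Prop where
  on_shell : ∀ A, ∀ x ∈ shell R A, Ψ x = shuffle A.1 • f A (chart A x)
  off_shells : ∀ x ∈ offShells 0, R ≤ spread x → Ψ x = referenceMap x

/-- The boundary condition `f` is satisfied by some continuous map. -/
def Extendable (f : BoundaryFamily m) : Prop := ∃ Ψ R, Continuous Ψ ∧ Realizes Ψ f R

variable {A A' : ProperSubset (Fin (m + 5))} {x : Fin (m + 5) → ℝ} {R R' : ℝ}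

theorem shell_anti (hR : R ≤ R') (A : ProperSubset (Fin (m + 5))) : shell R' A ⊆ shell R A :=
  fun _ hx => ⟨hR.trans hx.1, hx.2⟩

theorem offShells_mono (hR : R ≤ R') : offShells (m := m) R ⊆ offShells R' :=
  fun _ hx A => (hx A).imp_left (·.trans hR)

theorem Realizes.mono {Ψ : (Fin (m + 5) → ℝ) → Target m} {f : BoundaryFamily m}
    (h : Realizes Ψ f R) (hR : R ≤ R') : Realizes Ψ f R' :=
  ⟨fun A x hx => h.on_shell A x (shell_anti hR A hx),
    fun x hx hR' => h.off_shells x hx (hR.trans hR')⟩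

theorem isClosed_shell (R : ℝ) (A : ProperSubset (Fin (m + 5))) : IsClosed (shell R A) :=
  (isClosed_le continuous_const (continuous_gap A)).inter
    (isClosed_le (continuous_blockSpread A.1) continuous_const)

theorem isClosed_offShells (R : ℝ) : IsClosed (offShells (m := m) R) := by
  simp only [offShells, Set.ofPred_forall, Set.ofPred_or]
  exact isClosed_iInter fun A => (isClosed_le (by fun_prop) continuous_const).union
    (isClosed_le continuous_const (by fun_prop))

theorem mem_offShells_of_forall_notMem (h : ∀ A, x ∉ shell R A) : x ∈ offShells R := fun A =>
  (le_total (gap A x) R).imp_right fun hR => le_of_not_ge fun hs => h A ⟨hR, hs⟩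

theorem eq_of_mem_shell (hR : outerSpread m < R) (h : x ∈ shell R A) (h' : x ∈ shell R A') :
    A = A' := by
  by_contra hne
  linarith [h.1, h'.2, gap_le_blockSpread_of_ne hne (x := x)
    (by linarith [h'.1, outerSpread_pos m])]

theorem exists_supportRadius_le_abs_chart (h : outerSpread m ≤ blockSpread A.1 x) :
    ∃ i, supportRadius m ≤ |chart A x i| := by
  by_contra! hc
  exact (blockSpread_lt_of_abs_chart_lt hc).not_ge h

theorem modelMap_eq_referenceMap (hx : x ∈ offShells 0) (hs : shellGap m ≤ spread x)
    (j : ProperSubset (Fin (m + 5))) : modelMap j x = referenceMap x := by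
  have outer_large := hundred_mul_numPoints_le m
  have := five_le_numPoints m
  have hdef : shellGap m = outerSpread m + 2 := rfl
  obtain ⟨k, l, hkl⟩ := exists_spread_eq x
  obtain ⟨A, hA, -⟩ := exists_lt_gap_of_card_mul_lt (x := x) (i := l) (j := k) zero_le_three
    (by rw [card_fin_cast]; linarith)
  have outer_le := (hx A).resolve_left (by linarith)
  exact modelMap_eq_of_three_le (three_le_secondGap hA.le (by linarith)) _ _

theorem extendable_linkMap (j : ProperSubset (Fin (m + 5))) :
    Extendable fun A => linkMap ((shuffle A.1)⁻¹ • j) A.1.card :=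
  ⟨modelMap j, shellGap m + 1, continuous_modelMap j,
    fun _ _ hx => modelMap_eq_linkMap j hx.1 hx.2,
    fun _ hx hR => modelMap_eq_referenceMap hx (by linarith) j⟩

end Extensions

section Homotopy

variable {m : ℕ}

theorem exists_continuous_of_isClosed_cover {X Y ι : Type*} [TopologicalSpace X]
    [TopologicalSpace Y] [Finite ι] {C : ι → Set X} {g : ι → X → Y} (hC : ∀ i, IsClosed (C i))
    (hcov : ∀ x, ∃ i, x ∈ C i) (hg : ∀ i, Continuous (g i))
    (agree : ∀ i j, ∀ x ∈ C i, x ∈ C j → g i x = g j x) :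
    ∃ G : X → Y, Continuous G ∧ ∀ i, ∀ x ∈ C i, G x = g i x := by
  choose k hk using hcov
  have eq_on (i) (x) (hx : x ∈ C i) : g (k x) x = g i x := agree _ _ x (hk x) hx
  refine ⟨fun x => g (k x) x, (locallyFinite_of_finite C).continuous ?_ hC fun i => ?_, eq_on⟩
  · exact Set.iUnion_eq_univ_iff.2 fun x => ⟨k x, hk x⟩
  · exact (hg i).continuousOn.congr (eq_on i)

theorem exists_continuous_eq_on_shells {R : ℝ} (hR : outerSpread m < R)
    {Ψ : (Fin (m + 5) → ℝ) → Target m}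
    {g : ProperSubset (Fin (m + 5)) → (Fin (m + 5) → ℝ) → Target m}
    (hΨ : Continuous Ψ) (hg : ∀ A, Continuous (g A))
    (agree : ∀ A, ∀ x ∈ offShells R, x ∈ shell R A → Ψ x = g A x) :
    ∃ G : (Fin (m + 5) → ℝ) → Target m, Continuous G ∧ (∀ A, ∀ x ∈ shell R A, G x = g A x) ∧
      ∀ x ∈ offShells R, G x = Ψ x := by
  let C (o : Option (ProperSubset (Fin (m + 5)))) := o.elim (offShells R) (shell R)
  obtain ⟨G, hG, hGC⟩ := exists_continuous_of_isClosed_cover (C := C) (g := (Option.elim · Ψ g))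
    (Option.forall.2 ⟨isClosed_offShells R, isClosed_shell R⟩)
    (fun x => by
      by_cases! h : ∃ A, x ∈ shell R A
      · exact h.imp' some fun _ => id
      · exact ⟨none, mem_offShells_of_forall_notMem h⟩)
    (Option.forall.2 ⟨hΨ, hg⟩) (by
      rintro (_ | A) (_ | A') x hx hx'
      · rfl
      · exact agree A' x hx hx'
      · exact (agree A x hx' hx).symm
      · rw [eq_of_mem_shell hR hx hx'])
  exact ⟨G, hG, fun A => hGC (some A), hGC none⟩

theorem Extendable.of_homotopy
    {H : ∀ A : ProperSubset (Fin (m + 5)), ℝ × (InBlockIdx m A.1.card → ℝ) → Target m}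
    (hH : ∀ A, Continuous (H A)) (supp : ∀ τ, SupportedIn (supportRadius m) fun A q => H A (τ, q))
    (h : Extendable fun A q => H A (0, q)) : Extendable fun A q => H A (1, q) := by
  obtain ⟨Ψ, R₀, hΨ, hR₀⟩ := h
  obtain ⟨R, hR₀R, hR⟩ : ∃ R, R₀ ≤ R ∧ outerSpread m < R :=
    ⟨max R₀ (outerSpread m + 1), le_max_left _ _, lt_max_of_lt_right (lt_add_one _)⟩
  have real := hR₀.mono hR₀R
  have outer_pos : 0 < outerSpread m := by
    linarith [hundred_mul_numPoints_le m, five_le_numPoints m]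
  obtain ⟨G, hG, on_shell, off_shells⟩ := exists_continuous_eq_on_shells hR hΨ
    (g := fun A x => shuffle A.1 • H A (ramp (gap A x - R), chart A x))
    (fun A => ((hH A).comp ((by fun_prop : Continuous fun x => ramp (gap A x - R)).prodMk
      (continuous_chart A))).fun_const_smul _) fun A x hoff hon => by
      rw [real.on_shell A x hon]
      congr 1
      rcases hoff A with hle | hle
      · rw [ramp_of_nonpos (by linarith)]
      · obtain ⟨i, hi⟩ := exists_supportRadius_le_abs_chart hle
        exact (supp 0 A _ i hi).trans (supp _ A _ i hi).symm
  refine ⟨G, R + 1, hG, fun A x hx => ?_, fun x hx hxR => ?_⟩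
  · rw [on_shell A x (shell_anti (by linarith) A hx), ramp_of_one_le (by linarith [hx.1])]
  · rw [off_shells x (offShells_mono (by linarith) hx), real.off_shells x hx (by linarith)]

end Homotopy

section Zigzag

variable {K : Type*}

/-- The path that agrees with `a` outside `[u, v]` and on this interval runs through `a` forwards,
then through `a'` backwards and finally through `a''` forwards. -/
def zigzag (u v : ℝ) (a a' a'' : ℝ → K) (s : ℝ) : K :=
  if s ≤ u then a s else
  if s ≤ u + (v - u) / 4 then a (u + 4 * (s - u)) else
  if s ≤ u + (v - u) / 2 then a' (v - 4 * (s - u - (v - u) / 4)) else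
  if s ≤ v then a'' (u + 2 * (s - u - (v - u) / 2)) else a s

variable {a a' a'' : ℝ → K} {u v s : ℝ}

theorem zigzag_self (u s : ℝ) (a a' a'' : ℝ → K) : zigzag u u a a' a'' s = a s := by
  unfold zigzag
  by_cases h : s ≤ u <;> simp [h]

theorem zigzag_of_notMem_Ioc (a a' a'' : ℝ → K) (h : s ∉ Set.Ioc u v) :
    zigzag u v a a' a'' s = a s := by
  unfold zigzag
  rcases le_or_gt s u with hs | hs
  · rw [if_pos hs]
  · have : v < s := lt_of_not_ge fun hv => h ⟨hs, hv⟩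
    rw [if_neg (by linarith), if_neg (by linarith), if_neg (by linarith), if_neg (by linarith)]

theorem zigzag_map {K' : Type*} (φ : K → K') {b b' b'' : ℝ → K'} (hs : b s = φ (a s))
    (h : ∀ r, u ≤ r → r ≤ v → b r = φ (a r) ∧ b' r = φ (a' r) ∧ b'' r = φ (a'' r)) :
    zigzag u v b b' b'' s = φ (zigzag u v a a' a'' s) := by
  unfold zigzag
  split_ifs
  · exact hs
  · exact (h _ (by linarith) (by linarith)).1
  · exact (h _ (by linarith) (by linarith)).2.1
  · exact (h _ (by linarith) (by linarith)).2.2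
  · exact hs

theorem zigzag_eq_const {k : K} (hs : a s = k)
    (h : ∀ r, u ≤ r → r ≤ v → a r = k ∧ a' r = k ∧ a'' r = k) : zigzag u v a a' a'' s = k :=
  zigzag_map (fun _ => k) (a := a) (a' := a') (a'' := a'') hs h

theorem zigzag_comp_add (u v s c : ℝ) (a a' a'' : ℝ → K) :
    zigzag (c + u) (c + v) a a' a'' (c + s) =
      zigzag u v (fun r => a (c + r)) (fun r => a' (c + r)) (fun r => a'' (c + r)) s := by
  simp only [zigzag, add_sub_add_left_eq_sub]
  simp only [add_assoc, add_sub_assoc, add_le_add_iff_left]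

theorem continuous_zigzag [TopologicalSpace K] {X : Type*} [TopologicalSpace X] {u v s : X → ℝ}
    {a a' a'' : X → ℝ → K} (hu : Continuous u) (hv : Continuous v) (hs : Continuous s)
    (huv : ∀ x, u x ≤ v x) (ha : Continuous (Function.uncurry a))
    (ha' : Continuous (Function.uncurry a')) (ha'' : Continuous (Function.uncurry a''))
    (right : ∀ x, a x (v x) = a' x (v x) ∧ a' x (v x) = a'' x (v x))
    (left : ∀ x, a' x (u x) = a'' x (u x)) :
    Continuous fun x => zigzag (u x) (v x) (a x) (a' x) (a'' x) (s x) := by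
  have along {b : X → ℝ → K} (hb : Continuous (Function.uncurry b)) {r : X → ℝ}
      (hr : Continuous r) : Continuous fun x => b x (r x) := hb.comp (continuous_id.prodMk hr)
  unfold zigzag
  refine .if_le (along ha hs) (.if_le (along ha (by fun_prop)) (.if_le (along ha' (by fun_prop))
    (.if_le (along ha'' (by fun_prop)) (along ha hs) hs hv fun x e => ?_)
    hs (by fun_prop) fun x e => ?_) hs (by fun_prop) fun x e => ?_) hs hu fun x e => ?_
  · rw [show u x + 2 * (s x - u x - (v x - u x) / 2) = v x by rw [e]; ring, e, ← (right x).2,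
      (right x).1]
  · rw [if_pos (by linarith [huv x]),
      show v x - 4 * (s x - u x - (v x - u x) / 4) = u x by rw [e]; ring,
      show u x + 2 * (s x - u x - (v x - u x) / 2) = u x by rw [e]; ring, left]
  · rw [if_pos (by linarith [huv x]),
      show v x - 4 * (s x - u x - (v x - u x) / 4) = v x by rw [e]; ring,
      show u x + 4 * (s x - u x) = v x by rw [e]; ring, (right x).1]
  · rw [if_pos (by linarith [huv x]), show u x + 4 * (s x - u x) = s x by rw [e]; ring]

end Zigzag

section Slide

variable {m : ℕ} {A A' : ProperSubset (Fin (m + 5))}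

/-- Translation of a configuration along the staircase direction. -/
def slide (r : ℝ) (x : Fin (m + 5) → ℝ) : Fin (m + 5) → ℝ := x + r • staircase m

@[fun_prop]
theorem continuous_slide {X : Type*} [TopologicalSpace X] {r : X → ℝ} {x : X → Fin (m + 5) → ℝ}
    (hr : Continuous r) (hx : Continuous x) : Continuous fun y => slide (r y) (x y) := by
  unfold slide; fun_prop

theorem slide_slide (r s : ℝ) (x : Fin (m + 5) → ℝ) : slide r (slide s x) = slide (s + r) x := by
  rw [slide, slide, slide, add_smul, add_assoc]

theorem slide_zero (x : Fin (m + 5) → ℝ) : slide 0 x = x := by rw [slide, zero_smul, add_zero]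

theorem slide_sub (r : ℝ) (x : Fin (m + 5) → ℝ) (i j : Fin (m + 5)) :
    slide r x i - slide r x j = x i - x j + r * (staircase m i - staircase m j) := by
  simp only [slide, Pi.add_apply, Pi.smul_apply, smul_eq_mul]; ring

theorem abs_slide_sub_sub_le (r : ℝ) (x : Fin (m + 5) → ℝ) (i j : Fin (m + 5)) :
    |slide r x i - slide r x j - (x i - x j)| ≤ |r| * numPoints m := by
  rw [slide_sub, add_sub_cancel_left, abs_mul]
  exact mul_le_mul_of_nonneg_left (abs_staircase_sub_le i j) (abs_nonneg r)

theorem gap_sub_le_gap_slide (A : ProperSubset (Fin (m + 5))) (r : ℝ) (x) :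
    gap A x - |r| * numPoints m ≤ gap A (slide r x) :=
  le_gap_iff.2 fun k hk l hl => by
    linarith [gap_le (x := x) hk hl, neg_le_of_abs_le (abs_slide_sub_sub_le r x l k)]

theorem blockSpread_slide_le (A : Finset (Fin (m + 5))) (r : ℝ) (x) :
    blockSpread A (slide r x) ≤ blockSpread A x + |r| * numPoints m :=
  blockSpread_le_iff.2 fun i j hij => by
    linarith [sub_le_blockSpread x hij, le_of_abs_le (abs_slide_sub_sub_le r x i j)]

theorem spread_slide_le (r : ℝ) (x : Fin (m + 5) → ℝ) :
    spread (slide r x) ≤ spread x + |r| * numPoints m :=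
  blockSpread_slide_le _ r x

theorem abs_le_abs_sub_add_abs_slide_sub (r : ℝ) (x : Fin (m + 5) → ℝ) {i j : Fin (m + 5)}
    (hij : i ≠ j) : |r| ≤ |x i - x j| + |slide r x i - slide r x j| := by
  have one_le : 1 ≤ |staircase m i - staircase m j| := by
    have : ((i : ℕ) : ℤ) ≠ (j : ℕ) := by exact_mod_cast Fin.val_ne_of_ne hij
    simp only [staircase]
    exact_mod_cast Int.one_le_abs (sub_ne_zero.2 this)
  calc |r| ≤ |r * (staircase m i - staircase m j)| :=
        (le_mul_of_one_le_right (abs_nonneg r) one_le).trans_eq (abs_mul _ _).symm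
    _ = |(x i - x j) - (slide r x i - slide r x j)| := by rw [slide_sub, ← abs_neg]; ring_nf
    _ ≤ |x i - x j| + |slide r x i - slide r x j| := abs_sub _ _

theorem chart_slide (A : ProperSubset (Fin (m + 5))) (r : ℝ) (x) :
    chart A (slide r x) = chart A x + r • chart A (staircase m) := by
  rw [slide, chart_add, chart_smul]

theorem exists_ne_mem_iff_mem (A A' : Finset (Fin (m + 5))) :
    ∃ i j, i ≠ j ∧ (i ∈ A ↔ j ∈ A) ∧ (i ∈ A' ↔ j ∈ A') := by
  obtain ⟨i, j, hij, h⟩ := Fintype.exists_ne_map_eq_of_card_lt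
    (fun i : Fin (m + 5) => (decide (i ∈ A), decide (i ∈ A'))) (by simp)
  simp only [Prod.mk.injEq, decide_eq_decide] at h
  exact ⟨i, j, hij, h⟩

/-- A gap beyond which a line in the staircase direction meets at most one shell. -/
def lineGap (m : ℕ) : ℝ := (1 + 2 * numPoints m) * outerSpread m

theorem outerSpread_add_le_lineGap (m : ℕ) :
    outerSpread m + numPoints m * outerSpread m ≤ lineGap m := by
  unfold lineGap; nlinarith [hundred_mul_numPoints_le m, five_le_numPoints m]

theorem outerSpread_lt_lineGap (m : ℕ) : outerSpread m < lineGap m := by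
  nlinarith [outerSpread_add_le_lineGap m, outerSpread_pos m, five_le_numPoints m]

theorem eq_of_lineGap_lt {r : ℝ} {y : Fin (m + 5) → ℝ} (hs : blockSpread A.1 y ≤ outerSpread m)
    (hgap : 0 ≤ gap A y) (hs' : blockSpread A'.1 (slide r y) ≤ outerSpread m)
    (hgap' : lineGap m < gap A' (slide r y)) : A = A' := by
  by_contra hne
  obtain ⟨i, j, hij, hA, hA'⟩ := exists_ne_mem_iff_mem A.1 A'.1
  have hn := five_le_numPoints m
  have shift_le : |r| * numPoints m ≤ 2 * outerSpread m * numPoints m :=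
    mul_le_mul_of_nonneg_right (by
      linarith [abs_le_abs_sub_add_abs_slide_sub r y hij, abs_sub_le_blockSpread y hA,
        abs_sub_le_blockSpread (slide r y) hA']) (by linarith)
  have gap_le := gap_sub_le_gap_slide A' (-r) (slide r y)
  rw [slide_slide, add_neg_cancel, slide_zero, abs_neg] at gap_le
  have gap_le_outer := (gap_le_blockSpread_of_ne (Ne.symm hne) hgap).trans hs
  unfold lineGap at hgap'
  linarith

end Slide

section LineCoordinates

variable {m : ℕ} {A : ProperSubset (Fin (m + 5))} {q : InBlockIdx m A.1.card → ℝ}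

/-- The coordinate used to parametrize lines in the staircase direction in the chart of `A`. -/
def mainIdx (A : ProperSubset (Fin (m + 5))) : InBlockIdx m A.1.card := Classical.arbitrary _

/-- The parameter of the point `q` on its line in the staircase direction. -/
def lineParam (A : ProperSubset (Fin (m + 5))) (q : InBlockIdx m A.1.card → ℝ) : ℝ :=
  q (mainIdx A) / chart A (staircase m) (mainIdx A)

/-- The point with parameter `0` on the line through `q` in the staircase direction. -/
def lineOrigin (A : ProperSubset (Fin (m + 5))) (q : InBlockIdx m A.1.card → ℝ) :
    InBlockIdx m A.1.card → ℝ :=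
  q - lineParam A q • chart A (staircase m)

@[fun_prop]
theorem continuous_lineParam (A : ProperSubset (Fin (m + 5))) : Continuous (lineParam A) := by
  unfold lineParam; fun_prop

@[fun_prop]
theorem continuous_lineOrigin (A : ProperSubset (Fin (m + 5))) : Continuous (lineOrigin A) := by
  unfold lineOrigin; fun_prop

theorem lineOrigin_add_lineParam_smul (A : ProperSubset (Fin (m + 5))) (q) :
    lineOrigin A q + lineParam A q • chart A (staircase m) = q :=
  sub_add_cancel _ _

theorem lineParam_add_smul (A : ProperSubset (Fin (m + 5))) (q) (r : ℝ) :
    lineParam A (q + r • chart A (staircase m)) = lineParam A q + r := by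
  have : chart A (staircase m) (mainIdx A) ≠ 0 :=
    (zero_lt_one.trans_le (one_le_chart_staircase A _)).ne'
  simp only [lineParam, Pi.add_apply, Pi.smul_apply, smul_eq_mul]
  field_simp

theorem lineOrigin_add_smul (A : ProperSubset (Fin (m + 5))) (q) (r : ℝ) :
    lineOrigin A (q + r • chart A (staircase m)) = lineOrigin A q := by
  rw [lineOrigin, lineParam_add_smul, lineOrigin, add_smul]; abel

theorem lineParam_lineOrigin (A : ProperSubset (Fin (m + 5))) (q) :
    lineParam A (lineOrigin A q) = 0 := by
  rw [lineOrigin, sub_eq_add_neg, ← neg_smul, lineParam_add_smul, add_neg_cancel]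

theorem lineOrigin_lineOrigin (A : ProperSubset (Fin (m + 5))) (q) :
    lineOrigin A (lineOrigin A q) = lineOrigin A q := by
  rw [lineOrigin, lineParam_lineOrigin, zero_smul, sub_zero]

theorem abs_lineParam_le (A : ProperSubset (Fin (m + 5))) (q) :
    |lineParam A q| ≤ |q (mainIdx A)| := by
  have := one_le_chart_staircase A (mainIdx A)
  rw [lineParam, abs_div, abs_of_pos (zero_lt_one.trans_le this)]
  exact div_le_self (abs_nonneg _) this

theorem abs_mul_chart_staircase_le {s S : ℝ} (hs : |s| ≤ S) (i : InBlockIdx m A.1.card) :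
    |s * chart A (staircase m) i| ≤ S * numPoints m := by
  have pos : 0 ≤ chart A (staircase m) i := zero_le_one.trans (one_le_chart_staircase A i)
  rw [abs_mul, abs_of_nonneg pos]
  exact mul_le_mul hs (chart_staircase_le A i) pos ((abs_nonneg s).trans hs)

theorem norm_lineOrigin_le (h : ∀ i, |q i| ≤ innerSpread m) : ‖lineOrigin A q‖ ≤ foldRadius m := by
  have := six_mul_innerSpread_le m
  have := twenty_le_innerSpread m
  refine (pi_norm_le_iff_of_nonneg (by linarith)).2 fun i => ?_
  have shift_le := abs_mul_chart_staircase_le (A := A)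
    ((abs_lineParam_le A q).trans (h (mainIdx A))) i
  rw [lineOrigin, Pi.sub_apply, Pi.smul_apply, smul_eq_mul, Real.norm_eq_abs]
  unfold foldRadius
  linarith [abs_sub (q i) (lineParam A q * chart A (staircase m) i), h i]

theorem eq_basepoint_of_foldRadius_lt {f : BoundaryFamily m} (hf : SupportedIn (innerSpread m) f)
    (h : foldRadius m < ‖lineOrigin A q‖) : f A q = basepoint m := by
  by_contra hne
  exact h.not_ge (norm_lineOrigin_le fun i => le_of_not_ge fun hi => hne (hf A q i hi))

theorem abs_le_of_abs_lineParam_le {S W : ℝ} (hs : |lineParam A q| ≤ S) (hw : ‖lineOrigin A q‖ ≤ W)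
    (i) : |q i| ≤ W + S * numPoints m := by
  have origin_le := (norm_le_pi_norm (lineOrigin A q) i).trans hw
  rw [← lineOrigin_add_lineParam_smul A q, Pi.add_apply]
  exact (abs_add_le _ _).trans (add_le_add origin_le (abs_mul_chart_staircase_le hs i))

/-- The boundary family obtained by running, along each line in the staircase direction, through
`f` forwards, `f'` backwards and `f''` forwards. -/
def foldFamily (f f' f'' : BoundaryFamily m) : BoundaryFamily m := fun A q =>
  zigzag (-foldRadius m) (foldRadius m) (fun r => f A (lineOrigin A q + r • chart A (staircase m)))
    (fun r => f' A (lineOrigin A q + r • chart A (staircase m)))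
    (fun r => f'' A (lineOrigin A q + r • chart A (staircase m))) (lineParam A q)

end LineCoordinates

section Lines

variable {m : ℕ} {A A' : ProperSubset (Fin (m + 5))} {x : Fin (m + 5) → ℝ}

/-- An affine parameter on the lines in the staircase direction. -/
def position (x : Fin (m + 5) → ℝ) : ℝ := x 1 - x 0

/-- The point of position `0` on the line through `x` in the staircase direction. -/
def lineBase (x : Fin (m + 5) → ℝ) : Fin (m + 5) → ℝ := slide (-position x) x

/-- The point of the line through `x` in the staircase direction whose chart coordinates on the
shell of `A` have line parameter `0`. -/
def shellBase (A : ProperSubset (Fin (m + 5))) (x : Fin (m + 5) → ℝ) : Fin (m + 5) → ℝ :=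
  slide (-lineParam A (chart A x)) x

/-- How far the line through `x` in the staircase direction is from the line through the origin in
the chart of the shell of `A`. -/
def lineOffset (A : ProperSubset (Fin (m + 5))) (x : Fin (m + 5) → ℝ) : ℝ :=
  ‖lineOrigin A (chart A x)‖

@[fun_prop]
theorem continuous_position : Continuous (position (m := m)) := by unfold position; fun_prop

@[fun_prop]
theorem continuous_lineBase : Continuous (lineBase (m := m)) := by unfold lineBase; fun_prop

@[fun_prop]
theorem continuous_shellBase (A : ProperSubset (Fin (m + 5))) : Continuous (shellBase A) := by
  unfold shellBase; fun_prop

@[fun_prop]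
theorem continuous_lineOffset (A : ProperSubset (Fin (m + 5))) : Continuous (lineOffset A) := by
  unfold lineOffset; fun_prop

theorem position_slide (r : ℝ) (x : Fin (m + 5) → ℝ) : position (slide r x) = position x + r := by
  simp [position, slide_sub, staircase]

theorem lineParam_chart_slide (A : ProperSubset (Fin (m + 5))) (r : ℝ) (x) :
    lineParam A (chart A (slide r x)) = lineParam A (chart A x) + r := by
  rw [chart_slide, lineParam_add_smul]

theorem lineBase_slide (r : ℝ) (x : Fin (m + 5) → ℝ) : lineBase (slide r x) = lineBase x := by
  rw [lineBase, slide_slide, position_slide, lineBase]; congr 1; ring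

theorem shellBase_slide (A : ProperSubset (Fin (m + 5))) (r : ℝ) (x) :
    shellBase A (slide r x) = shellBase A x := by
  rw [shellBase, slide_slide, lineParam_chart_slide, shellBase]; congr 1; ring

theorem lineOffset_slide (A : ProperSubset (Fin (m + 5))) (r : ℝ) (x) :
    lineOffset A (slide r x) = lineOffset A x := by
  rw [lineOffset, chart_slide, lineOrigin_add_smul, lineOffset]

theorem slide_position_lineBase (x : Fin (m + 5) → ℝ) : slide (position x) (lineBase x) = x := by
  rw [lineBase, slide_slide, neg_add_cancel, slide_zero]

theorem slide_lineParam_shellBase (A : ProperSubset (Fin (m + 5))) (x) :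
    slide (lineParam A (chart A x)) (shellBase A x) = x := by
  rw [shellBase, slide_slide, neg_add_cancel, slide_zero]

theorem position_eq_add_lineParam (A : ProperSubset (Fin (m + 5))) (x) :
    position x = position (shellBase A x) + lineParam A (chart A x) := by
  rw [← position_slide, slide_lineParam_shellBase]

theorem slide_lineBase_eq_slide_shellBase (A : ProperSubset (Fin (m + 5))) (r : ℝ) (x) :
    slide (position (shellBase A x) + r) (lineBase x) = slide r (shellBase A x) := by
  rw [← slide_slide, ← lineBase_slide (-lineParam A (chart A x)), ← shellBase,
    slide_position_lineBase]

theorem chart_slide_shellBase (A : ProperSubset (Fin (m + 5))) (r : ℝ) (x) :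
    chart A (slide r (shellBase A x)) =
      lineOrigin A (chart A x) + r • chart A (staircase m) := by
  rw [chart_slide, shellBase, chart_slide, lineOrigin, neg_smul, sub_eq_add_neg]

theorem abs_position_le_add_spread_lineBase (x : Fin (m + 5) → ℝ) {i j : Fin (m + 5)}
    (hij : i ≠ j) : |position x| ≤ |x i - x j| + spread (lineBase x) := by
  have := abs_le_abs_sub_add_abs_slide_sub (-position x) x hij
  rw [abs_neg] at this
  exact this.trans (add_le_add_right (abs_sub_le_spread (lineBase x) i j) _)

theorem abs_position_shellBase_le (A : ProperSubset (Fin (m + 5))) (x) :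
    |position (shellBase A x)| ≤ spread (lineBase x) := by
  have ne : shuffle A.1 (mainIdx A).1.succ ≠ shuffle A.1 (mainIdx A).1.castSucc :=
    (shuffle A.1).injective.ne Fin.castSucc_lt_succ.ne'
  have coord_eq_zero : chart A (shellBase A x) (mainIdx A) = 0 := by
    have := lineParam_lineOrigin A (chart A x)
    rw [← slide_zero (shellBase A x), chart_slide_shellBase, zero_smul, add_zero]
    exact (div_eq_zero_iff.1 this).resolve_right
      (zero_lt_one.trans_le (one_le_chart_staircase A _)).ne'
  have := abs_position_le_add_spread_lineBase (shellBase A x) ne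
  rwa [← chart, coord_eq_zero, abs_zero, zero_add, shellBase, lineBase_slide] at this

theorem spread_lineBase_le (x : Fin (m + 5) → ℝ) :
    spread (lineBase x) ≤ (1 + numPoints m) * spread x := by
  have slide_le := spread_slide_le (-position x) x
  have := mul_le_mul_of_nonneg_right (abs_sub_le_spread x 1 0)
    (show 0 ≤ numPoints m by linarith [five_le_numPoints m])
  rw [abs_neg, ← lineBase, position] at slide_le
  linarith

theorem spread_le_spread_lineBase_add (x : Fin (m + 5) → ℝ) :
    spread x ≤ spread (lineBase x) + |position x| * numPoints m := by
  simpa only [slide_position_lineBase] using spread_slide_le (position x) (lineBase x)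

theorem blockSpread_le_of_abs_lineParam_le {S W : ℝ} (hs : |lineParam A (chart A x)| ≤ S)
    (hw : lineOffset A x ≤ W) : blockSpread A.1 x ≤ numPoints m * (W + S * numPoints m) := by
  have chart_le := abs_le_of_abs_lineParam_le hs hw
  exact blockSpread_le_of_abs_chart_le ((abs_nonneg _).trans (chart_le (mainIdx A))) chart_le

theorem foldRadius_pos (m : ℕ) : 0 < foldRadius m := by
  linarith [twenty_le_innerSpread m, six_mul_innerSpread_le m]

theorem blockSpread_slide_shellBase_le {r : ℝ} (hr : |r| ≤ foldRadius m)
    (h : lineOffset A x ≤ 3 * foldRadius m) :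
    blockSpread A.1 (slide r (shellBase A x)) ≤ outerSpread m := by
  refine (blockSpread_le_of_abs_lineParam_le (S := foldRadius m) (W := 3 * foldRadius m)
    ?_ ?_).trans ?_
  · rwa [chart_slide_shellBase, lineParam_add_smul, lineParam_lineOrigin, zero_add]
  · rwa [lineOffset_slide, shellBase, lineOffset_slide]
  · have n_large := five_le_numPoints m
    have radius_pos := foldRadius_pos m
    unfold outerSpread supportRadius
    exact mul_le_mul_of_nonneg_left (by nlinarith) (by linarith)

/-- A cutoff function, constant along the lines in the staircase direction, for the lines that run
through the shell of `A` close to its centre; it decreases as `c` grows. -/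
def lineCutoff (c : ℝ) (A : ProperSubset (Fin (m + 5))) (x : Fin (m + 5) → ℝ) : ℝ :=
  ramp (3 - c - lineOffset A x / foldRadius m) * ramp (gap A (shellBase A x) - (lineGap m + c))

/-- The shell of `A` is the only one through which the line through `x` in the staircase direction
can run close to the centre. -/
def MeetsOnly (A : ProperSubset (Fin (m + 5))) (x : Fin (m + 5) → ℝ) : Prop :=
  ∀ A' ≠ A, lineCutoff 0 A' x = 0

variable {c : ℝ}

@[fun_prop]
theorem continuous_lineCutoff (c : ℝ) (A : ProperSubset (Fin (m + 5))) :
    Continuous (lineCutoff c A) := by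
  have : Continuous fun x => gap A (shellBase A x) := by fun_prop
  unfold lineCutoff; fun_prop

theorem lineCutoff_nonneg (c : ℝ) (A : ProperSubset (Fin (m + 5))) (x) : 0 ≤ lineCutoff c A x :=
  mul_nonneg (ramp_nonneg _) (ramp_nonneg _)

theorem lineCutoff_le_one (c : ℝ) (A : ProperSubset (Fin (m + 5))) (x) : lineCutoff c A x ≤ 1 :=
  mul_le_one₀ (ramp_le_one _) (ramp_nonneg _) (ramp_le_one _)

theorem lineCutoff_slide (c : ℝ) (A : ProperSubset (Fin (m + 5))) (r : ℝ) (x) :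
    lineCutoff c A (slide r x) = lineCutoff c A x := by
  rw [lineCutoff, lineOffset_slide, shellBase_slide, lineCutoff]

theorem bounds_of_lineCutoff_ne_zero (h : lineCutoff c A x ≠ 0) :
    lineOffset A x / foldRadius m < 3 - c ∧ lineGap m + c < gap A (shellBase A x) :=
  ⟨sub_pos.1 (pos_of_ramp_ne_zero (left_ne_zero_of_mul h)),
    sub_pos.1 (pos_of_ramp_ne_zero (right_ne_zero_of_mul h))⟩

theorem lineCutoff_eq_ramp (h : lineGap m + c + 1 ≤ gap A (shellBase A x)) :
    lineCutoff c A x = ramp (3 - c - lineOffset A x / foldRadius m) := by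
  rw [lineCutoff, ramp_of_one_le (r := gap A (shellBase A x) - _) (by linarith), mul_one]

theorem lineCutoff_eq_one (hoff : lineOffset A x / foldRadius m ≤ 2 - c)
    (hgap : lineGap m + c + 1 ≤ gap A (shellBase A x)) : lineCutoff c A x = 1 := by
  rw [lineCutoff_eq_ramp hgap, ramp_of_one_le (by linarith)]

theorem lineCutoff_zero_eq_one (h : lineCutoff 1 A x ≠ 0) : lineCutoff 0 A x = 1 := by
  obtain ⟨hoff, hgap⟩ := bounds_of_lineCutoff_ne_zero h
  exact lineCutoff_eq_one (by linarith) (by linarith)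

theorem blockSpread_shellBase_le (h : lineCutoff 0 A x ≠ 0) :
    blockSpread A.1 (shellBase A x) ≤ outerSpread m := by
  have hoff := (bounds_of_lineCutoff_ne_zero h).1
  rw [sub_zero, div_lt_iff₀ (foldRadius_pos m)] at hoff
  simpa only [slide_zero] using blockSpread_slide_shellBase_le (r := 0)
    (abs_zero.trans_le (foldRadius_pos m).le) hoff.le

theorem lineGap_lt_gap_shellBase (h : lineCutoff 0 A x ≠ 0) :
    lineGap m < gap A (shellBase A x) := by
  simpa only [add_zero] using (bounds_of_lineCutoff_ne_zero h).2

theorem meetsOnly_of_gap_nonneg (hs : blockSpread A.1 x ≤ outerSpread m) (hgap : 0 ≤ gap A x) :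
    MeetsOnly A x := fun A' hne => by
  by_contra h
  exact hne.symm (eq_of_lineGap_lt hs hgap (blockSpread_shellBase_le h)
    (lineGap_lt_gap_shellBase h))

theorem meetsOnly_of_lineCutoff_ne_zero (h : lineCutoff 0 A x ≠ 0) : MeetsOnly A x :=
  fun A' hne => by
    rw [← slide_lineParam_shellBase A x, lineCutoff_slide]
    exact meetsOnly_of_gap_nonneg (blockSpread_shellBase_le h)
      ((outerSpread_pos m).trans ((outerSpread_lt_lineGap m).trans (lineGap_lt_gap_shellBase h))).le
      A' hne

theorem exists_meetsOnly (x : Fin (m + 5) → ℝ) : ∃ A, MeetsOnly A x := by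
  by_cases! h : ∃ A : ProperSubset (Fin (m + 5)), lineCutoff 0 A x ≠ 0
  · exact h.imp fun _ => meetsOnly_of_lineCutoff_ne_zero
  · exact ⟨Classical.arbitrary _, fun A _ => h A⟩

end Lines

section FoldInterval

variable {m : ℕ} {A : ProperSubset (Fin (m + 5))} {x : Fin (m + 5) → ℝ} {R : ℝ}

/-- The position of the centre of the shell through which the line through `x` runs, cut off to
`0` when there is no such shell. -/
def shellCenter (x : Fin (m + 5) → ℝ) : ℝ :=
  ∑ A : ProperSubset (Fin (m + 5)), lineCutoff 0 A x * position (shellBase A x)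

/-- Half the length of the interval on which the line through `x` is folded, when this line is far
from the origin. -/
def shellHalfWidth (x : Fin (m + 5) → ℝ) : ℝ :=
  foldRadius m * ∑ A : ProperSubset (Fin (m + 5)), lineCutoff 1 A x

theorem shellCenter_eq (h : MeetsOnly A x) :
    shellCenter x = lineCutoff 0 A x * position (shellBase A x) :=
  Fintype.sum_eq_single A fun A' hne => by rw [h A' hne, zero_mul]

theorem shellHalfWidth_eq (h : MeetsOnly A x) :
    shellHalfWidth x = foldRadius m * lineCutoff 1 A x :=
  congrArg _ <| Fintype.sum_eq_single A fun A' hne => by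
    by_contra hc
    exact zero_ne_one ((h A' hne).symm.trans (lineCutoff_zero_eq_one hc))

theorem abs_shellCenter_le (x : Fin (m + 5) → ℝ) : |shellCenter x| ≤ spread (lineBase x) := by
  obtain ⟨A, hA⟩ := exists_meetsOnly x
  rw [shellCenter_eq hA, abs_mul, abs_of_nonneg (lineCutoff_nonneg 0 A x)]
  exact (mul_le_of_le_one_left (abs_nonneg _) (lineCutoff_le_one 0 A x)).trans
    (abs_position_shellBase_le A x)

theorem shellHalfWidth_nonneg (x : Fin (m + 5) → ℝ) : 0 ≤ shellHalfWidth x :=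
  mul_nonneg (foldRadius_pos m).le (Finset.sum_nonneg fun A _ => lineCutoff_nonneg 1 A x)

theorem shellHalfWidth_le (x : Fin (m + 5) → ℝ) : shellHalfWidth x ≤ foldRadius m := by
  obtain ⟨A, hA⟩ := exists_meetsOnly x
  rw [shellHalfWidth_eq hA]
  exact mul_le_of_le_one_right (foldRadius_pos m).le (lineCutoff_le_one 1 A x)

/-- A spread beyond which maps realizing boundary conditions beyond `R` are determined by these,
except on lines close to the centre of a shell. -/
def farSpread (m : ℕ) (R : ℝ) : ℝ := R + 2 * outerSpread m

/-- A cutoff function for the lines far from the origin. -/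
def farCutoff (R : ℝ) (x : Fin (m + 5) → ℝ) : ℝ :=
  ramp (spread (lineBase x) - (1 + numPoints m) * farSpread m R)

/-- The centre of the interval on which the line through `x` is folded. -/
def foldCenter (R : ℝ) (x : Fin (m + 5) → ℝ) : ℝ := farCutoff R x * shellCenter x

/-- Half the length of the interval on which the line through `x` is folded. -/
def foldHalfWidth (R : ℝ) (x : Fin (m + 5) → ℝ) : ℝ :=
  (1 - farCutoff R x) * (spread (lineBase x) + farSpread m R) + farCutoff R x * shellHalfWidth x

theorem farCutoff_nonneg (R : ℝ) (x : Fin (m + 5) → ℝ) : 0 ≤ farCutoff R x := ramp_nonneg _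

theorem farCutoff_le_one (R : ℝ) (x : Fin (m + 5) → ℝ) : farCutoff R x ≤ 1 := ramp_le_one _

@[fun_prop]
theorem continuous_spread : Continuous (spread (ι := Fin (m + 5))) := continuous_blockSpread _

theorem spread_nonneg (x : Fin (m + 5) → ℝ) : 0 ≤ spread x := blockSpread_nonneg _ x

theorem foldHalfWidth_nonneg (hR : 0 ≤ farSpread m R) (x : Fin (m + 5) → ℝ) :
    0 ≤ foldHalfWidth R x :=
  add_nonneg (mul_nonneg (sub_nonneg.2 (farCutoff_le_one R x)) (add_nonneg (spread_nonneg _) hR))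
    (mul_nonneg (farCutoff_nonneg R x) (shellHalfWidth_nonneg x))

theorem abs_foldCenter_le (R : ℝ) (x : Fin (m + 5) → ℝ) :
    |foldCenter R x| ≤ spread (lineBase x) := by
  rw [foldCenter, abs_mul, abs_of_nonneg (farCutoff_nonneg R x)]
  exact (mul_le_of_le_one_left (abs_nonneg _) (farCutoff_le_one R x)).trans (abs_shellCenter_le x)

theorem foldHalfWidth_le (hR : 0 ≤ farSpread m R) (x : Fin (m + 5) → ℝ) :
    foldHalfWidth R x ≤ spread (lineBase x) + farSpread m R + foldRadius m :=
  add_le_add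
    (mul_le_of_le_one_left (add_nonneg (spread_nonneg _) hR)
      (sub_le_self _ (farCutoff_nonneg R x)))
    ((mul_le_of_le_one_left (shellHalfWidth_nonneg x) (farCutoff_le_one R x)).trans
      (shellHalfWidth_le x))

theorem foldCenter_slide (R r : ℝ) (x : Fin (m + 5) → ℝ) :
    foldCenter R (slide r x) = foldCenter R x := by
  simp only [foldCenter, farCutoff, shellCenter, lineBase_slide, lineCutoff_slide, shellBase_slide]

theorem foldHalfWidth_slide (R r : ℝ) (x : Fin (m + 5) → ℝ) :
    foldHalfWidth R (slide r x) = foldHalfWidth R x := by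
  simp only [foldHalfWidth, farCutoff, shellHalfWidth, lineBase_slide, lineCutoff_slide]

@[fun_prop]
theorem continuous_farCutoff (R : ℝ) : Continuous (farCutoff (m := m) R) := by
  unfold farCutoff; fun_prop

@[fun_prop]
theorem continuous_foldCenter (R : ℝ) : Continuous (foldCenter (m := m) R) := by
  unfold foldCenter shellCenter; fun_prop

@[fun_prop]
theorem continuous_foldHalfWidth (R : ℝ) : Continuous (foldHalfWidth (m := m) R) := by
  unfold foldHalfWidth shellHalfWidth; fun_prop

end FoldInterval

section Fold

variable {m : ℕ} {A : ProperSubset (Fin (m + 5))} {x y : Fin (m + 5) → ℝ} {R : ℝ}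
  {f f' f'' : BoundaryFamily m} {Ψ Ψ' Ψ'' : (Fin (m + 5) → ℝ) → Target m}

/-- Maps can be folded if their boundary conditions are satisfied beyond this value or a larger
one. -/
def foldThreshold (m : ℕ) : ℝ := lineGap m + 2 + innerSpread m * numPoints m

/-- The points far away from the origin and from the centres of all shells, where maps realizing
boundary conditions beyond `R` with small supports are all equal. -/
def neutralSet (R : ℝ) : Set (Fin (m + 5) → ℝ) :=
  {y | farSpread m R ≤ spread y ∧ ∀ A, R ≤ gap A y → ∃ i, innerSpread m ≤ |chart A y i|}

theorem Realizes.eq_of_mem_neutralSet (hf : SupportedIn (innerSpread m) f)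
    (hf' : SupportedIn (innerSpread m) f') (h : Realizes Ψ f R) (h' : Realizes Ψ' f' R)
    (hy : y ∈ neutralSet R) : Ψ y = Ψ' y := by
  obtain ⟨far, off_centre⟩ := hy
  have outer_large := hundred_mul_numPoints_le m
  have := five_le_numPoints m
  unfold farSpread at far
  by_cases! hA : ∃ A, 0 < gap A y ∧ blockSpread A.1 y < outerSpread m
  · obtain ⟨A, hgap, hs⟩ := hA
    have hR : R ≤ gap A y := by linarith [spread_le_gap_add hgap.le]
    obtain ⟨i, hi⟩ := off_centre A hR
    rw [h.on_shell A y ⟨hR, hs.le⟩, h'.on_shell A y ⟨hR, hs.le⟩, hf A _ i hi, hf' A _ i hi]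
  · have hoff : y ∈ offShells 0 := fun A => (le_or_gt (gap A y) 0).imp_right (hA A)
    rw [h.off_shells y hoff (by linarith), h'.off_shells y hoff (by linarith)]

theorem innerSpread_mul_nonneg (m : ℕ) : 0 ≤ innerSpread m * numPoints m :=
  mul_nonneg (by linarith [twenty_le_innerSpread m]) (by linarith [five_le_numPoints m])

theorem lineGap_add_two_le (hR : foldThreshold m ≤ R) : lineGap m + 2 ≤ R := by
  unfold foldThreshold at hR; linarith [innerSpread_mul_nonneg m]

theorem farSpread_nonneg (hR : foldThreshold m ≤ R) : 0 ≤ farSpread m R := by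
  have outer_pos := outerSpread_pos m
  have lt_lineGap := outerSpread_lt_lineGap m
  unfold farSpread; linarith [lineGap_add_two_le hR]

theorem mem_neutralSet_of_farCutoff_eq_zero (hR : foldThreshold m ≤ R) (h0 : farCutoff R y = 0)
    (hy : |position y - foldCenter R y| = foldHalfWidth R y) : y ∈ neutralSet R := by
  have outer_pos := outerSpread_pos m
  have lt_lineGap := outerSpread_lt_lineGap m
  have separated {i j} (hij : i ≠ j) : farSpread m R ≤ |y i - y j| := by
    rw [foldCenter, foldHalfWidth, h0, zero_mul, zero_mul, sub_zero, sub_zero, one_mul,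
      add_zero] at hy
    linarith [abs_position_le_add_spread_lineBase y hij]
  refine ⟨(separated Fin.zero_ne_one).trans (abs_sub_le_spread y 0 1), fun A _ => ?_⟩
  obtain ⟨i, j, hij, hA, -⟩ := exists_ne_mem_iff_mem A.1 A.1
  obtain ⟨k, hk⟩ := exists_supportRadius_le_abs_chart (A := A) (x := y) <| by
    have := (separated hij).trans (abs_sub_le_blockSpread y hA)
    unfold farSpread at this
    linarith [lineGap_add_two_le hR]
  exact ⟨k, (innerSpread_lt_supportRadius m).le.trans hk⟩

theorem lineCutoff_eq_one_of_abs_chart_le {c : ℝ} (hc : c ≤ 1) (hgap : foldThreshold m ≤ gap A y)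
    (h : ∀ i, |chart A y i| ≤ innerSpread m) : lineCutoff c A y = 1 := by
  have param_le : |lineParam A (chart A y)| * numPoints m ≤ innerSpread m * numPoints m :=
    mul_le_mul_of_nonneg_right ((abs_lineParam_le A _).trans (h _))
      (by linarith [five_le_numPoints m])
  have base_gap := gap_sub_le_gap_slide A (-lineParam A (chart A y)) y
  rw [abs_neg, ← shellBase] at base_gap
  have offset_le : lineOffset A y / foldRadius m ≤ 1 :=
    (div_le_one (foldRadius_pos m)).2 (norm_lineOrigin_le h)
  unfold foldThreshold at hgap
  exact lineCutoff_eq_one (by linarith) (by linarith)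

theorem mem_neutralSet_of_farCutoff_ne_zero (hR : foldThreshold m ≤ R) (h0 : farCutoff R y ≠ 0)
    (hy : |position y - foldCenter R y| = foldHalfWidth R y) : y ∈ neutralSet R := by
  have inner_lt : innerSpread m < foldRadius m := by
    linarith [six_mul_innerSpread_le m, twenty_le_innerSpread m]
  have inner_le : innerSpread m ≤ farSpread m R := by
    unfold farSpread
    linarith [outerSpread_pos m, outerSpread_lt_lineGap m, lineGap_add_two_le hR,
      innerSpread_lt_supportRadius m, five_mul_supportRadius_le m, supportRadius_pos m]
  refine ⟨le_of_mul_le_mul_left ((sub_pos.1 (pos_of_ramp_ne_zero h0)).le.trans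
    (spread_lineBase_le y)) (by linarith [five_le_numPoints m]), fun A hA => ?_⟩
  by_contra! hc
  have chart_le i := (hc i).le
  have cutoff_zero := lineCutoff_eq_one_of_abs_chart_le zero_le_one (hR.trans hA) chart_le
  have cutoff_one := lineCutoff_eq_one_of_abs_chart_le le_rfl (hR.trans hA) chart_le
  have meets := meetsOnly_of_lineCutoff_ne_zero (cutoff_zero.trans_ne one_ne_zero)
  rw [foldCenter, foldHalfWidth, shellCenter_eq meets, shellHalfWidth_eq meets, cutoff_zero,
    cutoff_one, one_mul, mul_one, position_eq_add_lineParam A y] at hy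
  set lam := farCutoff R y
  have one_sub_nonneg : 0 ≤ 1 - lam := sub_nonneg.2 (farCutoff_le_one R y)
  have lam_pos : 0 < lam := (farCutoff_nonneg R y).lt_of_ne' h0
  set p := position (shellBase A y)
  set s := lineParam A (chart A y)
  have s_lt : |s| < innerSpread m := (abs_lineParam_le A _).trans_lt (hc _)
  refine hy.not_lt ?_
  calc |p + s - lam * p| = |(1 - lam) * p + s| := by ring_nf
    _ ≤ (1 - lam) * |p| + |s| := by
      rw [← abs_of_nonneg one_sub_nonneg, ← abs_mul, abs_of_nonneg one_sub_nonneg]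
      exact abs_add_le _ _
    _ < (1 - lam) * |p| + innerSpread m := add_lt_add_right s_lt _
    _ = (1 - lam) * (|p| + innerSpread m) + lam * innerSpread m := by ring
    _ ≤ _ := add_le_add
      (mul_le_mul_of_nonneg_left (add_le_add (abs_position_shellBase_le A y) inner_le)
        one_sub_nonneg)
      (mul_le_mul_of_nonneg_left inner_lt.le lam_pos.le)

theorem mem_neutralSet (hR : foldThreshold m ≤ R)
    (hy : |position y - foldCenter R y| = foldHalfWidth R y) : y ∈ neutralSet R := by
  by_cases h0 : farCutoff R y = 0
  · exact mem_neutralSet_of_farCutoff_eq_zero hR h0 hy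
  · exact mem_neutralSet_of_farCutoff_ne_zero hR h0 hy

/-- The map obtained by running, along each line in the staircase direction, through `Ψ` forwards,
`Ψ'` backwards and `Ψ''` forwards on an interval that is short near infinity. -/
def foldMap (R : ℝ) (Ψ Ψ' Ψ'' : (Fin (m + 5) → ℝ) → Target m) (x : Fin (m + 5) → ℝ) : Target m :=
  zigzag (foldCenter R x - foldHalfWidth R x) (foldCenter R x + foldHalfWidth R x)
    (fun c => Ψ (slide c (lineBase x))) (fun c => Ψ' (slide c (lineBase x)))
    (fun c => Ψ'' (slide c (lineBase x))) (position x)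

theorem slide_lineBase_mem_neutralSet (hR : foldThreshold m ≤ R) {c : ℝ}
    (hc : |c - foldCenter R x| = foldHalfWidth R x) : slide c (lineBase x) ∈ neutralSet R := by
  refine mem_neutralSet hR ?_
  rw [position_slide, foldCenter_slide, foldHalfWidth_slide, lineBase, position_slide,
    foldCenter_slide, foldHalfWidth_slide, add_neg_cancel, zero_add, hc]

theorem continuous_foldMap (hR : foldThreshold m ≤ R) (hΨ : Continuous Ψ) (hΨ' : Continuous Ψ')
    (hΨ'' : Continuous Ψ'') (eq : Set.EqOn Ψ Ψ' (neutralSet R))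
    (eq' : Set.EqOn Ψ' Ψ'' (neutralSet R)) : Continuous (foldMap R Ψ Ψ' Ψ'') := by
  have width_nonneg := foldHalfWidth_nonneg (farSpread_nonneg hR)
  have left_mem (x) :
      slide (foldCenter R x - foldHalfWidth R x) (lineBase x) ∈ neutralSet R :=
    slide_lineBase_mem_neutralSet hR
      (by rw [sub_sub_cancel_left, abs_neg, abs_of_nonneg (width_nonneg x)])
  have right_mem (x) :
      slide (foldCenter R x + foldHalfWidth R x) (lineBase x) ∈ neutralSet R :=
    slide_lineBase_mem_neutralSet hR
      (by rw [add_sub_cancel_left, abs_of_nonneg (width_nonneg x)])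
  have cont : Continuous fun q : (Fin (m + 5) → ℝ) × ℝ => slide q.2 (lineBase q.1) := by fun_prop
  exact continuous_zigzag (by fun_prop) (by fun_prop) (by fun_prop)
    (fun x => by linarith [width_nonneg x]) (hΨ.comp cont) (hΨ'.comp cont) (hΨ''.comp cont)
    (fun x => ⟨eq (right_mem x), eq' (right_mem x)⟩) (fun x => eq' (left_mem x))

/-- The fold of maps realizing boundary conditions beyond `R` realizes the folded boundary
condition beyond this value. -/
def foldBound (m : ℕ) (R : ℝ) : ℝ :=
  (1 + numPoints m) * (2 * ((1 + numPoints m) * farSpread m R + 1) + farSpread m R +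
    outerSpread m + foldRadius m)

theorem le_foldBound_of_shell (hR : foldThreshold m ≤ R) :
    (1 + numPoints m) * ((1 + numPoints m) * farSpread m R + 1) + numPoints m * outerSpread m ≤
      foldBound m R := by
  have := five_le_numPoints m
  have := farSpread_nonneg hR
  have := (foldRadius_pos m).le
  have := (outerSpread_pos m).le
  rw [← sub_nonneg, foldBound]
  ring_nf
  positivity

theorem add_mul_le_foldBound (hR : foldThreshold m ≤ R) :
    R + numPoints m * (outerSpread m + foldRadius m) ≤ foldBound m R := by
  have := five_le_numPoints m
  have far_nonneg := farSpread_nonneg hR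
  have := foldRadius_pos m
  have := outerSpread_pos m
  have : R ≤ farSpread m R := by unfold farSpread; linarith
  have : 0 ≤ foldBound m R - farSpread m R - numPoints m * (outerSpread m + foldRadius m) := by
    rw [foldBound]
    ring_nf
    positivity
  linarith

theorem lt_foldBound_of_offShells (hR : foldThreshold m ≤ R) :
    (1 + numPoints m) * farSpread m R + 1 + (2 * ((1 + numPoints m) * farSpread m R + 1) +
      farSpread m R + foldRadius m) * numPoints m < foldBound m R := by
  have := five_le_numPoints m
  have := farSpread_nonneg hR
  have := foldRadius_pos m
  have := outerSpread_pos m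
  rw [← sub_pos, foldBound]
  ring_nf
  positivity

theorem spread_lineBase_gt_of_mem_fold (hR : foldThreshold m ≤ R) (hx : foldBound m R ≤ spread x)
    (hp : |position x - foldCenter R x| ≤ foldHalfWidth R x) :
    (1 + numPoints m) * farSpread m R + 1 < spread (lineBase x) := by
  by_contra! hw
  have center_le := abs_foldCenter_le R x
  have width_le := foldHalfWidth_le (farSpread_nonneg hR) x
  have position_le : |position x| ≤
      2 * ((1 + numPoints m) * farSpread m R + 1) + farSpread m R + foldRadius m := by
    have := abs_add_le (position x - foldCenter R x) (foldCenter R x)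
    rw [sub_add_cancel] at this
    linarith
  have := mul_le_mul_of_nonneg_right position_le
    (by linarith [five_le_numPoints m] : 0 ≤ numPoints m)
  linarith [spread_le_spread_lineBase_add x, lt_foldBound_of_offShells hR]

theorem position_notMem_fold (hR : foldThreshold m ≤ R) (hx : foldBound m R ≤ spread x)
    (hoff : x ∈ offShells 0) : position x ∉
      Set.Ioc (foldCenter R x - foldHalfWidth R x) (foldCenter R x + foldHalfWidth R x) := by
  rintro ⟨hl, hr⟩
  have far := spread_lineBase_gt_of_mem_fold hR hx (abs_le.2 ⟨by linarith, by linarith⟩)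
  have cutoff_one : farCutoff R x = 1 := ramp_of_one_le (by linarith)
  obtain ⟨A, meets⟩ := exists_meetsOnly x
  have width : foldHalfWidth R x = foldRadius m * lineCutoff 1 A x := by
    rw [foldHalfWidth, cutoff_one, shellHalfWidth_eq meets]; ring
  have cutoff_ne : lineCutoff 1 A x ≠ 0 := fun h0 => by
    rw [width, h0, mul_zero] at hl hr; linarith
  have center : foldCenter R x = position (shellBase A x) := by
    rw [foldCenter, cutoff_one, shellCenter_eq meets, lineCutoff_zero_eq_one cutoff_ne, one_mul,
      one_mul]
  have width_le : foldHalfWidth R x ≤ foldRadius m :=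
    width.trans_le (mul_le_of_le_one_right (foldRadius_pos m).le (lineCutoff_le_one 1 A x))
  rw [center, position_eq_add_lineParam A x] at hl hr
  have param_le : |lineParam A (chart A x)| ≤ foldRadius m := abs_le.2 ⟨by linarith, by linarith⟩
  obtain ⟨offset_lt, gap_gt⟩ := bounds_of_lineCutoff_ne_zero cutoff_ne
  rw [div_lt_iff₀ (foldRadius_pos m)] at offset_lt
  have n_large := five_le_numPoints m
  have radius_pos := foldRadius_pos m
  have outer : outerSpread m ≤ blockSpread A.1 x := (hoff A).resolve_left <| not_le_of_gt <| by
    have gap_le := gap_sub_le_gap_slide A (lineParam A (chart A x)) (shellBase A x)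
    rw [slide_lineParam_shellBase] at gap_le
    have := mul_le_mul_of_nonneg_right param_le (by linarith : 0 ≤ numPoints m)
    nlinarith [outerSpread_add_le_lineGap m, eight_mul_foldRadius_le m,
      five_mul_supportRadius_le m]
  have inner := blockSpread_le_of_abs_lineParam_le param_le offset_lt.le
  have : numPoints m * ((3 - 1) * foldRadius m + foldRadius m * numPoints m) < outerSpread m := by
    unfold outerSpread supportRadius
    exact mul_lt_mul_of_pos_left (by nlinarith) (by linarith)
  linarith

theorem le_foldBound (hR : foldThreshold m ≤ R) : R ≤ foldBound m R :=
  (le_add_of_nonneg_right (mul_nonneg (by linarith [five_le_numPoints m])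
    (by linarith [foldRadius_pos m, outerSpread_pos m]))).trans (add_mul_le_foldBound hR)

section OnShell

variable (hR : foldThreshold m ≤ R) (hx : x ∈ shell (foldBound m R) A)
include hR hx

theorem mem_shell_of_mem_shell_foldBound : x ∈ shell R A :=
  shell_anti (le_foldBound hR) A hx

theorem meetsOnly_of_mem_shell : MeetsOnly A x := by
  have := (mem_shell_of_mem_shell_foldBound hR hx).1
  have := outerSpread_pos m
  exact meetsOnly_of_gap_nonneg hx.2
    (by linarith [lineGap_add_two_le hR, outerSpread_lt_lineGap m])

theorem farCutoff_eq_one_of_mem_shell : farCutoff R x = 1 := by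
  obtain ⟨i, j, hij, hA, -⟩ := exists_ne_mem_iff_mem A.1 A.1
  have n_large := five_le_numPoints m
  have position_le : |position x| * numPoints m ≤
      (outerSpread m + spread (lineBase x)) * numPoints m := by
    refine mul_le_mul_of_nonneg_right ?_ (by linarith)
    linarith [abs_position_le_add_spread_lineBase x hij, abs_sub_le_blockSpread x hA, hx.2]
  refine ramp_of_one_le ?_
  rw [le_sub_iff_add_le']
  refine le_of_mul_le_mul_left ?_ (by linarith : 0 < 1 + numPoints m)
  linarith [hx.1, gap_le_spread A x, spread_le_spread_lineBase_add x, le_foldBound_of_shell hR]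

theorem le_gap_slide_shellBase {r : ℝ} (hr : |r| ≤ foldRadius m) :
    R ≤ gap A (slide r (shellBase A x)) := by
  have param_le : |lineParam A (chart A x)| ≤ outerSpread m :=
    (abs_lineParam_le A _).trans ((abs_chart_le_blockSpread A x _).trans hx.2)
  have gap_le := gap_sub_le_gap_slide A (-lineParam A (chart A x) + r) x
  have : |-lineParam A (chart A x) + r| * numPoints m ≤
      (outerSpread m + foldRadius m) * numPoints m := by
    refine mul_le_mul_of_nonneg_right ((abs_add_le _ _).trans ?_)
      (by linarith [five_le_numPoints m])
    rw [abs_neg]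
    exact add_le_add param_le hr
  rw [shellBase, slide_slide]
  linarith [hx.1, add_mul_le_foldBound hR]

theorem lineCutoff_eq_ramp_of_mem_shell {c : ℝ} (hc : c ≤ 1) :
    lineCutoff c A x = ramp (3 - c - lineOffset A x / foldRadius m) := by
  have := le_gap_slide_shellBase hR hx (abs_zero.trans_le (foldRadius_pos m).le)
  rw [slide_zero] at this
  exact lineCutoff_eq_ramp (by linarith [lineGap_add_two_le hR])

theorem foldCenter_eq_of_mem_shell (hoff : lineOffset A x ≤ 2 * foldRadius m) :
    foldCenter R x = position (shellBase A x) := by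
  have := (div_le_iff₀ (foldRadius_pos m)).2 hoff
  rw [foldCenter, farCutoff_eq_one_of_mem_shell hR hx,
    shellCenter_eq (meetsOnly_of_mem_shell hR hx),
    lineCutoff_eq_ramp_of_mem_shell hR hx zero_le_one, ramp_of_one_le (by linarith), one_mul,
    one_mul]

theorem foldHalfWidth_eq_of_mem_shell :
    foldHalfWidth R x = foldRadius m * ramp (2 - lineOffset A x / foldRadius m) := by
  rw [foldHalfWidth, farCutoff_eq_one_of_mem_shell hR hx,
    shellHalfWidth_eq (meetsOnly_of_mem_shell hR hx),
    lineCutoff_eq_ramp_of_mem_shell hR hx le_rfl]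
  ring_nf

theorem Realizes.slide_shellBase (hΨ : Realizes Ψ f R) (hoff : lineOffset A x ≤ 2 * foldRadius m)
    {r : ℝ} (hr : |r| ≤ foldRadius m) : Ψ (slide r (shellBase A x)) =
      shuffle A.1 • f A (lineOrigin A (chart A x) + r • chart A (staircase m)) := by
  rw [← chart_slide_shellBase]
  exact hΨ.on_shell A _ ⟨le_gap_slide_shellBase hR hx hr,
    blockSpread_slide_shellBase_le hr (by linarith [foldRadius_pos m])⟩

theorem foldMap_eq_of_lineOffset_le (hΨ : Realizes Ψ f R) (hΨ' : Realizes Ψ' f' R)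
    (hΨ'' : Realizes Ψ'' f'' R) (hoff : lineOffset A x ≤ foldRadius m) :
    foldMap R Ψ Ψ' Ψ'' x = shuffle A.1 • foldFamily f f' f'' A (chart A x) := by
  have radius_pos := foldRadius_pos m
  have := (div_le_one radius_pos).2 hoff
  rw [foldMap, foldCenter_eq_of_mem_shell hR hx (by linarith),
    foldHalfWidth_eq_of_mem_shell hR hx, ramp_of_one_le (by linarith), mul_one, sub_eq_add_neg,
    position_eq_add_lineParam A x, zigzag_comp_add]
  simp only [slide_lineBase_eq_slide_shellBase]
  refine zigzag_map (shuffle A.1 • ·) ?_ fun r hr hr' => ?_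
  · rw [slide_lineParam_shellBase, lineOrigin_add_lineParam_smul,
      hΨ.on_shell A x (mem_shell_of_mem_shell_foldBound hR hx)]
  · have hr := abs_le.2 ⟨hr, hr'⟩
    have hoff : lineOffset A x ≤ 2 * foldRadius m := by linarith
    exact ⟨hΨ.slide_shellBase hR hx hoff hr, hΨ'.slide_shellBase hR hx hoff hr,
      hΨ''.slide_shellBase hR hx hoff hr⟩

end OnShell

variable (hf : SupportedIn (innerSpread m) f) (hf' : SupportedIn (innerSpread m) f')
  (hf'' : SupportedIn (innerSpread m) f'')
include hf hf' hf''

theorem foldFamily_eq_basepoint {q : InBlockIdx m A.1.card → ℝ}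
    (hq : foldRadius m < ‖lineOrigin A q‖) : foldFamily f f' f'' A q = basepoint m := by
  have on_line {g : BoundaryFamily m} (hg : SupportedIn (innerSpread m) g) (r : ℝ) :
      g A (lineOrigin A q + r • chart A (staircase m)) = basepoint m := by
    refine eq_basepoint_of_foldRadius_lt hg ?_
    rwa [lineOrigin_add_smul, lineOrigin_lineOrigin]
  exact zigzag_eq_const (on_line hf _) fun r _ _ => ⟨on_line hf r, on_line hf' r, on_line hf'' r⟩

variable (hΨ : Realizes Ψ f R) (hΨ' : Realizes Ψ' f' R) (hΨ'' : Realizes Ψ'' f'' R)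
  (hR : foldThreshold m ≤ R)
include hΨ hΨ' hΨ'' hR

theorem foldMap_eq_of_foldRadius_lt (hx : x ∈ shell (foldBound m R) A)
    (hoff : foldRadius m < lineOffset A x) :
    foldMap R Ψ Ψ' Ψ'' x = shuffle A.1 • basepoint m := by
  have self : Ψ (slide (position x) (lineBase x)) = shuffle A.1 • basepoint m := by
    rw [slide_position_lineBase, hΨ.on_shell A x (mem_shell_of_mem_shell_foldBound hR hx),
      eq_basepoint_of_foldRadius_lt hf hoff]
  have width := foldHalfWidth_eq_of_mem_shell hR hx
  rcases le_or_gt (lineOffset A x) (2 * foldRadius m) with hle | hgt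
  · have on_line {g : BoundaryFamily m} {Θ} (hΘ : Realizes Θ g R)
        (hg : SupportedIn (innerSpread m) g) {r : ℝ} (hr : |r| ≤ foldRadius m) :
        Θ (slide r (shellBase A x)) = shuffle A.1 • basepoint m := by
      rw [hΘ.slide_shellBase hR hx hle hr, eq_basepoint_of_foldRadius_lt hg]
      rwa [lineOrigin_add_smul, lineOrigin_lineOrigin]
    have width_le : foldHalfWidth R x ≤ foldRadius m :=
      width.trans_le (mul_le_of_le_one_right (foldRadius_pos m).le (ramp_le_one _))
    refine zigzag_eq_const self fun c hc hc' => ?_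
    rw [foldCenter_eq_of_mem_shell hR hx hle] at hc hc'
    have hr : |c - position (shellBase A x)| ≤ foldRadius m :=
      abs_le.2 ⟨by linarith, by linarith⟩
    rw [← add_sub_cancel (position (shellBase A x)) c, slide_lineBase_eq_slide_shellBase]
    exact ⟨on_line hΨ hf hr, on_line hΨ' hf' hr, on_line hΨ'' hf'' hr⟩
  · have := (lt_div_iff₀ (foldRadius_pos m)).2 hgt
    rw [foldMap, width, ramp_of_nonpos (by linarith), mul_zero, sub_zero, add_zero, zigzag_self,
      self]

theorem foldMap_eq_of_mem_shell (hx : x ∈ shell (foldBound m R) A) :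
    foldMap R Ψ Ψ' Ψ'' x = shuffle A.1 • foldFamily f f' f'' A (chart A x) := by
  rcases le_or_gt (lineOffset A x) (foldRadius m) with hle | hgt
  · exact foldMap_eq_of_lineOffset_le hR hx hΨ hΨ' hΨ'' hle
  · rw [foldMap_eq_of_foldRadius_lt hf hf' hf'' hΨ hΨ' hΨ'' hR hx hgt,
      foldFamily_eq_basepoint hf hf' hf'' hgt]

end Fold

theorem Extendable.foldFamily {m : ℕ} {f f' f'' : BoundaryFamily m}
    (hf : SupportedIn (innerSpread m) f) (hf' : SupportedIn (innerSpread m) f')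
    (hf'' : SupportedIn (innerSpread m) f'') (h : Extendable f) (h' : Extendable f')
    (h'' : Extendable f'') : Extendable (foldFamily f f' f'') := by
  obtain ⟨Ψ, R, hΨ, real⟩ := h
  obtain ⟨Ψ', R', hΨ', real'⟩ := h'
  obtain ⟨Ψ'', R'', hΨ'', real''⟩ := h''
  obtain ⟨S, hR, hR', hR'', hS⟩ : ∃ S, R ≤ S ∧ R' ≤ S ∧ R'' ≤ S ∧ foldThreshold m ≤ S :=
    ⟨max (max R R') (max R'' (foldThreshold m)), by simp, by simp, by simp, by simp⟩
  replace real := real.mono hR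
  replace real' := real'.mono hR'
  replace real'' := real''.mono hR''
  refine ⟨foldMap S Ψ Ψ' Ψ'', foldBound m S, ?_, fun A x hx => ?_, fun x hoff hx => ?_⟩
  · exact continuous_foldMap hS hΨ hΨ' hΨ''
      (fun _ => real.eq_of_mem_neutralSet hf hf' real')
      (fun _ => real'.eq_of_mem_neutralSet hf' hf'' real'')
  · exact foldMap_eq_of_mem_shell hf hf' hf'' real real' real'' hS hx
  · rw [foldMap, zigzag_of_notMem_Ioc _ _ _ (position_notMem_fold hS hx hoff),
      slide_position_lineBase]
    exact real.off_shells x hoff ((le_foldBound hS).trans hx)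

section CubeMaps

open scoped unitInterval Topology.Homotopy

variable {N K : Type*}

/-- The affine identification of the unit cube with the cube of radius `L` about the origin. -/
def cubeScale (L : ℝ) (t : N → I) : N → ℝ := fun i => L * (2 * t i - 1)

/-- The inverse of `cubeScale`, extended by projection to the cube. -/
def cubeUnscale (L : ℝ) (q : N → ℝ) : N → I :=
  fun i => Set.projIcc 0 1 zero_le_one (q i / (2 * L) + 1 / 2)

variable {L L' : ℝ}

@[fun_prop]
theorem continuous_cubeScale (L : ℝ) : Continuous (cubeScale (N := N) L) := by
  unfold cubeScale; fun_prop

@[fun_prop]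
theorem continuous_cubeUnscale (L : ℝ) : Continuous (cubeUnscale (N := N) L) :=
  continuous_pi fun _ => continuous_projIcc.comp (by fun_prop)

theorem cubeUnscale_cubeScale (hL : 0 < L) (t : N → I) : cubeUnscale L (cubeScale L t) = t := by
  funext i
  have h : L * (2 * (t i : ℝ) - 1) / (2 * L) + 1 / 2 = t i := by field_simp; ring
  rw [cubeUnscale, cubeScale, h, Set.projIcc_val]

theorem cubeScale_cubeUnscale (hL : 0 < L) {q : N → ℝ} (h : ∀ i, |q i| ≤ L) :
    cubeScale L (cubeUnscale L q) = q := by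
  funext i
  obtain ⟨hl, hr⟩ := abs_le.1 (h i)
  have mem : q i / (2 * L) + 1 / 2 ∈ Set.Icc (0 : ℝ) 1 := by
    rw [show q i / (2 * L) + 1 / 2 = (q i + L) / (2 * L) by field_simp]
    exact ⟨div_nonneg (by linarith) (by linarith), (div_le_one (by linarith)).2 (by linarith)⟩
  rw [cubeScale, cubeUnscale, Set.projIcc_of_mem _ mem]
  field_simp
  ring

theorem cubeUnscale_mem_boundary (hL : 0 < L) {q : N → ℝ} {i : N} (h : L ≤ |q i|) :
    cubeUnscale L q ∈ Cube.boundary N := by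
  have shift : q i / (2 * L) + 1 / 2 = (q i + L) / (2 * L) := by field_simp
  refine ⟨i, ?_⟩
  rw [cubeUnscale, shift]
  rcases le_abs.1 h with h | h
  · exact Or.inr (Set.projIcc_of_right_le _ ((one_le_div (by linarith)).2 (by linarith)))
  · exact Or.inl (Set.projIcc_of_le_left _ (div_nonpos_of_nonpos_of_nonneg (by linarith)
      (by linarith)))

theorem exists_le_abs_cubeScale (hL : 0 < L) {t : N → I} (h : t ∈ Cube.boundary N) :
    ∃ i, L ≤ |cubeScale L t i| := by
  obtain ⟨i, h | h⟩ := h <;> refine ⟨i, ?_⟩ <;> norm_num [cubeScale, h, abs_of_pos hL]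

theorem zigzag_neg_self (hL : 0 < L) (a a' a'' : ℝ → K) (t : I) :
    zigzag (-L) L a a' a'' (L * (2 * (t : ℝ) - 1)) =
      if (t : ℝ) ≤ 1 / 4 then a (L * (2 * (4 * t) - 1))
      else if (t : ℝ) ≤ 1 / 2 then a' (L * (2 * (1 - (4 * t - 1)) - 1))
      else a'' (L * (2 * (2 * t - 1) - 1)) := by
  obtain ⟨t, ht⟩ := t
  dsimp only
  unfold zigzag
  rcases ht.1.eq_or_lt with rfl | h0
  · rw [if_pos (by linarith), if_pos (by norm_num)]; ring_nf
  rw [if_neg (by nlinarith)]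
  rcases le_or_gt t (1 / 4) with h4 | h4
  · rw [if_pos (by nlinarith), if_pos h4]; ring_nf
  rw [if_neg (by nlinarith), if_neg h4.not_ge]
  rcases le_or_gt t (1 / 2) with h2 | h2
  · rw [if_pos (by nlinarith), if_pos h2]; ring_nf
  rw [if_neg (by nlinarith), if_neg h2.not_ge, if_pos (by nlinarith [ht.2])]; ring_nf

variable [TopologicalSpace K] {k : K}

/-- A continuous map on `N → ℝ` with constant value `k` outside the open cube of radius `L`. -/
structure IsCubeMap (k : K) (L : ℝ) (f : (N → ℝ) → K) : Prop where
  pos : 0 < L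
  continuous : Continuous f
  eq_of_le : ∀ q i, L ≤ |q i| → f q = k

/-- The generalized loop given by restriction to the cube. -/
def IsCubeMap.genLoop {f : (N → ℝ) → K} (h : IsCubeMap k L f) : Ω^ N K k :=
  ⟨⟨fun t => f (cubeScale L t), h.continuous.comp (continuous_cubeScale L)⟩, fun _ ht =>
    let ⟨i, hi⟩ := exists_le_abs_cubeScale h.pos ht
    h.eq_of_le _ i hi⟩

/-- The class of a generalized loop, with its type made visible to the group operations. -/
def homotopyClass (γ : Ω^ N K k) : HomotopyGroup N K k := ⟦γ⟧

/-- The map `f` is constant outside the cube of radius `L` and represents the homotopy class `e`. -/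
def Represents (L : ℝ) (f : (N → ℝ) → K) (e : HomotopyGroup N K k) : Prop :=
  ∃ h : IsCubeMap k L f, homotopyClass h.genLoop = e

variable {f f' f'' g : (N → ℝ) → K} {e e' e'' : HomotopyGroup N K k}

theorem IsCubeMap.exists_represents (h : IsCubeMap k L f) :
    ∃ e : HomotopyGroup N K k, Represents L f e :=
  ⟨_, h, rfl⟩

theorem IsCubeMap.genLoop_apply (h : IsCubeMap k L f) (t : N → I) :
    h.genLoop t = f (cubeScale L t) := rfl

theorem IsCubeMap.genLoop_cubeUnscale (h : IsCubeMap k L f) (q : N → ℝ) :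
    h.genLoop (cubeUnscale L q) = f q := by
  by_cases! hq : ∃ i, L ≤ |q i|
  · obtain ⟨i, hi⟩ := hq
    rw [h.eq_of_le q i hi]
    exact h.genLoop.2 _ (cubeUnscale_mem_boundary h.pos hi)
  · rw [h.genLoop_apply, cubeScale_cubeUnscale h.pos fun i => (hq i).le]

theorem Represents.of_homotopy {H : ℝ × (N → ℝ) → K} (hH : Continuous H)
    (supp : ∀ τ ∈ I, ∀ q i, L ≤ |q i| → H (τ, q) = k)
    (h : Represents L (fun q => H (0, q)) e) : Represents L (fun q => H (1, q)) e := by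
  obtain ⟨h₀, rfl⟩ := h
  have h₁ : IsCubeMap k L fun q => H (1, q) :=
    ⟨h₀.pos, by fun_prop, supp 1 unitInterval.one_mem⟩
  refine ⟨h₁, (Quotient.sound ?_).symm⟩
  refine ⟨⟨⟨⟨fun p => H (p.1, cubeScale L p.2), by fun_prop⟩, fun _ => ?_, fun _ => ?_⟩, ?_⟩⟩
  · simp only [Set.Icc.coe_zero]; rfl
  · simp only [Set.Icc.coe_one]; rfl
  · intro τ t ht
    obtain ⟨i, hi⟩ := exists_le_abs_cubeScale h₀.pos ht
    exact (supp τ τ.2 _ i hi).trans (h₀.eq_of_le _ i hi).symm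

theorem Represents.exists_homotopy (hf : Represents L f e) (hg : Represents L g e) :
    ∃ H : ℝ × (N → ℝ) → K, Continuous H ∧ (∀ q, H (0, q) = f q) ∧ (∀ q, H (1, q) = g q) ∧
      ∀ τ q i, L ≤ |q i| → H (τ, q) = k := by
  obtain ⟨hf, rfl⟩ := hf
  obtain ⟨hg, hfg⟩ := hg
  obtain ⟨F⟩ := Quotient.exact hfg.symm
  refine ⟨fun p => F (Set.projIcc 0 1 zero_le_one p.1, cubeUnscale L p.2),
    F.continuous.comp ((continuous_projIcc.comp continuous_fst).prodMk (by fun_prop)),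
    fun q => ?_, fun q => ?_, fun τ q i hi => ?_⟩
  · simp only [Set.projIcc_left]
    exact (F.apply_zero _).trans (hf.genLoop_cubeUnscale q)
  · simp only [Set.projIcc_right]
    exact (F.apply_one _).trans (hg.genLoop_cubeUnscale q)
  · exact (F.eq_fst _ (cubeUnscale_mem_boundary hf.pos hi)).trans
      (hf.genLoop.2 _ (cubeUnscale_mem_boundary hf.pos hi))

theorem exists_representative (hL : 0 < L) (e : HomotopyGroup N K k) :
    ∃ f : (N → ℝ) → K, Represents L f e := by
  obtain ⟨γ, rfl⟩ := Quotient.exists_rep e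
  have hf : IsCubeMap k L fun q => γ (cubeUnscale L q) :=
    ⟨hL, (ContinuousMap.continuous γ.1).comp (continuous_cubeUnscale L),
      fun _ _ hi => γ.2 _ (cubeUnscale_mem_boundary hL hi)⟩
  refine ⟨_, hf, congrArg _ (GenLoop.ext _ _ fun t => ?_)⟩
  rw [hf.genLoop_apply, cubeUnscale_cubeScale hL]

theorem le_abs_smul_apply {c : ℝ} (hc : 1 ≤ c) {q : N → ℝ} {i : N} (h : L ≤ |q i|) :
    L ≤ |(c • q) i| := by
  rw [Pi.smul_apply, smul_eq_mul, abs_mul, abs_of_nonneg (by linarith)]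
  exact h.trans (le_mul_of_one_le_left (abs_nonneg _) hc)

theorem Represents.mono (h : Represents L f e) (hL : L ≤ L') : Represents L' f e := by
  have ⟨hf, _⟩ := h
  have one_le : 1 ≤ L' / L := (one_le_div hf.pos).2 hL
  have hf' := hf.continuous
  obtain ⟨hg, rfl⟩ := Represents.of_homotopy (L := L) (e := e)
    (H := fun p : ℝ × (N → ℝ) => f ((1 + p.1 * (L' / L - 1)) • p.2)) (by fun_prop)
    (fun τ hτ q i hi => hf.eq_of_le _ i (le_abs_smul_apply
      (le_add_of_nonneg_right (mul_nonneg hτ.1 (by linarith))) hi))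
    (by simpa only [zero_mul, add_zero, one_smul] using h)
  have rescale (t : N → I) : cubeScale L' t = (1 + 1 * (L' / L - 1)) • cubeScale L t := by
    funext i
    have := hf.pos.ne'
    simp only [cubeScale, Pi.smul_apply, smul_eq_mul]
    field_simp
    ring
  refine ⟨⟨hf.pos.trans_le hL, hf.continuous, fun q i hi => hf.eq_of_le q i (hL.trans hi)⟩,
    congrArg _ (GenLoop.ext _ _ fun t => ?_)⟩
  rw [IsCubeMap.genLoop_apply, IsCubeMap.genLoop_apply, rescale]

variable [DecidableEq N]

/-- The zigzag along the lines in the direction of the `i`-th coordinate of the cube. -/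
def coordZigzag (L : ℝ) (i : N) (f f' f'' : (N → ℝ) → K) (q : N → ℝ) : K :=
  zigzag (-L) L (fun r => f (Function.update q i r)) (fun r => f' (Function.update q i r))
    (fun r => f'' (Function.update q i r)) (q i)

theorem IsCubeMap.apply_update (h : IsCubeMap k L f) (q : N → ℝ) (i : N) {r : ℝ} (hr : L ≤ |r|) :
    f (Function.update q i r) = k :=
  h.eq_of_le _ i (by rwa [Function.update_self])

theorem IsCubeMap.coordZigzag (h : IsCubeMap k L f) (h' : IsCubeMap k L f')
    (h'' : IsCubeMap k L f'') (i : N) : IsCubeMap k L (coordZigzag L i f f' f'') := by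
  have hL := h.pos
  have continuous_update : Continuous fun p : (N → ℝ) × ℝ => Function.update p.1 i p.2 :=
    continuous_fst.update i continuous_snd
  have right : L ≤ |L| := le_abs_self L
  have left : L ≤ |-L| := by rwa [abs_neg]
  refine ⟨hL, continuous_zigzag (by fun_prop) (by fun_prop) (by fun_prop) (fun _ => by linarith)
    (h.continuous.comp continuous_update) (h'.continuous.comp continuous_update)
    (h''.continuous.comp continuous_update) (fun q => ⟨?_, ?_⟩) (fun q => ?_), fun q j hj => ?_⟩
  · rw [h.apply_update q i right, h'.apply_update q i right]
  · rw [h'.apply_update q i right, h''.apply_update q i right]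
  · rw [h'.apply_update q i left, h''.apply_update q i left]
  · obtain rfl | hji := eq_or_ne j i
    · rcases eq_or_ne (q j) L with hq | hq
      · rw [SchwartzGenus.coordZigzag, zigzag, hq, if_neg (by linarith), if_neg (by linarith),
          if_neg (by linarith), if_pos le_rfl]
        exact h''.apply_update q j (right.trans_eq (by ring_nf))
      · rw [SchwartzGenus.coordZigzag, zigzag_of_notMem_Ioc]
        · exact h.apply_update q j hj
        · rintro ⟨hl, hr⟩
          exact (abs_lt.2 ⟨hl, hr.lt_of_ne hq⟩).not_ge hj
    · have const {f : (N → ℝ) → K} (h : IsCubeMap k L f) (r : ℝ) :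
          f (Function.update q i r) = k :=
        h.eq_of_le _ j (by rwa [Function.update_of_ne hji])
      exact zigzag_eq_const (const h _) fun r _ _ => ⟨const h r, const h' r, const h'' r⟩

theorem cubeScale_update (L : ℝ) (t : N → I) (i : N) (r : I) :
    cubeScale L (Function.update t i r) =
      Function.update (cubeScale L t) i (L * (2 * (r : ℝ) - 1)) := by
  funext j
  obtain rfl | h := eq_or_ne j i <;> simp [cubeScale, *]

theorem transAt_transAt_symmAt_apply (i : N) (γ γ' γ'' : Ω^ N K k) (t : N → I) :
    GenLoop.transAt i (GenLoop.transAt i γ (GenLoop.symmAt i γ')) γ'' t =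
      if (t i : ℝ) ≤ 1 / 4 then γ (Function.update t i (Set.projIcc 0 1 zero_le_one (4 * t i)))
      else if (t i : ℝ) ≤ 1 / 2 then
        γ' (Function.update t i (σ (Set.projIcc 0 1 zero_le_one (4 * t i - 1))))
      else γ'' (Function.update t i (Set.projIcc 0 1 zero_le_one (2 * t i - 1))) := by
  have symm_apply (γ : Ω^ N K k) (s : N → I) :
      GenLoop.symmAt i γ s = γ (Function.update s i (σ (s i))) :=
    congrArg γ (funext fun j => by obtain rfl | h := eq_or_ne j i <;> simp [*])
  have four_mul : 2 * (2 * (t i : ℝ)) = 4 * t i := by ring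
  unfold GenLoop.transAt
  simp only [GenLoop.coe_copy, symm_apply, Function.update_self, Function.update_idem]
  rcases le_or_gt (t i : ℝ) (1 / 2) with h2 | h2
  · have coe_double : (Set.projIcc (0 : ℝ) 1 zero_le_one (2 * (t i : ℝ)) : ℝ) = 2 * t i := by
      rw [Set.projIcc_of_mem _ ⟨by linarith [(t i).2.1], by linarith⟩]
    rw [if_pos h2, if_pos h2, coe_double, four_mul]
    exact if_congr ⟨fun h => by linarith, fun h => by linarith⟩ rfl rfl
  · rw [if_neg h2.not_ge, if_neg h2.not_ge, if_neg (by linarith)]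

theorem IsCubeMap.genLoop_coordZigzag (h : IsCubeMap k L f) (h' : IsCubeMap k L f')
    (h'' : IsCubeMap k L f'') (i : N) :
    (h.coordZigzag h' h'' i).genLoop = GenLoop.transAt i
      (GenLoop.transAt i h.genLoop (GenLoop.symmAt i h'.genLoop)) h''.genLoop := by
  refine GenLoop.ext _ _ fun t => ?_
  have t0 := (t i).2.1
  have t1 := (t i).2.2
  have coe_projIcc {r : ℝ} (h0 : 0 ≤ r) (h1 : r ≤ 1) :
      (Set.projIcc 0 1 zero_le_one r : ℝ) = r := by
    rw [Set.projIcc_of_mem _ ⟨h0, h1⟩]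
  rw [transAt_transAt_symmAt_apply, genLoop_apply, SchwartzGenus.coordZigzag,
    show cubeScale L t i = L * (2 * (t i : ℝ) - 1) from rfl, zigzag_neg_self h.pos]
  simp only [genLoop_apply, cubeScale_update, unitInterval.coe_symm_eq]
  split_ifs with h4 h2
  · rw [coe_projIcc (by linarith) (by linarith)]
  · rw [coe_projIcc (by linarith) (by linarith)]
  · rw [coe_projIcc (by linarith) (by linarith)]

theorem Represents.coordZigzag [Nontrivial N] (h : Represents L f e) (h' : Represents L f' e')
    (h'' : Represents L f'' e'') (i : N) :
    Represents L (coordZigzag L i f f' f'') (e * e'⁻¹ * e'') := by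
  obtain ⟨h, rfl⟩ := h
  obtain ⟨h', rfl⟩ := h'
  obtain ⟨h'', rfl⟩ := h''
  have class_mul (γ γ' : Ω^ N K k) :
      homotopyClass γ * homotopyClass γ' = homotopyClass (GenLoop.transAt i γ γ') :=
    (mul_comm _ _).trans HomotopyGroup.mul_spec
  have class_inv (γ : Ω^ N K k) : (homotopyClass γ)⁻¹ = homotopyClass (GenLoop.symmAt i γ) :=
    HomotopyGroup.inv_spec
  refine ⟨h.coordZigzag h' h'' i, ?_⟩
  rw [h.genLoop_coordZigzag h' h'', class_inv, class_mul, class_mul]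

end CubeMaps

section FoldClasses

variable {m : ℕ} {A : ProperSubset (Fin (m + 5))} {f f' f'' g : BoundaryFamily m}

theorem Extendable.congr {e : ∀ A : ProperSubset (Fin (m + 5)),
      HomotopyGroup (InBlockIdx m A.1.card) (Target m) (basepoint m)}
    (hf : ∀ A, Represents (supportRadius m) (f A) (e A))
    (hg : ∀ A, Represents (supportRadius m) (g A) (e A)) (h : Extendable f) : Extendable g := by
  choose H hH left right supp using fun A => (hf A).exists_homotopy (hg A)
  have := Extendable.of_homotopy hH (fun τ A => supp A τ) (by simpa only [left] using h)
  simpa only [right] using this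

/-- The shear of the chart of `A` that moves, at time `1`, the direction of the main coordinate to
the staircase direction. -/
def shear (A : ProperSubset (Fin (m + 5))) (τ : ℝ) (c : InBlockIdx m A.1.card → ℝ) :
    InBlockIdx m A.1.card → ℝ :=
  c + (τ * c (mainIdx A)) • (chart A (staircase m) - Pi.single (mainIdx A) 1)

@[fun_prop]
theorem continuous_shear {X : Type*} [TopologicalSpace X] {τ : X → ℝ}
    {c : X → InBlockIdx m A.1.card → ℝ} (hτ : Continuous τ) (hc : Continuous c) :
    Continuous fun x => shear A (τ x) (c x) := by
  unfold shear; fun_prop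

theorem shear_zero (A : ProperSubset (Fin (m + 5))) (c) : shear A 0 c = c := by
  rw [shear, zero_mul, zero_smul, add_zero]

theorem shear_one (A : ProperSubset (Fin (m + 5))) (c) :
    shear A 1 c = Function.update c (mainIdx A) 0 + c (mainIdx A) • chart A (staircase m) := by
  funext i
  obtain rfl | h := eq_or_ne i (mainIdx A)
  · simp only [shear, one_mul, Pi.add_apply, Pi.smul_apply, Pi.sub_apply, Pi.single_eq_same,
      smul_eq_mul, Function.update_self, zero_add]
    ring
  · simp [shear, h]

theorem lineParam_shear_one (A : ProperSubset (Fin (m + 5))) (c) :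
    lineParam A (shear A 1 c) = c (mainIdx A) := by
  rw [shear_one, lineParam_add_smul, lineParam, Function.update_self, zero_div, zero_add]

theorem shear_one_update (A : ProperSubset (Fin (m + 5))) (c) (r : ℝ) :
    shear A 1 (Function.update c (mainIdx A) r) =
      lineOrigin A (shear A 1 c) + r • chart A (staircase m) := by
  rw [lineOrigin, lineParam_shear_one, shear_one, shear_one, Function.update_idem,
    Function.update_self, add_sub_cancel_right]

theorem foldFamily_shear_one (f f' f'' : BoundaryFamily m) (A : ProperSubset (Fin (m + 5))) (c) :
    foldFamily f f' f'' A (shear A 1 c) = coordZigzag (foldRadius m) (mainIdx A)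
      (fun c => f A (shear A 1 c)) (fun c => f' A (shear A 1 c)) (fun c => f'' A (shear A 1 c))
      c := by
  simp only [foldFamily, coordZigzag, shear_one_update, lineParam_shear_one]

theorem abs_le_abs_shear_add {τ : ℝ} (hτ : τ ∈ unitInterval) (c) (i : InBlockIdx m A.1.card) :
    |c i| ≤ |shear A τ c i| + |lineParam A (shear A τ c)| * numPoints m := by
  set p := chart A (staircase m) with hp
  have one_le : 1 ≤ p (mainIdx A) := one_le_chart_staircase A _
  have shear_main : shear A τ c (mainIdx A) = c (mainIdx A) * (1 + τ * (p (mainIdx A) - 1)) := by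
    simp only [shear, Pi.add_apply, Pi.smul_apply, Pi.sub_apply, Pi.single_eq_same, smul_eq_mul]
    ring
  have one_le_factor : 1 ≤ 1 + τ * (p (mainIdx A) - 1) :=
    le_add_of_nonneg_right (mul_nonneg hτ.1 (by linarith))
  obtain rfl | hi := eq_or_ne i (mainIdx A)
  · rw [shear_main, abs_mul, abs_of_pos (zero_lt_one.trans_le one_le_factor)]
    exact (le_mul_of_one_le_right (abs_nonneg _) one_le_factor).trans
      (le_add_of_nonneg_right (mul_nonneg (abs_nonneg _) (by linarith [five_le_numPoints m])))
  have shear_apply : shear A τ c i = c i + τ * c (mainIdx A) * p i := by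
    simp only [shear, Pi.add_apply, Pi.smul_apply, Pi.sub_apply, Pi.single_eq_of_ne hi, smul_eq_mul,
      sub_zero, hp]
  have displacement_le : |τ * c (mainIdx A)| ≤ |lineParam A (shear A τ c)| := by
    rw [lineParam, shear_main, ← hp, abs_div, abs_mul, abs_mul, abs_of_nonneg hτ.1,
      abs_of_pos (by linarith : 0 < 1 + τ * (p (mainIdx A) - 1)),
      abs_of_pos (by linarith : 0 < p (mainIdx A)), le_div_iff₀ (by linarith)]
    nlinarith [abs_nonneg (c (mainIdx A)), hτ.2]
  rw [shear_apply]
  linarith [abs_mul_chart_staircase_le displacement_le i,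
    abs_sub (c i + τ * c (mainIdx A) * p i) (τ * c (mainIdx A) * p i),
    congrArg abs (add_sub_cancel_right (c i) (τ * c (mainIdx A) * p i))]

theorem apply_shear_eq_basepoint (hf : SupportedIn (innerSpread m) f) {τ : ℝ}
    (hτ : τ ∈ unitInterval) {c} {i : InBlockIdx m A.1.card} (hi : foldRadius m ≤ |c i|) :
    f A (shear A τ c) = basepoint m := by
  by_contra hne
  have lt (j) : |shear A τ c j| < innerSpread m := lt_of_not_ge fun hj => hne (hf A _ j hj)
  have param_le := (abs_lineParam_le A (shear A τ c)).trans (lt (mainIdx A)).le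
  have := mul_le_mul_of_nonneg_right param_le (by linarith [five_le_numPoints m] : 0 ≤ numPoints m)
  unfold foldRadius at hi
  linarith [abs_le_abs_shear_add hτ c i, lt i]

variable {e e' e'' : HomotopyGroup (InBlockIdx m A.1.card) (Target m) (basepoint m)}

theorem Represents.comp_shear_one (hf : SupportedIn (innerSpread m) f)
    (h : Represents (innerSpread m) (f A) e) :
    Represents (foldRadius m) (fun c => f A (shear A 1 c)) e := by
  have inner_le : innerSpread m ≤ foldRadius m := by
    linarith [six_mul_innerSpread_le m, twenty_le_innerSpread m]
  have ⟨hfA, _⟩ := h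
  have := hfA.continuous
  exact Represents.of_homotopy (H := fun p => f A (shear A p.1 p.2)) (by fun_prop)
    (fun τ hτ c i hi => apply_shear_eq_basepoint hf hτ hi)
    (by simpa only [shear_zero] using h.mono inner_le)

section

variable (hf : SupportedIn (innerSpread m) f) (hf' : SupportedIn (innerSpread m) f')
  (hf'' : SupportedIn (innerSpread m) f'')
include hf hf' hf''

theorem foldFamily_shear_eq_basepoint {τ : ℝ} (hτ : τ ∈ unitInterval) {c}
    {i : InBlockIdx m A.1.card} (hi : supportRadius m ≤ |c i|) :
    foldFamily f f' f'' A (shear A τ c) = basepoint m := by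
  by_cases! offset : foldRadius m < ‖lineOrigin A (shear A τ c)‖
  · exact foldFamily_eq_basepoint hf hf' hf'' offset
  have param : foldRadius m < |lineParam A (shear A τ c)| := by
    by_contra! param_le
    have := mul_le_mul_of_nonneg_right param_le
      (by linarith [five_le_numPoints m] : 0 ≤ numPoints m)
    unfold supportRadius at hi
    linarith [abs_le_abs_shear_add hτ c i, abs_le_of_abs_lineParam_le param_le offset i,
      foldRadius_pos m]
  rw [foldFamily, zigzag_of_notMem_Ioc _ _ _ fun h => param.not_ge (abs_le.2 ⟨h.1.le, h.2⟩),
    lineOrigin_add_lineParam_smul]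
  refine hf A _ (mainIdx A) ?_
  linarith [abs_lineParam_le A (shear A τ c), six_mul_innerSpread_le m, twenty_le_innerSpread m]

theorem continuous_foldFamily (h : Continuous (f A)) (h' : Continuous (f' A))
    (h'' : Continuous (f'' A)) : Continuous (foldFamily f f' f'' A) := by
  have at_end {g : BoundaryFamily m} (hg : SupportedIn (innerSpread m) g) (q) {r : ℝ}
      (hr : foldRadius m ≤ |r|) :
      g A (lineOrigin A q + r • chart A (staircase m)) = basepoint m := by
    have param_le := abs_lineParam_le A (lineOrigin A q + r • chart A (staircase m))
    rw [lineParam_add_smul, lineParam_lineOrigin, zero_add] at param_le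
    exact hg A _ (mainIdx A)
      (by linarith [six_mul_innerSpread_le m, twenty_le_innerSpread m])
  have right : foldRadius m ≤ |foldRadius m| := le_abs_self _
  have left : foldRadius m ≤ |-foldRadius m| := by rwa [abs_neg]
  exact continuous_zigzag (by fun_prop) (by fun_prop) (by fun_prop)
    (fun _ => by linarith [foldRadius_pos m]) (by fun_prop) (by fun_prop) (by fun_prop)
    (fun q => ⟨(at_end hf q right).trans (at_end hf' q right).symm,
      (at_end hf' q right).trans (at_end hf'' q right).symm⟩)
    fun q => (at_end hf' q left).trans (at_end hf'' q left).symm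

theorem Represents.foldFamily (h : Represents (innerSpread m) (f A) e)
    (h' : Represents (innerSpread m) (f' A) e') (h'' : Represents (innerSpread m) (f'' A) e'') :
    Represents (supportRadius m) (foldFamily f f' f'' A) (e * e'⁻¹ * e'') := by
  have ⟨hfA, _⟩ := h
  have ⟨hfA', _⟩ := h'
  have ⟨hfA'', _⟩ := h''
  have continuous := continuous_foldFamily hf hf' hf'' hfA.continuous hfA'.continuous
    hfA''.continuous
  have sheared := ((h.comp_shear_one hf).coordZigzag (h'.comp_shear_one hf')
    (h''.comp_shear_one hf'') (mainIdx A)).mono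
    (by linarith [eight_mul_foldRadius_le m, foldRadius_pos m] : _ ≤ supportRadius m)
  have := Represents.of_homotopy
    (H := fun p => SchwartzGenus.foldFamily f f' f'' A (shear A (1 - p.1) p.2))
    (by fun_prop)
    (fun τ hτ c i hi => foldFamily_shear_eq_basepoint hf hf' hf''
      (Set.Icc.mem_iff_one_sub_mem.1 hτ) hi)
    (by simpa only [sub_zero, foldFamily_shear_one] using sheared)
  simpa only [sub_self, shear_zero] using this

end

/-- The families of homotopy classes represented by extendable boundary families. -/
def realizableClasses (m : ℕ) : Set (∀ A : ProperSubset (Fin (m + 5)),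
    HomotopyGroup (InBlockIdx m A.1.card) (Target m) (basepoint m)) :=
  {e | ∃ f : BoundaryFamily m, Extendable f ∧ ∀ A, Represents (innerSpread m) (f A) (e A)}

theorem supportedIn_of_forall_represents {L : ℝ} {e : ∀ A : ProperSubset (Fin (m + 5)),
      HomotopyGroup (InBlockIdx m A.1.card) (Target m) (basepoint m)}
    (h : ∀ A, Represents L (f A) (e A)) : SupportedIn L f := fun A =>
  have ⟨hfA, _⟩ := h A
  hfA.eq_of_le

theorem extendable_of_mem_realizableClasses {e} (he : e ∈ realizableClasses m)
    (h : ∀ A, Represents (innerSpread m) (f A) (e A)) : Extendable f := by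
  obtain ⟨g, hg, represents⟩ := he
  exact hg.congr (fun A => (represents A).mono (innerSpread_lt_supportRadius m).le)
    fun A => (h A).mono (innerSpread_lt_supportRadius m).le

theorem mul_inv_mul_mem_realizableClasses {e e' e''} (he : e ∈ realizableClasses m)
    (he' : e' ∈ realizableClasses m) (he'' : e'' ∈ realizableClasses m) :
    e * e'⁻¹ * e'' ∈ realizableClasses m := by
  obtain ⟨f, hf, h⟩ := he
  obtain ⟨f', hf', h'⟩ := he'
  obtain ⟨f'', hf'', h''⟩ := he''
  have supp := supportedIn_of_forall_represents h
  have supp' := supportedIn_of_forall_represents h'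
  have supp'' := supportedIn_of_forall_represents h''
  choose g hg using fun A => exists_representative
    (by linarith [twenty_le_innerSpread m] : 0 < innerSpread m) ((e * e'⁻¹ * e'') A)
  exact ⟨g, (Extendable.foldFamily supp supp' supp'' hf hf' hf'').congr
    (fun A => (h A).foldFamily supp supp' supp'' (h' A) (h'' A))
    fun A => (hg A).mono (innerSpread_lt_supportRadius m).le, hg⟩

end FoldClasses

section SymmetricFamilies

open Topology

theorem prod_zpow_mem_of_sum_eq_one {G J : Type*} [CommGroup G] {S : Set G}
    (hS : ∀ x ∈ S, ∀ y ∈ S, ∀ z ∈ S, x * y⁻¹ * z ∈ S) {s : Finset J} {e : J → G}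
    (he : ∀ j ∈ s, e j ∈ S) {u : J → ℤ} (hu : ∑ j ∈ s, u j = 1) : ∏ j ∈ s, e j ^ u j ∈ S := by
  obtain ⟨j₀, hj₀⟩ : s.Nonempty :=
    Finset.nonempty_of_sum_ne_zero (hu.trans_ne one_ne_zero)
  set b := e j₀
  have hb : b ∈ S := he j₀ hj₀
  let H : Subgroup G :=
    { carrier := {x | x * b ∈ S}
      one_mem' := by simpa only [Set.mem_ofPred_eq, one_mul] using hb
      mul_mem' := fun {x y} hx hy => by
        simpa only [Set.mem_ofPred_eq, mul_inv_cancel_right, ← mul_assoc] using hS _ hx b hb _ hy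
      inv_mem' := fun {x} hx => by
        simpa only [Set.mem_ofPred_eq, mul_inv_rev, mul_inv_cancel_left] using hS b hb _ hx b hb }
  have mem_H : ∏ j ∈ s, (e j * b⁻¹) ^ u j ∈ H := H.prod_mem fun j hj => H.zpow_mem
    (show e j * b⁻¹ * b ∈ S by simpa only [inv_mul_cancel_right] using he j hj) _
  have prod_inv : ∏ j ∈ s, b⁻¹ ^ u j = b⁻¹ := by
    simpa only [hu, one_smul, toMul_sum, toMul_zsmul, toMul_ofMul] using
      congrArg Additive.toMul
        (Finset.sum_smul (f := u) (s := s) (x := Additive.ofMul b⁻¹)).symm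
  simp only [mul_zpow, Finset.prod_mul_distrib, prod_inv] at mem_H
  simpa only [inv_mul_cancel_right] using (show _ * b⁻¹ * b ∈ S from mem_H)

theorem sum_properSubset_card (n : ℕ) (f : ℕ → ℤ) :
    ∑ A : ProperSubset (Fin n), f A.1.card = ∑ a ∈ Finset.Icc 1 (n - 1), n.choose a * f a := by
  let g (a : ℕ) : ℤ := if a ∈ Finset.Icc 1 (n - 1) then f a else 0
  have mem_iff (A : Finset (Fin n)) :
      (A.Nonempty ∧ A ≠ Finset.univ) ↔ A.card ∈ Finset.Icc 1 (n - 1) := by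
    have := A.card_le_univ
    rw [Fintype.card_fin] at this
    rw [← Finset.card_pos, Ne, ← Finset.card_eq_iff_eq_univ, Fintype.card_fin, Finset.mem_Icc]
    lia
  have range_filter : {a ∈ Finset.range (n + 1) | a ∈ Finset.Icc 1 (n - 1)} =
      Finset.Icc 1 (n - 1) := by
    ext a
    simp only [Finset.mem_filter, Finset.mem_range, Finset.mem_Icc]
    lia
  calc ∑ A : ProperSubset (Fin n), f A.1.card
      = ∑ A : Finset (Fin n) with A.card ∈ Finset.Icc 1 (n - 1), f A.card :=
        (Finset.sum_subtype _ (fun A => by rw [mem_iff, Finset.mem_filter_univ])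
          fun A : Finset (Fin n) => f A.card).symm
    _ = ∑ A ∈ (Finset.univ : Finset (Fin n)).powerset, g A.card := by
        rw [Finset.powerset_univ, Finset.sum_filter]
    _ = ∑ a ∈ Finset.range (n + 1), if a ∈ Finset.Icc 1 (n - 1) then n.choose a * f a else 0 := by
        rw [Finset.sum_powerset_apply_card g]
        simp only [Finset.card_univ, Fintype.card_fin, nsmul_eq_mul, g, mul_ite, mul_zero]
    _ = ∑ a ∈ Finset.Icc 1 (n - 1), n.choose a * f a := by
        rw [← Finset.sum_filter, range_filter]

theorem exists_sum_properSubset_card_eq_one {n : ℕ} (hn : 1 < n) (hpow : ¬ IsPrimePow n) :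
    ∃ u : ℕ → ℤ, ∑ A : ProperSubset (Fin n), u A.1.card = 1 := by
  let g := (Finset.Icc 1 (n - 1)).gcd fun a => (n.choose a : ℤ)
  have natAbs_dvd : g.natAbs ∣ (Finset.Icc 1 (n - 1)).gcd n.choose :=
    Finset.dvd_gcd fun a ha => Int.natAbs_dvd_natAbs.2 (Finset.gcd_dvd ha)
  have isUnit : IsUnit g := by
    rwa [Choose.gcd_choose_eq_one_of_not_isPrimePow hn hpow, Nat.dvd_one,
      ← Int.isUnit_iff_natAbs_eq] at natAbs_dvd
  obtain ⟨u, hu⟩ := Finset.gcd_eq_sum_mul (Finset.Icc 1 (n - 1)) fun a => (n.choose a : ℤ)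
  exact ⟨u, (sum_properSubset_card n u).trans
    (hu.symm.trans (Finset.normalize_gcd.symm.trans (normalize_eq_one.2 isUnit)))⟩

theorem not_isPrimePow_two_mul {p : ℕ} (hp : p.Prime) (hodd : Odd p) : ¬ IsPrimePow (2 * p) := by
  intro h
  have two_eq : 2 = p := (isPrimePow_iff_unique_prime_dvd.1 h).unique
    ⟨Nat.prime_two, dvd_mul_right 2 p⟩ ⟨hp, dvd_mul_left p 2⟩
  exact absurd (two_eq ▸ hodd) (by decide)

variable {m : ℕ}

theorem exists_represents_linkMap (j : ProperSubset (Fin (m + 5))) (a : ℕ) :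
    ∃ e : HomotopyGroup (InBlockIdx m a) (Target m) (basepoint m),
      ∀ A : ProperSubset (Fin (m + 5)), A.1.card = a →
        Represents (innerSpread m) (linkMap j a) e := by
  by_cases h : ∃ A : ProperSubset (Fin (m + 5)), A.1.card = a
  · obtain ⟨A, rfl⟩ := h
    have isCubeMap : IsCubeMap (basepoint m) (innerSpread m) (linkMap j A.1.card) :=
      ⟨by linarith [twenty_le_innerSpread m], continuous_linkMap j _,
        fun _ _ hi => linkMap_of_le j hi⟩
    exact isCubeMap.exists_represents.imp fun e he _ _ => he
  · exact ⟨1, fun A hA => (h ⟨A, hA⟩).elim⟩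

/-- A combination of the link maps with coefficients depending only on the size of `j` and adding
up to one; permuting the `j` does not change its homotopy class. -/
theorem exists_extendable_card {u : ℕ → ℤ}
    (hu : ∑ A : ProperSubset (Fin (m + 5)), u A.1.card = 1) :
    ∃ f : ∀ a, (InBlockIdx m a → ℝ) → Target m,
      Extendable fun A : ProperSubset (Fin (m + 5)) => f A.1.card := by
  choose e he using exists_represents_linkMap (m := m)
  have base (j) : (fun A : ProperSubset (Fin (m + 5)) => e ((shuffle A.1)⁻¹ • j) A.1.card) ∈
      realizableClasses m := ⟨_, extendable_linkMap j, fun A => he _ _ A rfl⟩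
  have mem := prod_zpow_mem_of_sum_eq_one
    (fun _ hx _ hy _ hz => mul_inv_mul_mem_realizableClasses hx hy hz) (fun j _ => base j) hu
  have symm : ∏ j : ProperSubset (Fin (m + 5)),
      (fun A : ProperSubset (Fin (m + 5)) => e ((shuffle A.1)⁻¹ • j) A.1.card) ^ u j.1.card =
      fun A => ∏ j, e j A.1.card ^ u j.1.card := by
    funext A
    rw [Finset.prod_apply]
    refine Fintype.prod_equiv (MulAction.toPerm (shuffle A.1)⁻¹) _ _ fun j => ?_
    rw [Pi.pow_apply, MulAction.toPerm_apply, ProperSubset.coe_smul, Finset.card_smul_finset]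
  choose f hf using fun a => exists_representative
    (by linarith [twenty_le_innerSpread m] : 0 < innerSpread m)
    (∏ j : ProperSubset (Fin (m + 5)), e j a ^ u j.1.card)
  exact ⟨f, extendable_of_mem_realizableClasses (symm ▸ mem) fun A => hf _⟩

end SymmetricFamilies

section Symmetrization

open scoped Pointwise

variable {m : ℕ}

theorem InversionsFar.le_spread {n : ℕ} [NeZero n] {M : ℝ} {π : Perm (Fin n)} {x : Fin n → ℝ}
    (h : InversionsFar M π x) (hπ : π ≠ 1) : M ≤ spread x := by
  by_contra! hlt
  have strictMono : StrictMono (π⁻¹ : Perm (Fin n)) := fun i j hij =>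
    h.inv_lt_inv hij ((abs_sub_le_spread x i j).trans_lt hlt)
  have inv_eq : ⇑π⁻¹ = id := (strictMono.range_inj strictMono_id).1
    (by rw [π⁻¹.surjective.range_eq, Set.range_id])
  exact hπ (inv_eq_one.1 (DFunLike.coe_injective inv_eq))

variable {A : ProperSubset (Fin (m + 5))} {x : Fin (m + 5) → ℝ} {π : Perm (Fin (m + 5))} {R : ℝ}

theorem comp_mem_offShells_iff : x ∘ π ∈ offShells R ↔ x ∈ offShells R :=
  (MulAction.toPerm π : Perm (ProperSubset (Fin (m + 5)))).forall_congr fun A => by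
    rw [MulAction.toPerm_apply, gap_smul, blockSpread_smul]

theorem smul_mem_shell_iff : x ∈ shell R (π • A) ↔ x ∘ π ∈ shell R A := by
  simp only [shell, Set.mem_ofPred_eq, gap_smul, blockSpread_smul]

theorem apply_chart_inv_smul (hπ : shuffle A.1 = π * shuffle (π⁻¹ • A).1)
    {X : Type*} (f : ∀ a, (InBlockIdx m a → ℝ) → X) :
    f (π⁻¹ • A).1.card (chart (π⁻¹ • A) (x ∘ π)) = f A.1.card (chart A x) := by
  have congr (a : ℕ) (ha : a = A.1.card) (q : InBlockIdx m a → ℝ)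
      (hq : ∀ i h h', q ⟨i, h⟩ = chart A x ⟨i, h'⟩) : f a q = f A.1.card (chart A x) := by
    subst ha
    exact congrArg _ (funext fun i => hq i.1 i.2 i.2)
  refine congr _ (Finset.card_smul_finset _ _) _ fun i _ _ => ?_
  simp only [chart, hπ, Perm.mul_apply, Function.comp_apply]

theorem Realizes.eq_smul_comp {f : ∀ a, (InBlockIdx m a → ℝ) → Target m}
    {Ψ : (Fin (m + 5) → ℝ) → Target m} (hΨ : Realizes Ψ (fun A => f A.1.card) R) {M : ℝ}
    (houter : outerSpread m + 2 ≤ M) (hR : R + 2 * outerSpread m ≤ M) (h : InversionsFar M π x) :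
    Ψ x = π • Ψ (x ∘ π) := by
  rcases eq_or_ne π 1 with rfl | hπ
  · exact (one_smul _ _).symm
  have outer_large := hundred_mul_numPoints_le m
  have points_large := five_le_numPoints m
  have le_spread_x := h.le_spread hπ
  have le_spread_comp : M ≤ spread (x ∘ π) := le_spread_x.trans <| spread_le fun i j => by
    simpa using sub_le_spread (x ∘ π) (π⁻¹ i) (π⁻¹ j)
  by_cases hx : x ∈ offShells 0
  · have hx' : x ∘ π ∈ offShells 0 := comp_mem_offShells_iff.2 hx
    rw [hΨ.off_shells x hx (by linarith), hΨ.off_shells _ hx' (by linarith), referenceMap,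
      h.modelMap_eq (by linarith), modelMap_eq_referenceMap hx' (houter.trans le_spread_comp)]
  · obtain ⟨A, hgap, hA⟩ : ∃ A, 0 < gap A x ∧ blockSpread A.1 x < outerSpread m := by
      simpa only [offShells, Set.mem_ofPred_eq, not_forall, not_or, not_le] using hx
    have hshell : x ∈ shell R A := ⟨by linarith [spread_le_gap_add hgap.le], hA.le⟩
    have hshell' : x ∘ π ∈ shell R (π⁻¹ • A) := smul_mem_shell_iff.1 (by rwa [smul_inv_smul])
    have shuffle_eq : shuffle A.1 = π * shuffle (π⁻¹ • A).1 :=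
      shuffle_eq_mul_shuffle π fun i j hij hlt =>
        h.inv_lt_inv hlt (by linarith [abs_sub_le_blockSpread x hij])
    rw [hΨ.on_shell A x hshell, hΨ.on_shell _ _ hshell', apply_chart_inv_smul shuffle_eq f,
      smul_smul, ← shuffle_eq]

variable {n : ℕ}

/-- A permutation invariant scale of a configuration, dominating the inverse distance of any two of
its points. The terms with `i = j` vanish since `0⁻¹ = 0`. -/
def inverseDistSum (z : ConfigSpace n) : ℝ := ∑ i, ∑ j, ‖z.1 i - z.1 j‖⁻¹

theorem inverseDistSum_configPermMap (σ : Perm (Fin n)) (z : ConfigSpace n) :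
    inverseDistSum (configPermMap n σ z) = inverseDistSum z := by
  unfold inverseDistSum
  refine Eq.trans (Finset.sum_congr rfl fun i _ => ?_)
    (Equiv.sum_comp σ⁻¹ fun i => ∑ j, ‖z.1 i - z.1 j‖⁻¹)
  exact Equiv.sum_comp σ⁻¹ fun j => ‖z.1 (σ⁻¹ i) - z.1 j‖⁻¹

theorem continuous_configSpace_apply (i : Fin n) : Continuous fun z : ConfigSpace n => z.1 i :=
  (continuous_apply i).comp continuous_subtype_val

theorem continuous_inverseDistSum : Continuous (inverseDistSum (n := n)) := by
  refine continuous_finsetSum _ fun i _ => continuous_finsetSum _ fun j _ => ?_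
  rcases eq_or_ne i j with rfl | hij
  · simpa only [sub_self, norm_zero, inv_zero] using continuous_const
  · exact ((continuous_configSpace_apply i).sub (continuous_configSpace_apply j)).norm.inv₀
      fun z => norm_ne_zero_iff.2 (sub_ne_zero.2 (z.2.ne hij))

theorem one_le_inverseDistSum_mul (z : ConfigSpace n) {i j : Fin n} (hij : i ≠ j) :
    1 ≤ inverseDistSum z * ‖z.1 i - z.1 j‖ := by
  have norm_pos : 0 < ‖z.1 i - z.1 j‖ := norm_pos_iff.2 (sub_ne_zero.2 (z.2.ne hij))
  rw [← div_le_iff₀ norm_pos, one_div]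
  calc ‖z.1 i - z.1 j‖⁻¹ ≤ ∑ j, ‖z.1 i - z.1 j‖⁻¹ :=
        Finset.single_le_sum (f := fun j => ‖z.1 i - z.1 j‖⁻¹) (fun _ _ => by positivity)
          (Finset.mem_univ j)
    _ ≤ inverseDistSum z :=
        Finset.single_le_sum (f := fun i => ∑ j, ‖z.1 i - z.1 j‖⁻¹) (fun _ _ => by positivity)
          (Finset.mem_univ i)

/-- The real parts of a configuration, rescaled so that points with equal imaginary parts get
values at distance at least `M`. -/
def scaledRe (M : ℝ) (z : ConfigSpace n) (i : Fin n) : ℝ := M * inverseDistSum z * (z.1 i).re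

theorem continuous_scaledRe (M : ℝ) : Continuous (scaledRe (n := n) M) :=
  continuous_pi fun i => (continuous_const.mul continuous_inverseDistSum).mul
    (Complex.continuous_re.comp (continuous_configSpace_apply i))

theorem scaledRe_configPermMap (M : ℝ) (σ : Perm (Fin n)) (z : ConfigSpace n) :
    scaledRe M (configPermMap n σ z) = scaledRe M z ∘ ⇑σ⁻¹ := by
  funext i
  simp only [scaledRe, inverseDistSum_configPermMap, Function.comp_apply]
  rfl

/-- The configurations whose imaginary parts are sorted by `τ`. -/
def imSorted (τ : Perm (Fin n)) : Set (ConfigSpace n) := {z | Monotone fun i => (z.1 (τ i)).im}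

theorem isClosed_imSorted (τ : Perm (Fin n)) : IsClosed (imSorted τ) := by
  simp only [imSorted, Monotone, Set.ofPred_forall]
  exact isClosed_iInter fun i => isClosed_iInter fun j => isClosed_iInter fun _ =>
    isClosed_le (Complex.continuous_im.comp (continuous_configSpace_apply _))
      (Complex.continuous_im.comp (continuous_configSpace_apply _))

theorem exists_mem_imSorted (z : ConfigSpace n) : ∃ τ, z ∈ imSorted τ :=
  ⟨_, Tuple.monotone_sort fun i => (z.1 i).im⟩

theorem configPermMap_mem_imSorted {σ τ : Perm (Fin n)} {z : ConfigSpace n} (h : z ∈ imSorted τ) :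
    configPermMap n σ z ∈ imSorted (σ * τ) := by
  simpa [imSorted, configPermMap] using h

theorem inversionsFar_scaledRe {M : ℝ} (hM : 0 ≤ M) {τ τ' : Perm (Fin n)} {z : ConfigSpace n}
    (h : z ∈ imSorted τ) (h' : z ∈ imSorted τ') :
    InversionsFar M (τ⁻¹ * τ') (scaledRe M z ∘ τ) := by
  intro i j hij hji
  have im_le : (z.1 (τ j)).im ≤ (z.1 (τ i)).im := by simpa using h' hji.le
  have im_eq : (z.1 (τ i) - z.1 (τ j)).im = 0 := by
    rw [Complex.sub_im, sub_eq_zero]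
    exact le_antisymm (h hij.le) im_le
  calc M ≤ M * (inverseDistSum z * ‖z.1 (τ i) - z.1 (τ j)‖) :=
        le_mul_of_one_le_right hM (one_le_inverseDistSum_mul z (τ.injective.ne hij.ne))
    _ = |M * inverseDistSum z * (z.1 (τ i) - z.1 (τ j)).re| := by
        rw [abs_mul, Complex.abs_re_eq_norm.2 im_eq, abs_of_nonneg, mul_assoc]
        unfold inverseDistSum
        positivity
    _ = |(scaledRe M z ∘ τ) i - (scaledRe M z ∘ τ) j| := by
        rw [Complex.sub_re, mul_sub, Function.comp_apply, Function.comp_apply, scaledRe, scaledRe]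

theorem schwartzGenusLE_of_extendable {f : ∀ a, (InBlockIdx m a → ℝ) → Target m}
    (hf : Extendable fun A : ProperSubset (Fin (m + 5)) => f A.1.card) :
    SchwartzGenusLE (m + 5) (m + 4) := by
  obtain ⟨Ψ, R, hΨ, realizes⟩ := hf
  obtain ⟨M, houter, hR⟩ : ∃ M, outerSpread m + 2 ≤ M ∧ R + 2 * outerSpread m ≤ M :=
    ⟨_, le_max_left _ _, le_max_right _ _⟩
  have hM : 0 ≤ M := by linarith [outerSpread_pos m]
  obtain ⟨Φ, hΦ, eq_on⟩ := exists_continuous_of_isClosed_cover (C := imSorted)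
    (g := fun τ z => τ • Ψ (scaledRe M z ∘ τ)) isClosed_imSorted exists_mem_imSorted
    (fun τ => (hΨ.comp (continuous_pi fun i =>
      (continuous_apply (τ i)).comp (continuous_scaledRe M))).fun_const_smul τ)
    fun τ τ' z h h' => by
      rw [realizes.eq_smul_comp houter hR (inversionsFar_scaledRe hM h h'), smul_smul,
        mul_inv_cancel_left, Function.comp_assoc, ← Perm.coe_mul, mul_inv_cancel_left]
  refine schwartzGenusLE_of_equivariant hΦ fun σ z => ?_
  obtain ⟨τ, hτ⟩ := exists_mem_imSorted z
  rw [eq_on _ _ hτ, eq_on _ _ (configPermMap_mem_imSorted hτ), scaledRe_configPermMap, mul_smul,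
    Function.comp_assoc, ← Perm.coe_mul, inv_mul_cancel_left]

end Symmetrization

end SchwartzGenus

theorem schwartzGenus_lt_two_mul_prime_general (n : ℕ) (hn : 2 ≤ n) (h : ¬ IsPrimePow n) :
    SchwartzGenusLE n (n - 1) := by
  have five_lt : 5 < n := by
    by_contra! hle
    refine h ?_
    interval_cases n
    · exact Nat.prime_two.isPrimePow
    · exact Nat.prime_three.isPrimePow
    · exact Nat.prime_two.isPrimePow.pow two_ne_zero
    · exact Nat.prime_five.isPrimePow
  obtain ⟨m, rfl⟩ := Nat.exists_eq_add_of_le' five_lt.le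
  obtain ⟨u, hu⟩ := SchwartzGenus.exists_sum_properSubset_card_eq_one hn h
  obtain ⟨f, hf⟩ := SchwartzGenus.exists_extendable_card hu
  exact SchwartzGenus.schwartzGenusLE_of_extendable hf

/-- **Statement 3.** For every odd prime `p`, the Schwartz genus of
`q_{2p} : F(ℂ,2p) → F(ℂ,2p)/Σ_{2p}` is less than `2p`: the base admits a cover by
`2p - 1` open sets over each of which the covering is trivial. -/
theorem schwartzGenus_lt_two_mul_prime (p : ℕ) (hp : p.Prime) (hodd : Odd p) :
    SchwartzGenusLE (2 * p) (2 * p - 1) :=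
  schwartzGenus_lt_two_mul_prime_general _ (by have := hp.pos; omega)
    (SchwartzGenus.not_isPrimePow_two_mul hp hodd)
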